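/- arXiv:1708.00349 — 3 statements merged into one kernel-verified Lean document; each statement's English description precedes it below -/
import Mathlib

section
/- Let q be a prime power, n a positive integer, and let f(X) = a_0 X + Σ_{j=2}^{k} a_j X^{q^j} ∈ 𝔽_{q^n}[X] be a monic q-polynomial with a_0 ≠ 0 and with the coefficient of X^q equal to zero. If f is an exceptional scattered polynomial of index 1, i.e., for infinitely many positive integers m one has: for all nonzero x, y in the degree-m extension 𝔽_{q^{mn}} of 𝔽_{q^n}, f(x)·y^q = f(y)·x^q implies y/x ∈ 𝔽_q, then either f(X) = X, or f(X) = b·X + X^{q^2} for some b ∈ 𝔽_{q^n} with b^{(q^n−1)/(q−1)} ≠ 1. In particular, if q = 2 then f(X) = X. -/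
/-!
Write `f = ∑ j ≤ d, α j X ^ (q ^ j)` with `α d = 1`, `α 0 ≠ 0`, `α 1 = 0`. Two `𝔽_q`-independent
elements `x`, `y` of a field violate scatteredness exactly when they are roots of one member
`f - s X ^ q` of the pencil, where `s = f(x) / x ^ q`. Such a pair is called a collision. As `f` is
monic and `α 1 = 0`, either `f = X`, or `d = 2` and `f = b X + X ^ (q ^ 2)`, or `d ≥ 3`.

**The case `d ≥ 3`** (`exists_collision`): collisions exist over every large finite field containing
the coefficients. Let `k` be algebraically closed and let `K` be the splitting field over `k(s)` of
`f - s X ^ q`, with Galois group `G` and with the `𝔽_q`-space `V` of dimension `d` as its roots.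

* `G` is transitive on `V \ {0}` (`gal_trans`), because a root `x` generates the rational function
  field `k(x)`, in which `s = f(x) / x ^ q`.
* Near `s = ∞` the extension is wildly ramified. One nonzero root `l` tends to `0` there, and after
  `l = U ^ θ` every root `y` satisfies an Artin-Schreier equation
  `(y / l) ^ q - y / l = T` over `k((U))` in which `T` is `0` or has a pole of order `1 + q θ`,
  prime to the characteristic (`exists_tau`). So the decomposition group contains enough
  transvections in direction `l` (`exists_transvection`), and with transitivity this makes `G`
  transitive on pairs of independent roots (`two_trans`).
* Let `σ` be the lift to `K` of the Frobenius of `k(s)` over `𝔽_Q(s)`. By `two_trans` some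
  `g ∈ G` makes `σ ∘ g` fix two independent roots. If a point of the curve of `K` above some
  `s ∈ 𝔽_Q` has Frobenius `σ ∘ g`, the values of these roots at this point are a collision over
  `𝔽_Q` (`collision_of_point`).
* Such a point exists for `Q` large. The cover is unramified over every finite `s`, so there are
  exactly `Q |G|` points above `𝔽_Q` (`exists_points`), each with Frobenius `σ ∘ g'` for some
  `g' ∈ G`. Bombieri's version of Stepanov's method (`bombieri_bound`) bounds the number of points
  attached to one `g'` sharply enough that the `|G| - 1` elements `g' ≠ g` cannot account for all
  of them (`exists_params`, `exists_collision_aux`). Only this upper bound is needed, so no Riemann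
  hypothesis for curves enters. The argument runs in the `k[s]`-algebra generated by the roots
  (`coordRing`) and its expansions in power series.

**The case `d = 2`** (`exists_collision_two`): if `b` has norm `1`, then `b = β ^ (q - 1)` with
`β ∈ 𝔽_{q^n}`. For `M ≥ 3` there is a nonzero `v ∈ 𝔽_{q^M}` with `Tr (β v ^ (q + 1)) = 0`
(`exists_isotropic`), so `t ^ q - t = β v ^ (q + 1)` is solvable in `𝔽_{q^M}`, and `1 / v`, `t / v`
are a collision. For `q = 2` every nonzero `b` has norm `1`.
-/

open Polynomial

namespace ExcScat

/-! ### The field with `q` elements and additive polynomials -/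

/-- `R` has prime characteristic and `q` is a positive power of that characteristic. -/
def IsQ (q : ℕ) (R : Type*) [CommRing R] : Prop :=
  ∃ p r : ℕ, p.Prime ∧ CharP R p ∧ 0 < r ∧ q = p ^ r

namespace IsQ

variable {q : ℕ} {R : Type*} [CommRing R]

theorem two_le (h : IsQ q R) : 2 ≤ q := by
  obtain ⟨p, r, hp, -, hr, rfl⟩ := h
  exact hp.two_le.trans (Nat.le_self_pow hr.ne' p)

theorem pos (h : IsQ q R) : 0 < q := by have := h.two_le; omega

theorem ne_zero (h : IsQ q R) : q ≠ 0 := h.pos.ne'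

theorem pow (h : IsQ q R) {j : ℕ} (hj : j ≠ 0) : IsQ (q ^ j) R := by
  obtain ⟨p, r, hp, hc, hr, rfl⟩ := h
  exact ⟨p, r * j, hp, hc, Nat.mul_pos hr (Nat.pos_of_ne_zero hj), by rw [pow_mul]⟩

theorem of_algebra {k A : Type*} [Field k] [CommRing A] [Nontrivial A] [Algebra k A]
    (h : IsQ q k) : IsQ q A := by
  obtain ⟨p, r, hp, hc, hr, rfl⟩ := h
  exact ⟨p, r, hp, charP_of_injective_algebraMap (algebraMap k A).injective p, hr, rfl⟩

theorem cast_eq_zero (h : IsQ q R) : (q : R) = 0 := by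
  obtain ⟨p, r, hp, hc, hr, rfl⟩ := h
  rw [Nat.cast_pow, CharP.cast_eq_zero, zero_pow hr.ne']

theorem add_pow (h : IsQ q R) (x y : R) : (x + y) ^ q = x ^ q + y ^ q := by
  obtain ⟨p, r, hp, hc, hr, rfl⟩ := h
  have : Fact p.Prime := ⟨hp⟩
  exact add_pow_char_pow x y p r

theorem sub_pow (h : IsQ q R) (x y : R) : (x - y) ^ q = x ^ q - y ^ q := by
  obtain ⟨p, r, hp, hc, hr, rfl⟩ := h
  have : Fact p.Prime := ⟨hp⟩
  exact sub_pow_char_pow x y r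

theorem neg_pow (h : IsQ q R) (x : R) : (-x) ^ q = -x ^ q := by
  have := h.sub_pow 0 x
  simpa [h.ne_zero] using this

theorem sum_pow (h : IsQ q R) {ι : Type*} (s : Finset ι) (f : ι → R) :
    (∑ i ∈ s, f i) ^ q = ∑ i ∈ s, f i ^ q := by
  obtain ⟨p, r, hp, hc, hr, rfl⟩ := h
  have : Fact p.Prime := ⟨hp⟩
  exact sum_pow_char_pow p r s f

theorem add_pow_pow (h : IsQ q R) (j : ℕ) (x y : R) :
    (x + y) ^ q ^ j = x ^ q ^ j + y ^ q ^ j := by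
  rcases eq_or_ne j 0 with rfl | hj
  · simp
  · exact (h.pow hj).add_pow x y

theorem sub_pow_pow (h : IsQ q R) (j : ℕ) (x y : R) :
    (x - y) ^ q ^ j = x ^ q ^ j - y ^ q ^ j := by
  rcases eq_or_ne j 0 with rfl | hj
  · simp
  · exact (h.pow hj).sub_pow x y

theorem sum_pow_pow (h : IsQ q R) (j : ℕ) {ι : Type*} (s : Finset ι) (f : ι → R) :
    (∑ i ∈ s, f i) ^ q ^ j = ∑ i ∈ s, f i ^ q ^ j := by
  rcases eq_or_ne j 0 with rfl | hj
  · simp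
  · exact (h.pow hj).sum_pow s f

theorem polynomial (h : IsQ q R) : IsQ q R[X] := by
  obtain ⟨p, r, hp, hc, hr, rfl⟩ := h
  exact ⟨p, r, hp, inferInstance, hr, rfl⟩

theorem pow_inj [IsDomain R] (h : IsQ q R) {x y : R} (e : x ^ q = y ^ q) : x = y := by
  rw [← sub_eq_zero] at e ⊢
  rw [← h.sub_pow] at e
  exact pow_eq_zero_iff h.ne_zero |>.1 e

end IsQ

theorem pow_pow_of_pow_eq {M : Type*} [Monoid M] {c : M} {q : ℕ} (h : c ^ q = c) (j : ℕ) :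
    c ^ q ^ j = c := by
  induction j with
  | zero => simp
  | succ j ih => rw [pow_succ, pow_mul, ih, h]

section Fq

variable {k : Type*} [Field k] {q : ℕ}

open Classical in
/-- The solutions of `c ^ q = c` in `k`, i.e. the copy of `𝔽_q` in an algebraically closed `k`. -/
noncomputable def Fq (k : Type*) [Field k] (q : ℕ) : Finset k := (X ^ q - X : k[X]).roots.toFinset

theorem mem_Fq (h : IsQ q k) {c : k} : c ∈ Fq k q ↔ c ^ q = c := by
  classical
  have h2 := h.two_le
  rw [Fq, Multiset.mem_toFinset, mem_roots (FiniteField.X_pow_card_sub_X_ne_zero k (by omega))]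
  simp [IsRoot, sub_eq_zero]

theorem zero_mem_Fq (h : IsQ q k) : (0 : k) ∈ Fq k q := (mem_Fq h).2 (zero_pow h.ne_zero)

theorem one_mem_Fq (h : IsQ q k) : (1 : k) ∈ Fq k q := (mem_Fq h).2 (one_pow q)

theorem sep_XqX (h : IsQ q k) : (X ^ q - X : k[X]).Separable := by
  obtain ⟨p, r, hp, hc, hr, rfl⟩ := h
  exact galois_poly_separable p _ (dvd_pow_self p hr.ne')

variable [IsAlgClosed k]

theorem card_Fq (h : IsQ q k) : (Fq k q).card = q := by
  classical
  have h2 := h.two_le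
  rw [Fq, Multiset.toFinset_card_of_nodup (nodup_roots (sep_XqX h)),
    ← (IsAlgClosed.splits (X ^ q - X : k[X])).natDegree_eq_card_roots,
    FiniteField.X_pow_card_sub_X_natDegree_eq k (by omega)]

theorem prod_Fq (h : IsQ q k) : ∏ c ∈ Fq k q, (X - C c) = (X ^ q - X : k[X]) := by
  classical
  have h2 := h.two_le
  have e := (IsAlgClosed.splits (X ^ q - X : k[X])).eq_prod_roots
  have hl : (X ^ q - X : k[X]).leadingCoeff = 1 := by
    have : (X ^ q - X : k[X]).Monic := by
      apply monic_X_pow_sub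
      rw [degree_X]
      exact_mod_cast (by omega : 1 < q)
    exact this
  rw [hl, map_one, one_mul] at e
  rw [e, Finset.prod, Fq, Multiset.toFinset_val, Multiset.dedup_eq_self.2 (nodup_roots (sep_XqX h)), ← e]

/-- Homogeneous form of `∏ (T - c) = T ^ q - T`. -/
theorem prod_sub_Fq (h : IsQ q k) {L : Type*} [Field L] [Algebra k L] (x y : L) :
    x * ∏ c ∈ Fq k q, (y - algebraMap k L c * x) = x * y ^ q - x ^ q * y := by
  have h2 := h.two_le
  rcases eq_or_ne x 0 with rfl | hx
  · simp [h.ne_zero]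
  have e := congrArg (fun P => aeval (y / x) P) (prod_Fq h)
  simp only [map_prod, map_sub, aeval_X, aeval_C, map_pow] at e
  have : ∏ c ∈ Fq k q, (y - algebraMap k L c * x)
      = x ^ q * ∏ c ∈ Fq k q, (y / x - algebraMap k L c) := by
    nth_rewrite 2 [← card_Fq h]
    rw [← Finset.prod_const, ← Finset.prod_mul_distrib]
    refine Finset.prod_congr rfl fun c _ => ?_
    field_simp
  rw [this, e, div_pow]
  field_simp

theorem exists_Fq_of_pow (h : IsQ q k) {L : Type*} [Field L] [Algebra k L] {x y : L} (hx : x ≠ 0)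
    (e : y ^ q * x = y * x ^ q) : ∃ c : k, c ^ q = c ∧ y = algebraMap k L c * x := by
  have h1 := prod_sub_Fq h x y
  rw [show x * y ^ q - x ^ q * y = 0 by linear_combination e] at h1
  rcases mul_eq_zero.1 h1 with h1 | h1
  · exact absurd h1 hx
  · obtain ⟨c, hc, h3⟩ := Finset.prod_eq_zero_iff.1 h1
    exact ⟨c, (mem_Fq h).1 hc, sub_eq_zero.1 h3⟩

theorem exists_Fq_of_pow_eq (h : IsQ q k) {L : Type*} [Field L] [Algebra k L] {y : L}
    (e : y ^ q = y) : ∃ c : k, c ^ q = c ∧ y = algebraMap k L c := by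
  have := exists_Fq_of_pow h (L := L) (x := 1) (y := y) one_ne_zero (by simp [e])
  simpa using this

end Fq


/-! ### The family `f - s X ^ q` -/

/-- The standing hypotheses on the `q`-polynomial `∑ α j X ^ (q ^ j)`. -/
structure Setup {k : Type*} [Field k] (q d : ℕ) (α : ℕ → k) : Prop where
  isQ : IsQ q k
  zero : α 0 ≠ 0
  one : α 1 = 0
  top : α d = 1
  three_le : 3 ≤ d

section Family

variable {k : Type*} [Field k] (q d : ℕ) (α : ℕ → k)

/-- The `q`-polynomial `∑_{j ≤ d} α j X ^ (q ^ j)`. -/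
noncomputable def linPoly : k[X] := ∑ j ∈ Finset.range (d + 1), C (α j) * X ^ q ^ j

variable {L : Type*} [Field L] [Algebra k L]

/-- The value of `∑_{j ≤ d} α j X ^ (q ^ j)` at `x`. -/
noncomputable def lev (x : L) : L := ∑ j ∈ Finset.range (d + 1), algebraMap k L (α j) * x ^ q ^ j

/-- The polynomial `f - s X ^ q`, where `f` is the `q`-polynomial with coefficients `α`. -/
noncomputable def fam (s : L) : L[X] := (linPoly q d α).map (algebraMap k L) - C s * X ^ q

/-- The set of roots of `f - s X ^ q`. -/
def V (s : L) : Set L := {x | lev q d α x = s * x ^ q}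

variable {q d α}

theorem eval_fam (s x : L) : (fam q d α s).eval x = lev q d α x - s * x ^ q := by
  simp [fam, linPoly, lev, eval_finsetSum, Polynomial.map_sum]

theorem mem_V {s x : L} : x ∈ V q d α s ↔ lev q d α x = s * x ^ q := Iff.rfl

theorem mem_V_iff_isRoot {s x : L} : x ∈ V q d α s ↔ (fam q d α s).IsRoot x := by
  rw [IsRoot, eval_fam, sub_eq_zero, mem_V]

theorem lev_map {L' : Type*} [Field L'] [Algebra k L'] (φ : L →+* L')
    (hφ : ∀ c : k, φ (algebraMap k L c) = algebraMap k L' c) (x : L) :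
    φ (lev q d α x) = lev q d α (φ x) := by
  simp [lev, hφ]

theorem map_mem_V {L' : Type*} [Field L'] [Algebra k L'] (φ : L →+* L')
    (hφ : ∀ c : k, φ (algebraMap k L c) = algebraMap k L' c) {s x : L} (hx : x ∈ V q d α s) :
    φ x ∈ V q d α (φ s) := by
  rw [mem_V] at *
  rw [← lev_map φ hφ, hx, map_mul, map_pow]

theorem fam_map {L' : Type*} [Field L'] [Algebra k L'] (φ : L →+* L')
    (hφ : ∀ c : k, φ (algebraMap k L c) = algebraMap k L' c) (s : L) :
    (fam q d α s).map φ = fam q d α (φ s) := by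
  have : φ.comp (algebraMap k L) = algebraMap k L' := RingHom.ext hφ
  simp [fam, Polynomial.map_map, this]

variable (h : Setup q d α)
include h

theorem lev_add (x y : L) : lev q d α (x + y) = lev q d α x + lev q d α y := by
  have hL : IsQ q L := h.isQ.of_algebra
  simp [lev, hL.add_pow_pow, mul_add, Finset.sum_add_distrib]

theorem lev_sub (x y : L) : lev q d α (x - y) = lev q d α x - lev q d α y := by
  have hL : IsQ q L := h.isQ.of_algebra
  simp [lev, hL.sub_pow_pow, mul_sub, Finset.sum_sub_distrib]

omit h in
theorem lev_smul {c : k} (hc : c ^ q = c) (x : L) :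
    lev q d α (algebraMap k L c * x) = algebraMap k L c * lev q d α x := by
  simp only [lev, Finset.mul_sum]
  refine Finset.sum_congr rfl fun j _ => ?_
  rw [mul_pow, ← map_pow, pow_pow_of_pow_eq hc j]
  ring

theorem add_mem_V {s x y : L} (hx : x ∈ V q d α s) (hy : y ∈ V q d α s) : x + y ∈ V q d α s := by
  have hL : IsQ q L := h.isQ.of_algebra
  rw [mem_V] at *
  rw [lev_add h, hL.add_pow, hx, hy, mul_add]

theorem sub_mem_V {s x y : L} (hx : x ∈ V q d α s) (hy : y ∈ V q d α s) : x - y ∈ V q d α s := by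
  have hL : IsQ q L := h.isQ.of_algebra
  rw [mem_V] at *
  rw [lev_sub h, hL.sub_pow, hx, hy, mul_sub]

omit h in
theorem smul_mem_V {s x : L} {c : k} (hc : c ^ q = c) (hx : x ∈ V q d α s) :
    algebraMap k L c * x ∈ V q d α s := by
  rw [mem_V] at *
  rw [lev_smul hc, hx, mul_pow, ← map_pow, hc]
  ring

theorem zero_mem_V (s : L) : (0 : L) ∈ V q d α s := by
  have h0 : (0 : L) ^ q = 0 := zero_pow h.isQ.ne_zero
  simp [mem_V, lev, h.isQ.ne_zero]

theorem linPoly_natDegree_monic : (linPoly q d α).natDegree = q ^ d ∧ (linPoly q d α).Monic := by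
  have h2 := h.isQ.two_le
  have e : linPoly q d α = X ^ q ^ d + ∑ j ∈ Finset.range d, C (α j) * X ^ q ^ j := by
    rw [linPoly, Finset.sum_range_succ, h.top, map_one, one_mul, add_comm]
  have hlt : (∑ j ∈ Finset.range d, C (α j) * X ^ q ^ j : k[X]).degree < (q ^ d : ℕ) := by
    refine (degree_sum_le _ _).trans_lt ?_
    rw [Finset.sup_lt_iff (by exact WithBot.bot_lt_coe _)]
    intro j hj
    refine (degree_C_mul_X_pow_le _ _).trans_lt ?_
    exact_mod_cast Nat.pow_lt_pow_right (by omega) (Finset.mem_range.1 hj)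
  have hm : (linPoly q d α).Monic := by
    rw [e]; exact monic_X_pow_add hlt
  refine ⟨?_, hm⟩
  rw [e]
  refine natDegree_eq_of_degree_eq_some ?_
  rw [degree_add_eq_left_of_degree_lt (by rwa [degree_X_pow]), degree_X_pow]

theorem lt_pow : q < q ^ d := by
  have h2 := h.isQ.two_le
  have h3 := h.three_le
  calc q = q ^ 1 := (pow_one q).symm
    _ < q ^ d := Nat.pow_lt_pow_right (by omega) (by omega)

theorem natDegree_fam (s : L) : (fam q d α s).natDegree = q ^ d := by
  obtain ⟨h1, h2⟩ := linPoly_natDegree_monic h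
  rw [fam, natDegree_sub_eq_left_of_natDegree_lt]
  · rw [natDegree_map, h1]
  · refine (natDegree_C_mul_X_pow_le _ _).trans_lt ?_
    rw [natDegree_map, h1]
    exact lt_pow h

theorem fam_monic (s : L) : (fam q d α s).Monic := by
  obtain ⟨h1, h2⟩ := linPoly_natDegree_monic h
  have h3 := h2.map (algebraMap k L)
  refine h3.sub_of_left ?_
  refine (degree_C_mul_X_pow_le _ _).trans_lt ?_
  rw [degree_eq_natDegree h3.ne_zero, natDegree_map, h1]
  exact_mod_cast lt_pow h

theorem fam_ne_zero (s : L) : fam q d α s ≠ 0 := (fam_monic h s).ne_zero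

theorem derivative_fam (s : L) : derivative (fam q d α s) = C (algebraMap k L (α 0)) := by
  have hL : IsQ q L := h.isQ.of_algebra
  have hk := h.isQ.cast_eq_zero
  rw [fam, linPoly, Polynomial.map_sum, Finset.sum_range_succ']
  simp [derivative_X_pow, hL.cast_eq_zero, pow_succ]

theorem fam_separable (s : L) : (fam q d α s).Separable := by
  rw [separable_def, derivative_fam h]
  have h0 : (algebraMap k L (α 0)) ≠ 0 := by simpa using h.zero
  exact ⟨0, C (algebraMap k L (α 0))⁻¹, by
    rw [zero_mul, zero_add, ← C_mul, inv_mul_cancel₀ h0, C_1]⟩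

theorem V_eq_roots (s : L) [DecidableEq L] : V q d α s = ((fam q d α s).roots.toFinset : Set L) := by
  ext x
  simp [mem_V_iff_isRoot, fam_ne_zero h]

theorem V_finite (s : L) : (V q d α s).Finite := by
  classical
  rw [V_eq_roots h]
  exact Finset.finite_toSet _

theorem V_ncard {s : L} (hs : (fam q d α s).Splits) : (V q d α s).ncard = q ^ d := by
  classical
  rw [V_eq_roots h, Set.ncard_coe_finset, Multiset.toFinset_card_of_nodup
    (nodup_roots (fam_separable h s)), ← hs.natDegree_eq_card_roots, natDegree_fam h]

/-- If `f - s X ^ q` has `q ^ d` roots in `L` then it splits. -/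
theorem fam_splits_of_ncard {s : L} (hs : q ^ d ≤ (V q d α s).ncard) : (fam q d α s).Splits := by
  classical
  rw [splits_iff_card_roots]
  refine le_antisymm (card_roots' _) ?_
  rw [natDegree_fam h]
  refine hs.trans ?_
  rw [V_eq_roots h, Set.ncard_coe_finset]
  exact Multiset.toFinset_card_le _

end Family


/-! ### Homomorphisms out of the splitting field -/

section Homs

variable {k K0 L : Type*} [Field k] [Field K0] [Field L] [Algebra k K0] [Algebra k[X] K0]
  [IsFractionRing k[X] K0] [IsScalarTower k k[X] K0]

/-- A homomorphism out of `k(s)` is prescribed by its restriction to `k` and a transcendental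
value at `s`. -/
theorem exists_hom_ratfunc (τ : k →+* L) (t : L) (ht : ∀ P : k[X], P.eval₂ τ t = 0 → P = 0) :
    ∃ φ : K0 →+* L, (∀ c : k, φ (algebraMap k K0 c) = τ c) ∧ φ (algebraMap k[X] K0 X) = t := by
  have hinj : Function.Injective (eval₂RingHom τ t) := by
    rw [injective_iff_map_eq_zero]
    exact fun P hP => ht P hP
  refine ⟨IsFractionRing.lift hinj, fun c => ?_, ?_⟩
  · rw [IsScalarTower.algebraMap_apply k k[X] K0, IsFractionRing.lift_algebraMap]
    simp
  · rw [IsFractionRing.lift_algebraMap]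
    simp

theorem hom_ratfunc_ext {φ φ' : K0 →+* L}
    (h1 : ∀ c : k, φ (algebraMap k K0 c) = φ' (algebraMap k K0 c))
    (h2 : φ (algebraMap k[X] K0 X) = φ' (algebraMap k[X] K0 X)) : φ = φ' := by
  apply IsLocalization.ringHom_ext (nonZeroDivisors k[X])
  refine Polynomial.ringHom_ext (fun c => ?_) (by simpa using h2)
  have := h1 c
  rw [IsScalarTower.algebraMap_apply k k[X] K0] at this
  simpa using this

/-- The generator of `k(s)` is transcendental over `k`. -/
theorem eval₂_gen (P : k[X]) (hP : P.eval₂ (algebraMap k K0) (algebraMap k[X] K0 X) = 0) :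
    P = 0 := by
  have e : P.eval₂ (algebraMap k K0) (algebraMap k[X] K0 X) = algebraMap k[X] K0 P := by
    rw [IsScalarTower.algebraMap_eq k k[X] K0, ← hom_eval₂]
    congr 1
    exact eval₂_C_X
  rw [e] at hP
  exact (IsFractionRing.injective k[X] K0) (by rw [hP, map_zero])

/-- In an extension of an algebraically closed field, non-constant elements are transcendental. -/
theorem eval₂_ne_zero_of_not_mem [IsAlgClosed k] [Algebra k L] {t : L}
    (ht : ∀ c : k, algebraMap k L c ≠ t) (P : k[X]) (hP : P.eval₂ (algebraMap k L) t = 0) :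
    P = 0 := by
  by_contra h0
  have h := (IsAlgClosed.splits P).eq_prod_roots
  have h1 : (P.leadingCoeff) ≠ 0 := leadingCoeff_ne_zero.2 h0
  have h2 := congrArg (eval₂ (algebraMap k L) t) h
  rw [hP, eval₂_mul, eval₂_C, eval₂_multiset_prod, Multiset.map_map] at h2
  rcases mul_eq_zero.1 h2.symm with h3 | h3
  · exact h1 (by simpa using h3)
  · obtain ⟨c, -, hc⟩ := Multiset.mem_map.1 (Multiset.prod_eq_zero_iff.1 h3)
    refine ht c ?_
    simp only [Function.comp_apply, eval₂_sub, eval₂_X, eval₂_C] at hc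
    exact (sub_eq_zero.1 hc).symm

end Homs

section Split

variable {K0 K L : Type*} [Field K0] [Field K] [Field L] [Algebra K0 K]

theorem exists_hom_split (P : K0[X]) [IsSplittingField K0 K P] (φ0 : K0 →+* L)
    (hs : (P.map φ0).Splits) : ∃ φ : K →+* L, ∀ c, φ (algebraMap K0 K c) = φ0 c := by
  let _ := φ0.toAlgebra
  exact ⟨(IsSplittingField.lift K P hs : K →ₐ[K0] L), fun c => AlgHom.commutes _ c⟩

/-- Two homomorphisms out of a finite Galois extension that agree on the base differ by an
element of the Galois group. -/
theorem exists_gal_of_hom [FiniteDimensional K0 K] [IsGalois K0 K] (φ φ' : K →+* L)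
    (h : ∀ c, φ (algebraMap K0 K c) = φ' (algebraMap K0 K c)) :
    ∃ γ : Gal(K/K0), ∀ x, φ' x = φ (γ x) := by
  let _ := (φ.comp (algebraMap K0 K)).toAlgebra
  let ψ : K →ₐ[K0] L := { φ with commutes' := fun c => rfl }
  let ψ' : K →ₐ[K0] L := { φ' with commutes' := fun c => (h c).symm }
  have hinj : Function.Injective (fun γ : Gal(K/K0) => ψ.comp (γ : K →ₐ[K0] K)) := by
    intro γ γ' e
    ext x
    exact ψ.injective (DFunLike.congr_fun e x)
  have hb := hinj.bijective_of_nat_card_le (by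
    rw [IsGalois.card_aut_eq_finrank]
    exact card_algHom_le_finrank K0 K L)
  obtain ⟨γ, hγ⟩ := hb.surjective ψ'
  exact ⟨γ, fun x => (DFunLike.congr_fun hγ x).symm⟩

end Split


/-! ### Transitivity of the Galois group on the nonzero roots -/

section Trans

variable {k : Type*} [Field k] {q d : ℕ} {α : ℕ → k}

theorem ne_zero_of_map_gen {K0 K : Type*} [Field K0] [Field K]
    [Algebra k K0] [Algebra k[X] K0] [IsFractionRing k[X] K0] [IsScalarTower k k[X] K0]
    [Algebra K0 K] [Algebra k K] [IsScalarTower k K0 K] (c : k) :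
    algebraMap k K c ≠ algebraMap K0 K (algebraMap k[X] K0 X) := by
  intro e
  rw [IsScalarTower.algebraMap_apply k K0 K] at e
  have e' := (algebraMap K0 K).injective e
  have := eval₂_gen (K0 := K0) (X - C c) (by rw [eval₂_sub, eval₂_X, eval₂_C, e', sub_self])
  exact X_sub_C_ne_zero c this

theorem const_not_mem_V {K0 K : Type*} [Field K0] [Field K]
    [Algebra k K0] [Algebra k[X] K0] [IsFractionRing k[X] K0] [IsScalarTower k k[X] K0]
    [Algebra K0 K] [Algebra k K] [IsScalarTower k K0 K] {x : K}
    (hx : x ∈ V q d α (algebraMap K0 K (algebraMap k[X] K0 X))) (hx0 : x ≠ 0) (c : k) :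
    algebraMap k K c ≠ x := by
  rintro rfl
  rw [mem_V, ← lev_map (algebraMap k K) (fun _ => rfl)] at hx
  have hc : algebraMap k K c ^ q ≠ 0 := pow_ne_zero _ hx0
  refine ne_zero_of_map_gen (K0 := K0) (K := K) (lev q d α c / c ^ q) ?_
  rw [map_div₀, hx, map_pow, mul_div_cancel_right₀ _ hc]

variable {K0 K : Type*} [Field K0] [Field K]
  [Algebra k K0] [Algebra k[X] K0] [IsFractionRing k[X] K0] [IsScalarTower k k[X] K0]
  [Algebra K0 K] [Algebra k K] [IsScalarTower k K0 K]

/-- A root `x` satisfies `s = f(x) / x ^ q`, so `k(s, x) = k(x)` is a rational function field and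
the algebraic relations of `x` over `k(s)` do not depend on the chosen nonzero root. -/
theorem eval_eq_zero_iff [IsAlgClosed k] {x : K}
    (hx : x ∈ V q d α (algebraMap K0 K (algebraMap k[X] K0 X))) (hx0 : x ≠ 0) (c : K0 →+* K0)
    (hc1 : ∀ a : k, c (algebraMap k K0 a) = algebraMap k K0 a)
    (hc2 : c (algebraMap k[X] K0 X) =
      lev q d α (algebraMap k[X] K0 X) / (algebraMap k[X] K0 X) ^ q) (P : K0[X]) :
    aeval x P = 0 ↔ eval₂ c (algebraMap k[X] K0 X) P = 0 := by
  obtain ⟨θ, hθ1, hθ2⟩ := exists_hom_ratfunc (K0 := K0) (algebraMap k K) x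
    (eval₂_ne_zero_of_not_mem (const_not_mem_V hx hx0))
  have e : θ.comp c = algebraMap K0 K := by
    refine hom_ratfunc_ext (k := k) (fun a => ?_) ?_
    · rw [RingHom.comp_apply, hc1, hθ1, IsScalarTower.algebraMap_apply k K0 K]
    · rw [RingHom.comp_apply, hc2, map_div₀, lev_map θ hθ1, map_pow, hθ2, mem_V.1 hx,
        mul_div_cancel_right₀ _ (pow_ne_zero _ hx0)]
  rw [aeval_def, ← e]
  nth_rewrite 1 [← hθ2]
  rw [← hom_eval₂]
  exact map_eq_zero θ

/-- A root `x` determines `s = f(x) / x ^ q`, so that `k(s, x) = k(x)` is rational and any two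
nonzero roots are conjugate over `k(s)`. -/
theorem gal_trans [IsAlgClosed k] [FiniteDimensional K0 K] [IsGalois K0 K] {x y : K}
    (hx : x ∈ V q d α (algebraMap K0 K (algebraMap k[X] K0 X)))
    (hy : y ∈ V q d α (algebraMap K0 K (algebraMap k[X] K0 X)))
    (hx0 : x ≠ 0) (hy0 : y ≠ 0) : ∃ γ : Gal(K/K0), γ x = y := by
  set s0 : K0 := algebraMap k[X] K0 X with hs0
  have hs00 : s0 ^ q ≠ 0 := by
    refine pow_ne_zero _ fun e => ne_zero_of_map_gen (K0 := K0) (K := K) (k := k) 0 ?_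
    rw [← hs0, e, map_zero, map_zero]
  -- the substitution `s ↦ f(s) / s ^ q`
  obtain ⟨θ, hθ1, hθ2⟩ := exists_hom_ratfunc (K0 := K0) (algebraMap k K) x
    (eval₂_ne_zero_of_not_mem (const_not_mem_V hx hx0))
  obtain ⟨c, hc1, hc2⟩ := exists_hom_ratfunc (K0 := K0) (algebraMap k K0) (lev q d α s0 / s0 ^ q)
    (by
      intro P hP
      have e := congrArg θ hP
      have hcomp : θ.comp (algebraMap k K0) = algebraMap k K := RingHom.ext hθ1
      rw [hom_eval₂, hcomp, map_div₀, lev_map θ hθ1, map_pow, hθ2, mem_V.1 hx,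
        mul_div_cancel_right₀ _ (pow_ne_zero _ hx0), map_zero,
        IsScalarTower.algebraMap_eq k K0 K, ← hom_eval₂] at e
      exact eval₂_gen (K0 := K0) P ((map_eq_zero _).1 e))
  have key : minpoly K0 x = minpoly K0 y := by
    refine minpoly.eq_of_irreducible_of_monic
      (minpoly.irreducible (IsIntegral.of_finite K0 x)) ?_ (minpoly.monic (IsIntegral.of_finite K0 x))
    rw [eval_eq_zero_iff hy hy0 c hc1 hc2, ← eval_eq_zero_iff hx hx0 c hc1 hc2]
    exact minpoly.aeval K0 x
  obtain ⟨γ, hγ⟩ := (Normal.minpoly_eq_iff_mem_orbit (F := K0) K).1 key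
  exact ⟨γ⁻¹, by rw [← hγ]; simp⟩

end Trans


/-! ### From translations to transitivity on independent pairs -/

section Ind

variable {k : Type*} [Field k] {q d : ℕ} {α : ℕ → k} {L : Type*} [Field L]

/-- `x` and `y` are linearly independent over `𝔽_q`. -/
def Ind (q : ℕ) (x y : L) : Prop := y ^ q * x ≠ y * x ^ q

variable [Algebra k L]

/-- `x`, `y`, `z` are linearly independent over `𝔽_q = {c ∈ k | c ^ q = c}`. -/
def Ind3 (k : Type*) [Field k] [Algebra k L] (q : ℕ) (x y z : L) : Prop :=
  ∀ a b c : k, a ^ q = a → b ^ q = b → c ^ q = c →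
    algebraMap k L a * x + algebraMap k L b * y + algebraMap k L c * z = 0 → a = 0 ∧ b = 0 ∧ c = 0

theorem Ind.left_ne_zero (h : IsQ q k) {x y : L} (hi : Ind q x y) : x ≠ 0 := by
  rintro rfl
  simp [Ind, h.ne_zero] at hi

theorem Ind.right_ne_zero (h : IsQ q k) {x y : L} (hi : Ind q x y) : y ≠ 0 := by
  rintro rfl
  simp [Ind, h.ne_zero] at hi

theorem Ind.symm {x y : L} (hi : Ind q x y) : Ind q y x := by
  unfold Ind at *
  intro e
  exact hi (by linear_combination -e)

theorem Ind.coeff (h : IsQ q k) {x y : L} (hi : Ind q x y) {a b : k} (ha : a ^ q = a)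
    (hb : b ^ q = b) (e : algebraMap k L a * x + algebraMap k L b * y = 0) : a = 0 ∧ b = 0 := by
  have hx := hi.left_ne_zero h
  have hL : IsQ q L := h.of_algebra
  have hb0 : b = 0 := by
    by_contra hb0
    have hb' : algebraMap k L b ≠ 0 := by simpa using hb0
    apply hi
    have e2 : (algebraMap k L a * x + algebraMap k L b * y) ^ q = 0 := by rw [e, zero_pow h.ne_zero]
    rw [hL.add_pow, mul_pow, mul_pow, ← map_pow, ← map_pow, ha, hb] at e2
    apply mul_left_cancel₀ hb'
    linear_combination x * e2 - x ^ q * e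
  subst hb0
  refine ⟨?_, rfl⟩
  simpa [hx] using e

theorem ind_of_coeff [IsAlgClosed k] (h : IsQ q k) {x y : L}
    (H : ∀ a b : k, a ^ q = a → b ^ q = b →
      algebraMap k L a * x + algebraMap k L b * y = 0 → a = 0 ∧ b = 0) : Ind q x y := by
  intro e
  have hx : x ≠ 0 := by
    rintro rfl
    have := (H 1 0 (one_pow q) (zero_pow h.ne_zero) (by simp)).1
    exact one_ne_zero this
  obtain ⟨c, hc, hy⟩ := exists_Fq_of_pow h hx e
  have := (H (-c) 1 (by rw [h.neg_pow, hc]) (one_pow q) (by rw [hy, map_neg]; simp)).2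
  exact one_ne_zero this

theorem Ind3.map {L' : Type*} [Field L'] [Algebra k L'] (φ : L →ₐ[k] L') {x y z : L}
    (hi : Ind3 k q x y z) : Ind3 k q (φ x) (φ y) (φ z) := by
  intro a b c ha hb hc e
  refine hi a b c ha hb hc (φ.injective ?_)
  simpa using e

theorem Ind3.ind [IsAlgClosed k] (h : IsQ q k) {x y z : L} (hi : Ind3 k q x y z) : Ind q x y := by
  refine ind_of_coeff (k := k) h fun a b ha hb e => ?_
  obtain ⟨h1, h2, -⟩ := hi a b 0 ha hb (zero_pow h.ne_zero) (by simpa using e)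
  exact ⟨h1, h2⟩

theorem ind3_of_not_span (h : IsQ q k) {x y z : L} (hi : Ind q x y)
    (hz : ∀ a b : k, a ^ q = a → b ^ q = b → z ≠ algebraMap k L a * x + algebraMap k L b * y) :
    Ind3 k q x y z := by
  intro a b c ha hb hc e
  have hc0 : c = 0 := by
    by_contra hc0
    have hc' : algebraMap k L c ≠ 0 := by simpa using hc0
    refine hz (-a / c) (-b / c) (by rw [div_pow, h.neg_pow, ha, hc])
      (by rw [div_pow, h.neg_pow, hb, hc]) ?_
    simp only [map_div₀, map_neg]
    field_simp
    linear_combination e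
  subst hc0
  obtain ⟨h1, h2⟩ := hi.coeff h ha hb (by simpa using e)
  exact ⟨h1, h2, rfl⟩

theorem Ind.map {L' : Type*} [Field L'] (φ : L →+* L') {x y : L} (hi : Ind q x y) :
    Ind q (φ x) (φ y) := by
  intro e
  refine hi (φ.injective ?_)
  simpa using e

theorem ind_swap3 (h : IsQ q k) {x y y' z : L} (hi : Ind q x y')
    (hz : Ind3 k q x y z) {a b : k} (ha : a ^ q = a) (hb : b ^ q = b)
    (e : y' = algebraMap k L a * x + algebraMap k L b * y) : Ind3 k q x z y' := by
  intro u v w hu hv hw e2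
  obtain ⟨-, -, h3⟩ := hz (u + w * a) (w * b) v (by rw [h.add_pow, mul_pow, hu, hw, ha])
    (by rw [mul_pow, hw, hb]) hv (by rw [e] at e2; simp only [map_add, map_mul]; linear_combination e2)
  subst h3
  obtain ⟨h1, h2⟩ := hi.coeff h hu hw (by simpa using e2)
  exact ⟨h1, rfl, h2⟩

theorem Ind3.sub (h : IsQ q k) {x y y' : L} (hz : Ind3 k q x y y') : Ind3 k q x y (y' - y) := by
  intro a b c ha hb hc e
  obtain ⟨h1, h2, h3⟩ := hz a (b - c) c ha (by rw [h.sub_pow, hb, hc]) hc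
    (by rw [map_sub]; linear_combination e)
  subst h3
  exact ⟨h1, by simpa using h2, rfl⟩

theorem exists_not_span [IsAlgClosed k] (h : Setup q d α) {s : L} (hs : (fam q d α s).Splits)
    (x y : L) : ∃ z ∈ V q d α s, ∀ a b : k, a ^ q = a → b ^ q = b →
      z ≠ algebraMap k L a * x + algebraMap k L b * y := by
  classical
  by_contra! hcon
  have hsub : V q d α s ⊆ (((Fq k q ×ˢ Fq k q).image
      fun c => algebraMap k L c.1 * x + algebraMap k L c.2 * y : Finset L) : Set L) := by
    intro z hz
    obtain ⟨a, b, ha, hb, e⟩ := hcon z hz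
    rw [Finset.coe_image]
    exact ⟨(a, b), by simp [mem_Fq h.isQ, ha, hb], e.symm⟩
  have h1 := Set.ncard_le_ncard hsub (Finset.finite_toSet _)
  rw [V_ncard h hs, Set.ncard_coe_finset] at h1
  have h2 := h1.trans Finset.card_image_le
  rw [Finset.card_product, card_Fq h.isQ] at h2
  have : q ^ 2 < q ^ d := Nat.pow_lt_pow_right h.isQ.two_le h.three_le
  nlinarith

end Ind

section TwoTrans

variable {k : Type*} [Field k] [IsAlgClosed k] {q d : ℕ} {α : ℕ → k} {K0 K : Type*} [Field K0]
  [Field K] [Algebra k K0] [Algebra K0 K] [Algebra k K] [IsScalarTower k K0 K]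

theorem gal_mem_V {s : K0} (γ : Gal(K/K0)) {x : K} (hx : x ∈ V q d α (algebraMap K0 K s)) :
    γ x ∈ V q d α (algebraMap K0 K s) := by
  have := map_mem_V (γ : K →+* K) (fun c => by
    rw [IsScalarTower.algebraMap_apply k K0 K]; exact γ.commutes _) hx
  simpa using this

/-- A group of automorphisms that is transitive on nonzero roots, and contains for one root `l`
all the required transvections in direction `l`, is transitive on pairs of independent roots. -/
theorem gal_two_trans (h : Setup q d α) {s : K0} (hs : (fam q d α (algebraMap K0 K s)).Splits)
    (htrans : ∀ x ∈ V q d α (algebraMap K0 K s), ∀ y ∈ V q d α (algebraMap K0 K s),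
      x ≠ 0 → y ≠ 0 → ∃ γ : Gal(K/K0), γ x = y)
    {l : K} (hl : l ∈ V q d α (algebraMap K0 K s)) (hl0 : l ≠ 0)
    (htv : ∀ x ∈ V q d α (algebraMap K0 K s), ∀ y ∈ V q d α (algebraMap K0 K s),
      Ind3 k q x y l → ∃ γ : Gal(K/K0), γ x = x ∧ γ y = y + l)
    {x y x' y' : K} (hx : x ∈ V q d α (algebraMap K0 K s)) (hy : y ∈ V q d α (algebraMap K0 K s))
    (hx' : x' ∈ V q d α (algebraMap K0 K s)) (hy' : y' ∈ V q d α (algebraMap K0 K s))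
    (hi : Ind q x y) (hi' : Ind q x' y') : ∃ γ : Gal(K/K0), γ x = x' ∧ γ y = y' := by
  have hq := h.isQ
  -- transvections in every direction
  have step1 : ∀ x ∈ V q d α (algebraMap K0 K s), ∀ y ∈ V q d α (algebraMap K0 K s),
      ∀ z ∈ V q d α (algebraMap K0 K s), Ind3 k q x y z →
      ∃ γ : Gal(K/K0), γ x = x ∧ γ y = y + z := by
    intro x hx y hy z hz h3
    have hz0 : z ≠ 0 := by
      rintro rfl
      have := (h3 0 0 1 (zero_pow hq.ne_zero) (zero_pow hq.ne_zero) (one_pow q) (by simp)).2.2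
      exact one_ne_zero this
    obtain ⟨δ, hδ⟩ := htrans z hz l hl hz0 hl0
    obtain ⟨γ, h1, h2⟩ := htv (δ x) (gal_mem_V δ hx) (δ y) (gal_mem_V δ hy) (by
      have := h3.map ((δ : K →ₐ[K0] K).restrictScalars k)
      rw [← hδ]
      exact this)
    refine ⟨δ⁻¹ * γ * δ, ?_, ?_⟩
    · simp only [AlgEquiv.mul_apply, h1, AlgEquiv.aut_inv, AlgEquiv.symm_apply_apply]
    · simp only [AlgEquiv.mul_apply, h2, AlgEquiv.aut_inv, map_add, AlgEquiv.symm_apply_apply,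
        ← hδ]
  have step2 : ∀ x ∈ V q d α (algebraMap K0 K s), ∀ y ∈ V q d α (algebraMap K0 K s),
      ∀ y' ∈ V q d α (algebraMap K0 K s), Ind3 k q x y y' →
      ∃ γ : Gal(K/K0), γ x = x ∧ γ y = y' := by
    intro x hx y hy y' hy' h3
    obtain ⟨γ, h1, h2⟩ := step1 x hx y hy (y' - y) (sub_mem_V h hy' hy) (h3.sub hq)
    exact ⟨γ, h1, by rw [h2]; ring⟩
  have step3 : ∀ x ∈ V q d α (algebraMap K0 K s), ∀ y ∈ V q d α (algebraMap K0 K s),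
      ∀ y' ∈ V q d α (algebraMap K0 K s), Ind q x y → Ind q x y' →
      ∃ γ : Gal(K/K0), γ x = x ∧ γ y = y' := by
    intro x hx y hy y' hy' hi hi'
    by_cases hsp : ∃ a b : k, a ^ q = a ∧ b ^ q = b ∧
        y' = algebraMap k K a * x + algebraMap k K b * y
    · obtain ⟨a, b, ha, hb, e⟩ := hsp
      obtain ⟨z, hz, hz'⟩ := exists_not_span (k := k) h hs x y
      have h3 := ind3_of_not_span hq hi hz'
      obtain ⟨γ1, h1, h2⟩ := step2 x hx y hy z hz h3
      obtain ⟨γ2, h4, h5⟩ := step2 x hx z hz y' hy' (ind_swap3 hq hi' h3 ha hb e)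
      exact ⟨γ2 * γ1, by simp [h1, h4], by simp [h2, h5]⟩
    · push Not at hsp
      exact step2 x hx y hy y' hy' (ind3_of_not_span hq hi hsp)
  obtain ⟨γ1, h1⟩ := htrans x hx x' hx' (hi.left_ne_zero hq) (hi'.left_ne_zero hq)
  obtain ⟨γ2, h2, h3⟩ := step3 x' hx' (γ1 y) (gal_mem_V γ1 hy) y' hy' (by
    have := hi.map (γ1 : K →+* K)
    rw [← h1]; exact this) hi'
  exact ⟨γ2 * γ1, by simp [h1, h2], by simp [h3]⟩

end TwoTrans


/-! ### Additive equations over power series -/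

section Hensel

variable {k : Type*} [Field k] {q : ℕ}

theorem eq_zero_of_X_pow_dvd {τ : PowerSeries k} (h : ∀ n, (PowerSeries.X : PowerSeries k) ^ n ∣ τ) :
    τ = 0 := by
  ext n
  exact (PowerSeries.X_pow_dvd_iff.1 (h (n + 1))) n (Nat.lt_succ_self n)

/-- Hensel's lemma for additive equations `T = ∑ A i * T ^ (q ^ i)` with `i ≥ 1`: the difference
of the two sides has derivative `1`. -/
theorem hensel (hq : IsQ q k) (d : ℕ) (A : ℕ → PowerSeries k) (c : k)
    (hc : c = ∑ i ∈ Finset.Icc 1 d, PowerSeries.constantCoeff (A i) * c ^ q ^ i) :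
    ∃ τ : PowerSeries k, PowerSeries.constantCoeff τ = c ∧
      τ = ∑ i ∈ Finset.Icc 1 d, A i * τ ^ q ^ i := by
  have hL : IsQ q (PowerSeries k) := hq.of_algebra
  let Ψ : PowerSeries k → PowerSeries k := fun T => ∑ i ∈ Finset.Icc 1 d, A i * T ^ q ^ i
  have hΨ : ∀ (j : ℕ) (S T : PowerSeries k), 1 ≤ j → (PowerSeries.X : PowerSeries k) ^ j ∣ T - S →
      (PowerSeries.X : PowerSeries k) ^ (j + 1) ∣ Ψ T - Ψ S := by
    intro j S T hj hd
    have : Ψ T - Ψ S = ∑ i ∈ Finset.Icc 1 d, A i * (T - S) ^ q ^ i := by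
      simp only [Ψ, hL.sub_pow_pow, mul_sub, Finset.sum_sub_distrib]
    rw [this]
    refine Finset.dvd_sum fun i hi => Dvd.dvd.mul_left ?_ _
    have hi1 := (Finset.mem_Icc.1 hi).1
    have h2 : 2 ≤ q ^ i := hq.two_le.trans (Nat.le_self_pow (by omega) q)
    calc (PowerSeries.X : PowerSeries k) ^ (j + 1) ∣ PowerSeries.X ^ (j * q ^ i) :=
          pow_dvd_pow _ (by nlinarith)
      _ = (PowerSeries.X ^ j) ^ q ^ i := pow_mul _ _ _
      _ ∣ (T - S) ^ q ^ i := pow_dvd_pow_of_dvd hd _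
  let T : ℕ → PowerSeries k := fun n => Ψ^[n] (PowerSeries.C c)
  have hT1 : ∀ n, T (n + 1) = Ψ (T n) := fun n => Function.iterate_succ_apply' _ _ _
  have hstep : ∀ n, (PowerSeries.X : PowerSeries k) ^ (n + 1) ∣ T (n + 1) - T n := by
    intro n
    induction n with
    | zero =>
      rw [hT1, zero_add, pow_one, PowerSeries.X_dvd_iff]
      change PowerSeries.constantCoeff (Ψ (PowerSeries.C c) - PowerSeries.C c) = 0
      rw [map_sub, sub_eq_zero]
      simp only [Ψ, map_sum, map_mul, map_pow, PowerSeries.constantCoeff_C]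
      exact hc.symm
    | succ n ih =>
      rw [hT1 (n + 1), hT1 n]
      exact hΨ _ _ _ (by omega) (by rw [← hT1 n]; exact ih)
  have hmn : ∀ m n, m ≤ n → (PowerSeries.X : PowerSeries k) ^ (m + 1) ∣ T n - T m := by
    intro m n hmn
    induction n, hmn using Nat.le_induction with
    | base => simp
    | succ n hn ih =>
      have := (pow_dvd_pow (PowerSeries.X : PowerSeries k) (by omega : m + 1 ≤ n + 1)).trans (hstep n)
      have h3 := dvd_add this ih
      simpa using h3
  let τ : PowerSeries k := PowerSeries.mk fun n => PowerSeries.coeff n (T n)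
  have hτ : ∀ n, (PowerSeries.X : PowerSeries k) ^ (n + 1) ∣ τ - T n := by
    intro n
    rw [PowerSeries.X_pow_dvd_iff]
    intro m hm
    have := PowerSeries.X_pow_dvd_iff.1 (hmn m n (by omega)) m (by omega)
    rw [map_sub, sub_eq_zero] at this ⊢
    rw [this, PowerSeries.coeff_mk]
  refine ⟨τ, ?_, ?_⟩
  · rw [← PowerSeries.coeff_zero_eq_constantCoeff_apply]
    simp [τ, T]
  · rw [← sub_eq_zero]
    refine eq_zero_of_X_pow_dvd fun n => ?_
    have e : τ - Ψ τ = (τ - T (n + 1)) - (Ψ τ - Ψ (T n)) := by rw [hT1]; ring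
    change _ ∣ τ - Ψ τ
    rw [e]
    refine (pow_dvd_pow _ (by omega : n ≤ n + 1 + 1)).trans (dvd_sub (hτ (n + 1)) ?_)
    exact hΨ _ _ _ (by omega) (hτ n)

end Hensel


/-! ### The roots near `s = ∞` -/

section Wild

variable {k : Type*} [Field k] {q d : ℕ} {α : ℕ → k}

theorem lev_eq (h : Setup q d α) {L : Type*} [Field L] [Algebra k L] (x : L) :
    lev q d α x = algebraMap k L (α 0) * x +
      ∑ j ∈ Finset.Icc 2 d, algebraMap k L (α j) * x ^ q ^ j := by
  have h3 := h.three_le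
  have e : Finset.range (d + 1) = insert 0 (insert 1 (Finset.Icc 2 d)) := by
    ext j
    simp only [Finset.mem_range, Finset.mem_insert, Finset.mem_Icc]
    omega
  rw [lev, e, Finset.sum_insert (by simp), Finset.sum_insert (by simp), h.one]
  simp

theorem pow_pow_eq_add_sum {R : Type*} [CommRing R] (hq : IsQ q R) {t τ : R} (e : t ^ q = t + τ)
    (i : ℕ) : t ^ q ^ i = t + ∑ a ∈ Finset.range i, τ ^ q ^ a := by
  induction i with
  | zero => simp
  | succ i ih =>
    rw [pow_succ', pow_mul, e, hq.add_pow_pow, ih, Finset.sum_range_succ]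
    ring

/-- If `t ^ q = t + τ` then `l * t` is a root of `f - (f(l) / l ^ q) X ^ q` as soon as `τ`
satisfies an explicit additive equation. -/
theorem mul_mem_V (h : Setup q d α) {L : Type*} [Field L] [Algebra k L] {l t τ : L} (hl : l ≠ 0)
    (e : t ^ q = t + τ)
    (hτ : algebraMap k L (α 0) * l * τ = ∑ j ∈ Finset.Icc 2 d, ∑ i ∈ Finset.Icc 1 (j - 1),
      algebraMap k L (α j) * l ^ q ^ j * τ ^ q ^ i) :
    l * t ∈ V q d α (lev q d α l / l ^ q) := by
  have hL : IsQ q L := h.isQ.of_algebra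
  rw [mem_V, mul_pow, e, show lev q d α l / l ^ q * (l ^ q * (t + τ)) = lev q d α l * (t + τ) by
    field_simp, lev_eq h, lev_eq h]
  have e1 : ∀ j ∈ Finset.Icc 2 d, algebraMap k L (α j) * (l * t) ^ q ^ j =
      algebraMap k L (α j) * l ^ q ^ j * (t + τ) + ∑ i ∈ Finset.Icc 1 (j - 1),
      algebraMap k L (α j) * l ^ q ^ j * τ ^ q ^ i := by
    intro j hj
    have hj2 := (Finset.mem_Icc.1 hj).1
    have e2 : Finset.range j = insert 0 (Finset.Icc 1 (j - 1)) := by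
      ext a
      simp only [Finset.mem_range, Finset.mem_insert, Finset.mem_Icc]
      omega
    rw [mul_pow, pow_pow_eq_add_sum hL e, e2, Finset.sum_insert (by simp), ← Finset.mul_sum]
    ring
  rw [Finset.sum_congr rfl e1, Finset.sum_add_distrib, ← hτ, ← Finset.sum_mul]
  ring

/-- The exponent `θ = (q ^ (d - 1) - 1) / (q - 1)` used to rescale the roots at infinity. -/
theorem exists_theta (hq : 2 ≤ q) (hd : 3 ≤ d) : ∃ θ : ℕ, θ * q + 1 = θ + q ^ (d - 1) ∧ 0 < θ := by
  have H : ∀ n, ∃ θ : ℕ, θ * q + 1 = θ + q ^ n := by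
    intro n
    induction n with
    | zero => exact ⟨0, by simp⟩
    | succ n ih =>
      obtain ⟨θ, hθ⟩ := ih
      exact ⟨θ + q ^ n, by rw [pow_succ]; linarith⟩
  obtain ⟨θ, hθ⟩ := H (d - 1)
  refine ⟨θ, hθ, ?_⟩
  rcases Nat.eq_zero_or_pos θ with rfl | h0
  · have : 1 < q ^ (d - 1) := Nat.one_lt_pow (by omega) (by omega)
    omega
  · exact h0

/-- The exponents occurring after the substitution `l = U ^ θ`, `τ = U ^ (-1 - q θ) τ'`. -/
def expo (q d θ i j : ℕ) : ℕ := (q ^ (d - 1) - q ^ (j - 1)) + (1 + q * θ) * (q ^ (j - 1) - q ^ i)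

theorem expo_spec {θ i j : ℕ} (hq : 2 ≤ q) (hθ : θ * q + 1 = θ + q ^ (d - 1)) (hj : 2 ≤ j)
    (hjd : j ≤ d) (hij : i ≤ j - 1) :
    expo q d θ i j + (1 + q * θ) * q ^ i + θ = θ * q ^ j + (1 + q * θ) := by
  obtain ⟨u, hu⟩ := Nat.exists_eq_add_of_le (Nat.pow_le_pow_right (by omega : 0 < q) hij)
  obtain ⟨v, hv⟩ := Nat.exists_eq_add_of_le
    (Nat.pow_le_pow_right (by omega : 0 < q) (by omega : j - 1 ≤ d - 1))
  have e : q ^ j = q ^ (j - 1) * q := by rw [← pow_succ]; congr 1; omega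
  rw [expo, hv, Nat.add_sub_cancel_left, e]
  rw [hv] at hθ
  rw [hu] at hθ ⊢
  rw [Nat.add_sub_cancel_left]
  linarith

theorem expo_ne_zero {θ i j : ℕ} (hq : 2 ≤ q) (hjd : j ≤ d) (hij : i ≤ j - 1)
    (hi : i < d - 1) : expo q d θ i j ≠ 0 := by
  intro e
  rw [expo, Nat.add_eq_zero_iff, mul_eq_zero] at e
  obtain ⟨e1, e2⟩ := e
  rcases (by omega : j - 1 < d - 1 ∨ (j - 1 = d - 1)) with hj | hj
  · have := Nat.pow_lt_pow_right (by omega : 1 < q) hj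
    omega
  · have := Nat.pow_lt_pow_right (by omega : 1 < q) (by omega : i < j - 1)
    omega

theorem expo_top {θ : ℕ} : expo q d θ (d - 1) d = 0 := by simp [expo]

/-- The rescaled equation for `τ` has a power series solution with any prescribed constant term
`c` satisfying the reduced equation `c ^ q ^ (d - 1) = α 0 * c`. -/
theorem exists_tau_hat (h : Setup q d α) (θ : ℕ) {c : k} (hc : c ^ q ^ (d - 1) = α 0 * c) :
    ∃ τ : PowerSeries k, PowerSeries.constantCoeff τ = c ∧ (c = 0 → τ = 0) ∧
      PowerSeries.C (α 0) * τ = ∑ j ∈ Finset.Icc 2 d, ∑ i ∈ Finset.Icc 1 (j - 1),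
        PowerSeries.C (α j) * PowerSeries.X ^ expo q d θ i j * τ ^ q ^ i := by
  have hd := h.three_le
  have h2 := h.isQ.two_le
  by_cases hc0 : c = 0
  · refine ⟨0, by simp [hc0], fun _ => rfl, ?_⟩
    rw [mul_zero, Finset.sum_eq_zero]
    intro j _
    rw [Finset.sum_eq_zero]
    intro i _
    rw [zero_pow (pow_ne_zero _ h.isQ.ne_zero), mul_zero]
  obtain ⟨τ, h1, hτ⟩ := hensel h.isQ (d - 1) (fun i => ∑ j ∈ Finset.Icc (i + 1) d,
    PowerSeries.C (α j / α 0) * PowerSeries.X ^ expo q d θ i j) c (by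
      have hz : ∀ i ∈ Finset.Icc 1 (d - 1), i ≠ d - 1 → PowerSeries.constantCoeff
          (∑ j ∈ Finset.Icc (i + 1) d,
            PowerSeries.C (α j / α 0) * PowerSeries.X ^ expo q d θ i j) * c ^ q ^ i = 0 := by
        intro i hi hne
        rw [Finset.mem_Icc] at hi
        rw [map_sum, Finset.sum_eq_zero, zero_mul]
        intro j hj
        rw [Finset.mem_Icc] at hj
        rw [map_mul, map_pow, PowerSeries.constantCoeff_X, zero_pow
          (expo_ne_zero h2 hj.2 (by omega) (by omega)), mul_zero]
      rw [Finset.sum_eq_single_of_mem (d - 1) (Finset.mem_Icc.2 ⟨by omega, le_rfl⟩) hz,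
        show d - 1 + 1 = d by omega, Finset.Icc_self, Finset.sum_singleton, expo_top, h.top, hc]
      have := h.zero
      simp
      field_simp)
  refine ⟨τ, h1, fun h0 => absurd h0 hc0, ?_⟩
  nth_rewrite 1 [hτ]
  rw [Finset.mul_sum, Finset.sum_comm' (t' := Finset.Icc 1 (d - 1))
    (s' := fun i => Finset.Icc (i + 1) d)]
  · refine Finset.sum_congr rfl fun i _ => ?_
    rw [Finset.sum_mul, Finset.mul_sum]
    refine Finset.sum_congr rfl fun j _ => ?_
    have : PowerSeries.C (α j) = PowerSeries.C (α 0) * PowerSeries.C (α j / α 0) := by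
      rw [← map_mul, mul_div_cancel₀ _ h.zero]
    rw [this]
    ring
  · intro j i
    simp only [Finset.mem_Icc]
    omega

variable {κ : Type*} [Field κ] [Algebra (PowerSeries k) κ] [IsFractionRing (PowerSeries k) κ]
  [Algebra k κ] [IsScalarTower k (PowerSeries k) κ]

/-- The uniformizer of `k((U))`. -/
noncomputable def unif (k : Type*) [Field k] (κ : Type*) [Field κ] [Algebra (PowerSeries k) κ] : κ :=
  algebraMap (PowerSeries k) κ PowerSeries.X

omit [Algebra k κ] [IsScalarTower k (PowerSeries k) κ] in
theorem unif_ne_zero : unif k κ ≠ 0 := by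
  intro e
  have := (IsFractionRing.injective (PowerSeries k) κ) (e.trans (map_zero _).symm)
  exact PowerSeries.X_ne_zero this

theorem algebraMap_C (c : k) : algebraMap (PowerSeries k) κ (PowerSeries.C c) = algebraMap k κ c := by
  rw [IsScalarTower.algebraMap_apply k (PowerSeries k) κ]
  rfl

theorem tau_eq (h : Setup q d α) {θ : ℕ} (hθ : θ * q + 1 = θ + q ^ (d - 1)) {τ : PowerSeries k}
    (hτ : PowerSeries.C (α 0) * τ = ∑ j ∈ Finset.Icc 2 d, ∑ i ∈ Finset.Icc 1 (j - 1),
        PowerSeries.C (α j) * PowerSeries.X ^ expo q d θ i j * τ ^ q ^ i) {l T : κ}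
    (hl : l = unif k κ ^ θ) (hT : T * unif k κ ^ (1 + q * θ) = algebraMap (PowerSeries k) κ τ) :
    algebraMap k κ (α 0) * l * T = ∑ j ∈ Finset.Icc 2 d, ∑ i ∈ Finset.Icc 1 (j - 1),
      algebraMap k κ (α j) * l ^ q ^ j * T ^ q ^ i := by
  have hU := unif_ne_zero (k := k) (κ := κ)
  have e := congrArg (algebraMap (PowerSeries k) κ) hτ
  rw [map_mul, algebraMap_C, ← hT, map_sum] at e
  have hcan : unif k κ ^ (1 + q * θ) ≠ 0 := pow_ne_zero _ hU
  apply mul_right_cancel₀ hcan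
  rw [show algebraMap k κ (α 0) * l * T * unif k κ ^ (1 + q * θ)
    = l * (algebraMap k κ (α 0) * (T * unif k κ ^ (1 + q * θ))) by ring, e, Finset.mul_sum,
    Finset.sum_mul]
  refine Finset.sum_congr rfl fun j hj => ?_
  rw [map_sum, Finset.mul_sum, Finset.sum_mul]
  refine Finset.sum_congr rfl fun i hi => ?_
  rw [Finset.mem_Icc] at hi hj
  have hs := expo_spec h.isQ.two_le hθ hj.1 hj.2 hi.2
  rw [map_mul, map_mul, map_pow, map_pow, algebraMap_C, ← hT, mul_pow, hl]
  change _ * (_ * unif k κ ^ _ * _) = _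
  have e3 : unif k κ ^ θ * unif k κ ^ expo q d θ i j * unif k κ ^ ((1 + q * θ) * q ^ i)
      = unif k κ ^ (θ * q ^ j) * unif k κ ^ (1 + q * θ) := by
    rw [← pow_add, ← pow_add, ← pow_add]
    congr 1
    linarith
  rw [← pow_mul, ← pow_mul]
  linear_combination algebraMap k κ (α j) * T ^ q ^ i * e3

end Wild


section Wild2

variable {k : Type*} [Field k] {q d : ℕ} {α : ℕ → k}
variable {κ : Type*} [Field κ] [Algebra (PowerSeries k) κ] [IsFractionRing (PowerSeries k) κ]

/-- `c` is a unit of the valuation ring `k⟦U⟧` of `κ = k((U))`. -/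
def IsU (k : Type*) [Field k] {κ : Type*} [Field κ] [Algebra (PowerSeries k) κ] (c : κ) : Prop :=
  ∃ u : PowerSeries k, IsUnit u ∧ algebraMap (PowerSeries k) κ u = c

omit [IsFractionRing (PowerSeries k) κ] in
theorem IsU.mul {a b : κ} (ha : IsU k a) (hb : IsU k b) : IsU k (a * b) := by
  obtain ⟨u, hu, rfl⟩ := ha
  obtain ⟨v, hv, rfl⟩ := hb
  exact ⟨u * v, hu.mul hv, map_mul _ _ _⟩

omit [IsFractionRing (PowerSeries k) κ] in
theorem IsU.one : IsU k (1 : κ) := ⟨1, isUnit_one, map_one _⟩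

omit [IsFractionRing (PowerSeries k) κ] in
theorem IsU.pow {a : κ} (ha : IsU k a) (n : ℕ) : IsU k (a ^ n) := by
  obtain ⟨u, hu, rfl⟩ := ha
  exact ⟨u ^ n, hu.pow n, map_pow _ _ _⟩

omit [IsFractionRing (PowerSeries k) κ] in
theorem IsU.prod {ι : Type*} (s : Finset ι) (f : ι → κ) (hf : ∀ i ∈ s, IsU k (f i)) :
    IsU k (∏ i ∈ s, f i) :=
  Finset.prod_induction f (IsU k) (fun _ _ => IsU.mul) IsU.one hf

omit [IsFractionRing (PowerSeries k) κ] in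
theorem isU_const [Algebra k κ] [IsScalarTower k (PowerSeries k) κ] {c : k} (hc : c ≠ 0) :
    IsU k (algebraMap k κ c) := by
  refine ⟨algebraMap k (PowerSeries k) c, (IsUnit.mk0 c hc).map _, ?_⟩
  rw [← IsScalarTower.algebraMap_apply]

theorem IsU.ne_zero {a : κ} (ha : IsU k a) : a ≠ 0 := by
  obtain ⟨u, hu, rfl⟩ := ha
  intro e
  rw [← map_zero (algebraMap (PowerSeries k) κ)] at e
  exact hu.ne_zero (IsFractionRing.injective (PowerSeries k) κ e)

theorem order_of_isUnit {u : PowerSeries k} (hu : IsUnit u) : u.order = 0 := by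
  obtain ⟨v, hv⟩ := hu.exists_right_inv
  have := congrArg PowerSeries.order hv
  rw [PowerSeries.order_mul, PowerSeries.order_one] at this
  exact (add_eq_zero.1 this).1

/-- Valuations: if `c ^ N * U ^ n` is a unit then `N` divides `n`. -/
theorem dvd_of_isU {c : κ} {N n : ℕ} (hc : IsU k (c ^ N * unif k κ ^ n)) : N ∣ n := by
  have hinj := IsFractionRing.injective (PowerSeries k) κ
  obtain ⟨a, b, hb, rfl⟩ := IsFractionRing.div_surjective (PowerSeries k) c
  have hb0 : b ≠ 0 := nonZeroDivisors.ne_zero hb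
  have hb1 : algebraMap (PowerSeries k) κ b ≠ 0 := by
    simpa using hb0
  rcases Nat.eq_zero_or_pos N with rfl | hN
  · obtain ⟨u, hu, e⟩ := hc
    rw [pow_zero, one_mul, unif, ← map_pow] at e
    have := congrArg PowerSeries.order (hinj e)
    rw [order_of_isUnit hu, PowerSeries.order_X_pow] at this
    have h0 : n = 0 := by exact_mod_cast this.symm
    simp [h0]
  obtain ⟨u, hu, e⟩ := hc
  have ha0 : a ≠ 0 := by
    rintro rfl
    rw [map_zero, zero_div, zero_pow hN.ne', zero_mul] at e
    exact hu.ne_zero (hinj (by rw [e, map_zero]))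
  have e2 : u * b ^ N = a ^ N * PowerSeries.X ^ n := by
    apply hinj
    simp only [map_mul, map_pow]
    rw [e, unif, div_pow]
    field_simp
  have e3 := congrArg PowerSeries.order e2
  rw [PowerSeries.order_mul, PowerSeries.order_mul, order_of_isUnit hu, PowerSeries.order_X_pow,
    PowerSeries.order_pow, PowerSeries.order_pow, zero_add] at e3
  have ha1 : a.order ≠ ⊤ := by rwa [Ne, PowerSeries.order_eq_top]
  have hb2 : b.order ≠ ⊤ := by rwa [Ne, PowerSeries.order_eq_top]
  lift a.order to ℕ using ha1 with x
  lift b.order to ℕ using hb2 with y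
  have e4 : N * y = N * x + n := by
    have := e3
    simp only [nsmul_eq_mul] at this
    exact_mod_cast this
  exact (Nat.dvd_add_right (Dvd.intro x rfl)).1 (e4 ▸ Dvd.intro y rfl)

theorem card_roots_additive [IsAlgClosed k] {N : ℕ} (hN : IsQ N k) {a : k} (ha : a ≠ 0) :
    ∃ C : Finset k, C.card = N ∧ ∀ c, c ∈ C ↔ c ^ N = a * c := by
  classical
  let P : k[X] := X ^ N - Polynomial.C a * X
  have h2 := hN.two_le
  have hd : P.natDegree = N := by
    rw [natDegree_sub_eq_left_of_natDegree_lt, natDegree_X_pow]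
    rw [natDegree_X_pow]
    exact (natDegree_C_mul_le a X).trans_lt (by rw [natDegree_X]; omega)
  have hP : P ≠ 0 := by
    intro e
    rw [e, natDegree_zero] at hd
    omega
  have hsep : P.Separable := by
    have hder : derivative P = Polynomial.C (-a) := by
      simp [P, derivative_X_pow, hN.cast_eq_zero]
    refine ⟨0, Polynomial.C (-a)⁻¹, ?_⟩
    rw [hder, zero_mul, zero_add, ← C_mul, inv_mul_cancel₀ (neg_ne_zero.2 ha), C_1]
  refine ⟨P.roots.toFinset, ?_, fun c => ?_⟩
  · rw [Multiset.toFinset_card_of_nodup (nodup_roots hsep),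
      ← (IsAlgClosed.splits P).natDegree_eq_card_roots, hd]
  · rw [Multiset.mem_toFinset, mem_roots hP]
    simp [P, sub_eq_zero]

theorem exists_artinSchreier {Ω : Type*} [Field Ω] [IsAlgClosed Ω] (hq : IsQ q Ω) (τ : Ω) :
    ∃ t : Ω, t ^ q = t + τ := by
  have h2 := hq.two_le
  let P : Polynomial Ω := X ^ q - (X + Polynomial.C τ)
  have hd : P.natDegree = q := by
    rw [natDegree_sub_eq_left_of_natDegree_lt, natDegree_X_pow]
    rw [natDegree_X_pow, natDegree_X_add_C]
    omega
  obtain ⟨t, ht⟩ := IsAlgClosed.exists_root P (by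
    intro e
    have := natDegree_eq_zero_iff_degree_le_zero.2 e.le
    omega)
  exact ⟨t, by simpa [P, IsRoot, sub_eq_zero] using ht⟩

variable [Algebra k κ] [IsScalarTower k (PowerSeries k) κ]
variable {Ω : Type*} [Field Ω] [IsAlgClosed Ω] [Algebra κ Ω] [Algebra k Ω] [IsScalarTower k κ Ω]

/-- Local description of all roots: with `l = U ^ θ`, every root `y` satisfies
`(y / l) ^ q - y / l = T` with `T` in the ground field and `T * U ^ (1 + q θ)` a unit unless `T = 0`. -/
theorem exists_tau [IsAlgClosed k] (h : Setup q d α) {θ : ℕ} (hθ : θ * q + 1 = θ + q ^ (d - 1))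
    {l : κ} (hl : l = unif k κ ^ θ) {y : Ω}
    (hy : y ∈ V q d α (algebraMap κ Ω (lev q d α l / l ^ q))) :
    ∃ T : κ, (y / algebraMap κ Ω l) ^ q = y / algebraMap κ Ω l + algebraMap κ Ω T ∧
      (T = 0 ∨ IsU k (T * unif k κ ^ (1 + q * θ))) := by
  classical
  have h3 := h.three_le
  have hU := unif_ne_zero (k := k) (κ := κ)
  have hl0 : l ≠ 0 := by rw [hl]; exact pow_ne_zero _ hU
  have hL : IsQ q Ω := h.isQ.of_algebra
  obtain ⟨C, hC, hCm⟩ := card_roots_additive (h.isQ.pow (by omega : d - 1 ≠ 0)) h.zero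
  have hex := fun c (hc : c ^ q ^ (d - 1) = α 0 * c) => exists_tau_hat h θ hc
  choose! τ h1 h2 h4 using hex
  let T : k → κ := fun c => algebraMap (PowerSeries k) κ (τ c) / unif k κ ^ (1 + q * θ)
  have hT : ∀ c, T c * unif k κ ^ (1 + q * θ) = algebraMap (PowerSeries k) κ (τ c) := fun c =>
    div_mul_cancel₀ _ (pow_ne_zero _ hU)
  choose t ht using fun c => exists_artinSchreier hL (algebraMap κ Ω (T c))
  have hlΩ : algebraMap κ Ω l ≠ 0 := by simpa using hl0
  have hmap : ∀ c : k, algebraMap κ Ω (algebraMap k κ c) = algebraMap k Ω c := fun c =>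
    (IsScalarTower.algebraMap_apply k κ Ω c).symm
  let g : k × k → Ω := fun c => algebraMap κ Ω l * (t c.1 + algebraMap k Ω c.2)
  have hgt : ∀ c : k, ∀ b ∈ Fq k q, (t c + algebraMap k Ω b) ^ q =
      (t c + algebraMap k Ω b) + algebraMap κ Ω (T c) := by
    intro c b hb
    rw [hL.add_pow, ht, ← map_pow, (mem_Fq h.isQ).1 hb]
    ring
  have hgV : ∀ c ∈ C ×ˢ Fq k q, g c ∈ V q d α (algebraMap κ Ω (lev q d α l / l ^ q)) := by
    rintro ⟨c, b⟩ hcb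
    rw [Finset.mem_product] at hcb
    have hc := (hCm c).1 hcb.1
    have e := tau_eq h hθ (h4 c hc) hl (hT c)
    have e' := congrArg (algebraMap κ Ω) e
    simp only [map_mul, map_sum, map_pow, hmap] at e'
    have := mul_mem_V h hlΩ (hgt c b hcb.2) e'
    rwa [← lev_map (algebraMap κ Ω) hmap, ← map_pow, ← map_div₀] at this
  have hginj : Set.InjOn g (C ×ˢ Fq k q : Finset (k × k)) := by
    rintro ⟨c, b⟩ hcb ⟨c', b'⟩ hcb' e
    rw [Finset.mem_coe, Finset.mem_product] at hcb hcb'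
    have e1 := mul_left_cancel₀ hlΩ e
    simp only at e1
    have e2 := hgt c b hcb.2
    rw [e1, hgt c' b' hcb'.2] at e2
    have e3 := (algebraMap κ Ω).injective (add_left_cancel e2)
    have e4 : τ c' = τ c := by
      apply IsFractionRing.injective (PowerSeries k) κ
      rw [← hT, ← hT, e3]
    have e5 : c = c' := by
      rw [← h1 c ((hCm c).1 hcb.1), ← h1 c' ((hCm c').1 hcb'.1), e4]
    subst e5
    have e6 := (algebraMap k Ω).injective (add_left_cancel e1)
    rw [e6]
  have hsub : (((C ×ˢ Fq k q).image g : Finset Ω) : Set Ω) ⊆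
      V q d α (algebraMap κ Ω (lev q d α l / l ^ q)) := by
    intro z hz
    rw [Finset.coe_image] at hz
    obtain ⟨c, hc, rfl⟩ := hz
    exact hgV c hc
  have heq := Set.eq_of_subset_of_ncard_le hsub (by
    rw [V_ncard h (IsAlgClosed.splits _), Set.ncard_coe_finset, Finset.card_image_of_injOn hginj,
      Finset.card_product, hC, card_Fq h.isQ, ← pow_succ]
    exact (congrArg (q ^ ·) (by omega : d = d - 1 + 1)).le) (V_finite h _)
  rw [← heq, Finset.coe_image] at hy
  obtain ⟨⟨c, b⟩, hcb, rfl⟩ := hy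
  rw [Finset.mem_coe, Finset.mem_product] at hcb
  refine ⟨T c, ?_, ?_⟩
  · rw [show g (c, b) / algebraMap κ Ω l = t c + algebraMap k Ω b from
      mul_div_cancel_left₀ _ hlΩ]
    exact hgt c b hcb.2
  · have hc := (hCm c).1 hcb.1
    by_cases hc0 : c = 0
    · left
      simp only [T]
      rw [h2 c hc hc0, map_zero, zero_div]
    · right
      rw [hT]
      refine ⟨τ c, ?_, rfl⟩
      rw [PowerSeries.isUnit_iff_constantCoeff, h1 c hc]
      exact IsUnit.mk0 c hc0

end Wild2


section Wild3

variable {k : Type*} [Field k] {q d : ℕ} {α : ℕ → k}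
variable {κ : Type*} [Field κ] [Algebra (PowerSeries k) κ] [IsFractionRing (PowerSeries k) κ]

omit [IsFractionRing (PowerSeries k) κ] in
theorem isIntegral_of_rel {M : Type*} [Field M] [Algebra (PowerSeries k) M] {x : M}
    {a b : PowerSeries k} {n m : ℕ} (hm : m < n) (hn : n ≠ 0)
    (e : x ^ n = algebraMap _ M a * x ^ m + algebraMap _ M b) :
    IsIntegral (PowerSeries k) x := by
  refine ⟨X ^ n - (C a * X ^ m + C b), ?_, ?_⟩
  · apply monic_X_pow_sub
    refine (degree_add_le _ _).trans_lt (max_lt ?_ ?_)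
    · refine (degree_C_mul_X_pow_le _ _).trans_lt ?_
      exact_mod_cast hm
    · refine degree_C_le.trans_lt ?_
      exact_mod_cast Nat.pos_of_ne_zero hn
  · rw [eval₂_sub, eval₂_X_pow, eval₂_add, eval₂_mul, eval₂_C, eval₂_C, eval₂_X_pow, e, sub_self]

/-- If `t ^ q = t + T` with `T` of negative valuation, then `t ^ q / T` is a unit in the integral
closure of `k⟦U⟧`; this computes the norm of `z = l * t` up to a unit. -/
theorem norm_isU {M : Type*} [Field M] [Algebra κ M] [FiniteDimensional κ M] (hq : 2 ≤ q)
    {θ : ℕ} {l : κ} (hl : l = unif k κ ^ θ) {T : κ} (hT : IsU k (T * unif k κ ^ (1 + q * θ)))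
    {z : M} (hz : (z / algebraMap κ M l) ^ q = z / algebraMap κ M l + algebraMap κ M T) :
    IsU k (Algebra.norm κ z ^ q * unif k κ ^ Module.finrank κ M) := by
  let _ : Algebra (PowerSeries k) M :=
    ((algebraMap κ M).comp (algebraMap (PowerSeries k) κ)).toAlgebra
  have : IsScalarTower (PowerSeries k) κ M := IsScalarTower.of_algebraMap_eq fun _ => rfl
  have hinj := IsFractionRing.injective (PowerSeries k) κ
  have hU := unif_ne_zero (k := k) (κ := κ)
  have hl0 : l ≠ 0 := by rw [hl]; exact pow_ne_zero _ hU
  have hlM : algebraMap κ M l ≠ 0 := by simpa using hl0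
  set t := z / algebraMap κ M l with ht
  have hzt : z = algebraMap κ M l * t := by rw [ht]; field_simp
  have hT0 : T ≠ 0 := left_ne_zero_of_mul hT.ne_zero
  have hTM : algebraMap κ M T ≠ 0 := by simpa using hT0
  have ht0 : t ≠ 0 := by
    intro e
    rw [e, zero_pow (by omega), zero_add] at hz
    exact hTM hz.symm
  obtain ⟨u, hu, hue⟩ := hT
  obtain ⟨v, hv⟩ := hu.exists_right_inv
  -- the inverse of `T` lies in the valuation ring
  let a : PowerSeries k := v * PowerSeries.X ^ (1 + q * θ)
  have ha : algebraMap (PowerSeries k) M a * algebraMap κ M T = 1 := by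
    have e1 : algebraMap (PowerSeries k) κ a * T = 1 := by
      have e2 := congrArg (algebraMap (PowerSeries k) κ) hv
      rw [map_mul, hue, map_one] at e2
      simp only [a, map_mul, map_pow]
      rw [← e2, unif]
      ring
    rw [IsScalarTower.algebraMap_apply (PowerSeries k) κ M, ← map_mul, e1, map_one]
  have hη : IsIntegral (PowerSeries k) (1 / t) := by
    refine isIntegral_of_rel (a := -a) (b := a) (n := q) (m := q - 1) (by omega) (by omega) ?_
    have e1 : t ^ q = t ^ (q - 1) * t := by rw [← pow_succ]; congr 1; omega
    have e2 : (1 / t) ^ q * t ^ q = 1 := by rw [← mul_pow]; field_simp; simp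
    have e3 : (1 / t) ^ (q - 1) * t ^ q = t := by
      rw [e1, ← mul_assoc, ← mul_pow]; field_simp; simp
    apply mul_right_cancel₀ (pow_ne_zero q ht0)
    rw [e2, map_neg, add_mul, mul_assoc, e3, hz]
    linear_combination -ha
  have hχ : IsIntegral (PowerSeries k) (t / algebraMap κ M T) := by
    refine isIntegral_of_rel (a := a ^ (q - 1)) (b := a ^ (q - 1)) (n := q) (m := 1)
      (by omega) (by omega) ?_
    have ha' : algebraMap (PowerSeries k) M a = 1 / algebraMap κ M T := by
      field_simp; exact ha
    have e1 : (algebraMap κ M T) ^ q = (algebraMap κ M T) ^ (q - 1) * algebraMap κ M T := by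
      rw [← pow_succ]; congr 1; omega
    rw [div_pow, hz, map_pow, ha', e1, div_pow, one_pow]
    field_simp
  have hχ1 := Algebra.isIntegral_norm κ (isIntegral_one.add hχ)
  have hη1 := Algebra.isIntegral_norm κ (isIntegral_one.sub (hη.pow (q - 1)))
  obtain ⟨w, hw⟩ := IsIntegrallyClosed.isIntegral_iff.1 hχ1
  obtain ⟨w', hw'⟩ := IsIntegrallyClosed.isIntegral_iff.1 hη1
  have hprod : (1 + t / algebraMap κ M T) * (1 - (1 / t) ^ (q - 1)) = 1 := by
    have e1 : t ^ q = t ^ (q - 1) * t := by rw [← pow_succ]; congr 1; omega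
    have e2 : t ^ (q - 1) * t = t + algebraMap κ M T := by rw [← e1, hz]
    have e3 : t ^ (q - 1) ≠ 0 := pow_ne_zero _ ht0
    have e4 : (1 / t) ^ (q - 1) = 1 / t ^ (q - 1) := by rw [div_pow, one_pow]
    rw [e4]
    field_simp
    linear_combination e2
  have hww : w * w' = 1 := by
    apply hinj
    rw [map_mul, hw, hw', ← map_mul, hprod, map_one, map_one]
  have hNw : IsU k (Algebra.norm κ (1 + t / algebraMap κ M T)) :=
    ⟨w, IsUnit.of_mul_eq_one _ hww, hw⟩
  have htq : t ^ q = algebraMap κ M T * (1 + t / algebraMap κ M T) := by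
    rw [hz]; field_simp; ring
  have hN := congrArg (Algebra.norm κ) htq
  rw [map_pow, map_mul, Algebra.norm_algebraMap] at hN
  have : Algebra.norm κ z ^ q * unif k κ ^ Module.finrank κ M =
      (T * unif k κ ^ (1 + q * θ)) ^ Module.finrank κ M *
        Algebra.norm κ (1 + t / algebraMap κ M T) := by
    rw [hzt, map_mul, Algebra.norm_algebraMap, mul_pow, hN, hl]
    ring
  rw [this]
  exact (IsU.pow ⟨u, hu, hue⟩ _).mul hNw

variable [Algebra k κ] [IsScalarTower k (PowerSeries k) κ]
variable {Ω : Type*} [Field Ω] [IsAlgClosed Ω] [Algebra κ Ω] [Algebra k Ω] [IsScalarTower k κ Ω]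

omit [Algebra (PowerSeries k) κ] [IsFractionRing (PowerSeries k) κ] [Algebra k κ]
  [IsScalarTower k (PowerSeries k) κ] [IsAlgClosed Ω] [IsScalarTower k κ Ω] in
theorem artinSchreier_conj [IsAlgClosed k] (hq : IsQ q k) {M : IntermediateField κ Ω} {y : M}
    {l T : κ} (hl0 : l ≠ 0)
    (hT : ((y : Ω) / algebraMap κ Ω l) ^ q = y / algebraMap κ Ω l + algebraMap κ Ω T)
    (δ : M →ₐ[κ] Ω) : ∃ c : k, c ^ q = c ∧ δ y = y + algebraMap k Ω c * algebraMap κ Ω l := by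
  have hΩ : IsQ q Ω := hq.of_algebra
  have hlΩ : algebraMap κ Ω l ≠ 0 := by simpa using hl0
  have hTM : (y / algebraMap κ M l) ^ q = y / algebraMap κ M l + algebraMap κ M T :=
    Subtype.ext (by simpa using hT)
  have e := congrArg δ hTM
  simp only [map_pow, map_div₀, map_add, AlgHom.commutes] at e
  obtain ⟨c, hc, hce⟩ := exists_Fq_of_pow_eq (k := k) hq
    (y := δ y / algebraMap κ Ω l - y / algebraMap κ Ω l) (by rw [hΩ.sub_pow, e, hT]; ring)
  refine ⟨c, hc, ?_⟩
  rw [← hce]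
  field_simp
  ring

/-- Wildness at `s = ∞`: if the roots `x`, `y` and `l = U ^ θ` are independent, some element of
the decomposition group (which fixes `l`) fixes `x` and maps `y` to `y + l`. -/
theorem exists_transvection [IsAlgClosed k] [Algebra.IsAlgebraic κ Ω] (h : Setup q d α) {θ : ℕ}
    (hθ : θ * q + 1 = θ + q ^ (d - 1)) {l : κ} (hl : l = unif k κ ^ θ) {x y : Ω}
    (hx : x ∈ V q d α (algebraMap κ Ω (lev q d α l / l ^ q)))
    (hy : y ∈ V q d α (algebraMap κ Ω (lev q d α l / l ^ q)))
    (hxyl : Ind3 k q x y (algebraMap κ Ω l)) :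
    ∃ δ : Ω →ₐ[κ] Ω, δ x = x ∧ δ y = y + algebraMap κ Ω l := by
  classical
  have hq := h.isQ
  have hΩ : IsQ q Ω := hq.of_algebra
  have hq2 := hq.two_le
  have hU := unif_ne_zero (k := k) (κ := κ)
  have hl0 : l ≠ 0 := by rw [hl]; exact pow_ne_zero _ hU
  have hlΩ : algebraMap κ Ω l ≠ 0 := by simpa using hl0
  have hmap : ∀ c : k, algebraMap κ Ω (algebraMap k κ c) = algebraMap k Ω c := fun c =>
    (IsScalarTower.algebraMap_apply k κ Ω c).symm
  set s : κ := lev q d α l / l ^ q with hs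
  have hsep : ∀ z ∈ V q d α (algebraMap κ Ω s), IsSeparable κ z := by
    intro z hz
    refine (fam_separable h s).of_dvd (minpoly.dvd κ z ?_)
    rw [aeval_def, eval₂_eq_eval_map, fam_map _ hmap]
    exact mem_V_iff_isRoot.1 hz
  let M : IntermediateField κ Ω := IntermediateField.adjoin κ {x, y}
  have hsepM : Algebra.IsSeparable κ M := by
    rw [IntermediateField.isSeparable_adjoin_iff_isSeparable]
    rintro z (rfl | rfl)
    exacts [hsep _ hx, hsep _ hy]
  have hfin : FiniteDimensional κ M := by
    apply IntermediateField.finiteDimensional_adjoin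
    intro z _
    exact Algebra.IsIntegral.isIntegral z
  let x' : M := ⟨x, IntermediateField.subset_adjoin κ _ (by simp)⟩
  let y' : M := ⟨y, IntermediateField.subset_adjoin κ _ (by simp)⟩
  have hmapM : ∀ c : k, algebraMap κ M (algebraMap k κ c) = algebraMap k M c := fun c =>
    (IsScalarTower.algebraMap_apply k κ M c).symm
  set m := Module.finrank κ M with hm
  have hm0 : 0 < m := Module.finrank_pos
  -- norms of the elements of `M` that are roots outside the line of `l`
  have hnorm : ∀ z : M, (z : Ω) ∈ V q d α (algebraMap κ Ω s) →
      (∀ c : k, c ^ q = c → (z : Ω) ≠ algebraMap k Ω c * algebraMap κ Ω l) →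
      IsU k (Algebra.norm κ z ^ q * unif k κ ^ m) := by
    intro z hz hzl
    obtain ⟨T, hT1, hT2⟩ := exists_tau h hθ hl hz
    have hTU : IsU k (T * unif k κ ^ (1 + q * θ)) := by
      refine hT2.resolve_left fun h0 => ?_
      rw [h0, map_zero, add_zero] at hT1
      obtain ⟨c, hc, e⟩ := exists_Fq_of_pow_eq (k := k) hq hT1
      refine hzl c hc ?_
      rw [← e]
      field_simp
    exact norm_isU hq2 hl hTU (Subtype.ext (by simpa using hT1))
  have hxl : ∀ c : k, c ^ q = c → x ≠ algebraMap k Ω c * algebraMap κ Ω l := by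
    intro c hc e
    have := (hxyl 1 0 (-c) (one_pow q) (zero_pow hq.ne_zero) (by rw [hq.neg_pow, hc])
      (by rw [e]; simp)).1
    exact one_ne_zero this
  have hyl : ∀ b ∈ Fq k q, ∀ c : k, c ^ q = c →
      y - algebraMap k Ω b * x ≠ algebraMap k Ω c * algebraMap κ Ω l := by
    intro b hb c hc e
    have := (hxyl (-b) 1 (-c) (by rw [hq.neg_pow, (mem_Fq hq).1 hb]) (one_pow q)
      (by rw [hq.neg_pow, hc]) (by
        rw [map_neg, map_neg, map_one]; linear_combination e)).2.1
    exact one_ne_zero this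
  have hNx := hnorm x' hx hxl
  have hNy : ∀ b ∈ Fq k q, IsU k (Algebra.norm κ (y' - algebraMap k M b * x') ^ q * unif k κ ^ m) :=
    fun b hb => hnorm _ (sub_mem_V h hy (smul_mem_V ((mem_Fq hq).1 hb) hx)) (hyl b hb)
  -- the Moore determinant of `x` and `y` is a `q`-th power up to a constant
  choose β hβ using fun j => IsAlgClosed.exists_pow_nat_eq (α j) hq.pos
  let f1 : M → M := fun z => ∑ j ∈ Finset.Icc 2 d, algebraMap k M (β j) * z ^ q ^ (j - 1)
  have hM : IsQ q M := hq.of_algebra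
  have hf1 : ∀ z : M, (z : Ω) ∈ V q d α (algebraMap κ Ω s) →
      f1 z ^ q = algebraMap κ M s * z ^ q - algebraMap k M (α 0) * z := by
    intro z hz
    have hz' : z ∈ V q d α (algebraMap κ M s) := by
      rw [mem_V]
      apply (algebraMap M Ω).injective
      exact (lev_map (q := q) (d := d) (α := α) (algebraMap M Ω) (fun c => rfl) z).trans hz
    rw [← mem_V.1 hz', lev_eq h]
    simp only [f1, hM.sum_pow]
    rw [add_sub_cancel_left]
    refine Finset.sum_congr rfl fun j hj => ?_
    have hj2 := (Finset.mem_Icc.1 hj).1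
    rw [mul_pow, ← map_pow, hβ, ← pow_mul, ← pow_succ]
    congr 3
    omega
  let w : M := x' * f1 y' - y' * f1 x'
  have hw : w ^ q = algebraMap κ M (algebraMap k κ (α 0)) *
      (x' * ∏ c ∈ Fq k q, (y' - algebraMap k M c * x')) := by
    rw [prod_sub_Fq hq, hM.sub_pow, mul_pow, mul_pow, hf1 x' hx, hf1 y' hy, hmapM]
    ring
  have hNw := congrArg (Algebra.norm κ) hw
  rw [map_pow, map_mul, map_mul, map_prod, Algebra.norm_algebraMap] at hNw
  have hdvd : q ^ 2 ∣ m * (q + 1) := by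
    apply dvd_of_isU (k := k) (c := Algebra.norm κ w)
    have e : Algebra.norm κ w ^ q ^ 2 * unif k κ ^ (m * (q + 1)) =
        (algebraMap k κ (α 0) ^ m) ^ q * (Algebra.norm κ x' ^ q * unif k κ ^ m) *
          ∏ c ∈ Fq k q, (Algebra.norm κ (y' - algebraMap k M c * x') ^ q * unif k κ ^ m) := by
      rw [Finset.prod_mul_distrib, Finset.prod_const, card_Fq hq, Finset.prod_pow,
        show q ^ 2 = q * q by ring, pow_mul, hNw]
      ring
    rw [e]
    exact ((((isU_const h.zero).pow m).pow q).mul hNx).mul (IsU.prod _ _ hNy)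
  have hdvd2 : q ^ 2 ∣ m := by
    refine Nat.Coprime.dvd_of_dvd_mul_right ?_ hdvd
    exact Nat.Coprime.pow_left 2 (by simp)
  -- the embeddings of `M` are determined by the translations of `x` and `y`
  obtain ⟨Tx, hTx, -⟩ := exists_tau h hθ hl hx
  obtain ⟨Ty, hTy, -⟩ := exists_tau h hθ hl hy
  have hex : ∀ δ : M →ₐ[κ] Ω, ∃ c : Fq k q × Fq k q,
      δ x' = x + algebraMap k Ω c.1 * algebraMap κ Ω l ∧
      δ y' = y + algebraMap k Ω c.2 * algebraMap κ Ω l := by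
    intro δ
    obtain ⟨a, ha, hae⟩ := artinSchreier_conj hq (M := M) (y := x') hl0 hTx δ
    obtain ⟨b, hb, hbe⟩ := artinSchreier_conj hq (M := M) (y := y') hl0 hTy δ
    exact ⟨(⟨a, (mem_Fq hq).2 ha⟩, ⟨b, (mem_Fq hq).2 hb⟩), hae, hbe⟩
  choose Φ hΦ1 hΦ2 using hex
  have hinj : Function.Injective Φ := by
    intro δ δ' e
    apply IntermediateField.adjoin_algHom_ext
    rintro z hz
    rcases hz with rfl | rfl
    · change δ x' = δ' x'
      rw [hΦ1, hΦ1, e]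
    · change δ y' = δ' y'
      rw [hΦ2, hΦ2, e]
  have hcard : Fintype.card (M →ₐ[κ] Ω) = m := AlgHom.card κ M Ω
  have hbij : Function.Bijective Φ := by
    refine hinj.bijective_of_nat_card_le ?_
    rw [Nat.card_eq_fintype_card, Nat.card_eq_fintype_card, hcard, Fintype.card_prod,
      Fintype.card_coe, card_Fq hq, ← pow_two]
    exact Nat.le_of_dvd hm0 hdvd2
  obtain ⟨δ, hδ⟩ := hbij.surjective (⟨0, zero_mem_Fq hq⟩, ⟨1, one_mem_Fq hq⟩)
  obtain ⟨δ', hδ'⟩ := IsAlgClosed.surjective_domRestrict_of_isAlgebraic (K := κ) (L := M) (M := Ω)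
    (E := Ω) δ
  have hres : ∀ z : M, δ' z = δ z := fun z => by rw [← hδ']; rfl
  refine ⟨δ', ?_, ?_⟩
  · have := hres x'
    rw [hΦ1, hδ] at this
    simpa using this
  · have := hres y'
    rw [hΦ2, hδ] at this
    simpa using this

end Wild3


/-! ### Transitivity on independent pairs of roots -/

section TwoTransMain

variable {k : Type*} [Field k] [IsAlgClosed k] {q d : ℕ} {α : ℕ → k}
  {K0 K : Type*} [Field K0] [Field K]
  [Algebra k K0] [Algebra k[X] K0] [IsFractionRing k[X] K0] [IsScalarTower k k[X] K0]
  [Algebra K0 K] [Algebra k K] [IsScalarTower k K0 K]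

/-- The Galois group of `f - s X ^ q` over `k(s)` is transitive on pairs of roots that are
linearly independent over `𝔽_q`. -/
theorem two_trans (h : Setup q d α)
    [IsSplittingField K0 K (fam q d α (algebraMap k[X] K0 X))] [FiniteDimensional K0 K]
    [IsGalois K0 K] {x y x' y' : K}
    (hx : x ∈ V q d α (algebraMap K0 K (algebraMap k[X] K0 X)))
    (hy : y ∈ V q d α (algebraMap K0 K (algebraMap k[X] K0 X)))
    (hx' : x' ∈ V q d α (algebraMap K0 K (algebraMap k[X] K0 X)))
    (hy' : y' ∈ V q d α (algebraMap K0 K (algebraMap k[X] K0 X)))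
    (hi : Ind q x y) (hi' : Ind q x' y') : ∃ γ : Gal(K/K0), γ x = x' ∧ γ y = y' := by
  classical
  have hmapK : ∀ c : k, algebraMap K0 K (algebraMap k K0 c) = algebraMap k K c := fun c =>
    (IsScalarTower.algebraMap_apply k K0 K c).symm
  have hsplit : (fam q d α (algebraMap K0 K (algebraMap k[X] K0 X))).Splits := by
    rw [← fam_map (algebraMap K0 K) hmapK]
    exact IsSplittingField.splits K _
  let κ := FractionRing (PowerSeries k)
  let Ω := AlgebraicClosure κ
  have hmapΩ : ∀ c : k, algebraMap κ Ω (algebraMap k κ c) = algebraMap k Ω c := fun c =>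
    (IsScalarTower.algebraMap_apply k κ Ω c).symm
  obtain ⟨θ, hθ, hθ0⟩ := exists_theta h.isQ.two_le h.three_le
  let l : κ := unif k κ ^ θ
  have hl0 : l ≠ 0 := pow_ne_zero _ unif_ne_zero
  have hlΩ : algebraMap κ Ω l ≠ 0 := by simpa using hl0
  have hlc : ∀ c : k, algebraMap k κ c ≠ l := by
    intro c e
    rw [← algebraMap_C (κ := κ) c] at e
    simp only [l, unif] at e
    rw [← map_pow] at e
    have e1 := IsFractionRing.injective (PowerSeries k) κ e
    have e2 := congrArg PowerSeries.constantCoeff e1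
    rw [PowerSeries.constantCoeff_C, map_pow, PowerSeries.constantCoeff_X, zero_pow hθ0.ne'] at e2
    rw [e2, map_zero] at e1
    exact pow_ne_zero _ PowerSeries.X_ne_zero e1.symm
  let s : κ := lev q d α l / l ^ q
  have hlV : l ∈ V q d α s := by
    rw [mem_V]
    simp only [s]
    rw [div_mul_cancel₀ _ (pow_ne_zero _ hl0)]
  have hsc : ∀ c : k, algebraMap k κ c ≠ s := by
    intro c e
    refine fam_ne_zero h c (eval₂_ne_zero_of_not_mem hlc (fam q d α c) ?_)
    rw [eval₂_eq_eval_map, fam_map (algebraMap k κ) (fun _ => rfl), e]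
    exact mem_V_iff_isRoot.1 hlV
  obtain ⟨φ0, hφ1, hφ2⟩ := exists_hom_ratfunc (K0 := K0) (algebraMap k κ) s
    (eval₂_ne_zero_of_not_mem hsc)
  obtain ⟨φ, hφ⟩ := exists_hom_split (K := K) (fam q d α (algebraMap k[X] K0 X))
    ((algebraMap κ Ω).comp φ0) (IsAlgClosed.splits _)
  have hφk : ∀ c : k, φ (algebraMap k K c) = algebraMap k Ω c := by
    intro c
    rw [← hmapK, hφ, RingHom.comp_apply, hφ1, hmapΩ]
  let φa : K →ₐ[k] Ω := { φ with commutes' := hφk }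
  have hφs : φ (algebraMap K0 K (algebraMap k[X] K0 X)) = algebraMap κ Ω s := by
    rw [hφ, RingHom.comp_apply, hφ2]
  have hφV : ∀ z ∈ V q d α (algebraMap K0 K (algebraMap k[X] K0 X)),
      φ z ∈ V q d α (algebraMap κ Ω s) := by
    intro z hz
    rw [← hφs]
    exact map_mem_V φ hφk hz
  have himg : φ '' V q d α (algebraMap K0 K (algebraMap k[X] K0 X)) = V q d α (algebraMap κ Ω s) := by
    refine Set.eq_of_subset_of_ncard_le ?_ ?_ (V_finite h _)
    · rintro _ ⟨z, hz, rfl⟩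
      exact hφV z hz
    · rw [Set.ncard_image_of_injective _ φ.injective, V_ncard h hsplit,
        V_ncard h (IsAlgClosed.splits _)]
  have hlV' : algebraMap κ Ω l ∈ V q d α (algebraMap κ Ω s) := map_mem_V _ hmapΩ hlV
  rw [← himg] at hlV'
  obtain ⟨lK, hlK, hlKe⟩ := hlV'
  have hlK0 : lK ≠ 0 := by
    rintro rfl
    rw [map_zero] at hlKe
    exact hlΩ hlKe.symm
  refine gal_two_trans h hsplit (fun a ha b hb ha0 hb0 => gal_trans ha hb ha0 hb0) hlK hlK0 ?_
    hx hy hx' hy' hi hi'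
  intro a ha b hb hab
  have h3 := hab.map φa
  change Ind3 k q (φ a) (φ b) (φ lK) at h3
  rw [hlKe] at h3
  obtain ⟨δ, hδ1, hδ2⟩ := exists_transvection h hθ rfl (hφV a ha) (hφV b hb) h3
  obtain ⟨γ, hγ⟩ := exists_gal_of_hom φ ((δ : Ω →+* Ω).comp φ) (by
    intro c
    rw [RingHom.comp_apply, hφ, RingHom.comp_apply]
    exact (δ.commutes _).symm)
  refine ⟨γ, φ.injective ?_, φ.injective ?_⟩
  · rw [← hγ]; exact hδ1
  · rw [← hγ, map_add, hlKe]; exact hδ2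

end TwoTransMain


/-! ### Degrees in a free `k[X]`-algebra -/

section Degrees

variable {k O I : Type*} [Field k] [CommRing O] [Algebra k[X] O] [Fintype I]

/-- The elements whose coordinates in the basis `b` are polynomials of degree at most `n`. -/
def Lspace (b : Module.Basis I k[X] O) (n : ℕ) : Set O := {x | ∀ i, (b.repr x i).natDegree ≤ n}

variable {b : Module.Basis I k[X] O} {n m D : ℕ} {x y : O}

omit [Fintype I] in
theorem Lspace_mono (h : n ≤ m) (hx : x ∈ Lspace b n) : x ∈ Lspace b m := fun i => (hx i).trans h

omit [Fintype I] in
theorem zero_mem_Lspace : (0 : O) ∈ Lspace b n := fun i => by simp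

omit [Fintype I] in
theorem add_mem_Lspace (hx : x ∈ Lspace b n) (hy : y ∈ Lspace b n) : x + y ∈ Lspace b n := by
  intro i
  rw [map_add, Finsupp.add_apply]
  exact (natDegree_add_le _ _).trans (max_le (hx i) (hy i))

omit [Fintype I] in
theorem sum_mem_Lspace {J : Type*} (s : Finset J) (f : J → O) (h : ∀ j ∈ s, f j ∈ Lspace b n) :
    ∑ j ∈ s, f j ∈ Lspace b n := by
  classical
  induction s using Finset.induction_on with
  | empty => simpa using zero_mem_Lspace
  | insert j s hj ih =>
    rw [Finset.sum_insert hj]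
    exact add_mem_Lspace (h j (by simp)) (ih fun i hi => h i (by simp [hi]))

omit [Fintype I] in
theorem smul_mem_Lspace {P : k[X]} (hP : P.natDegree ≤ m) (hx : x ∈ Lspace b n) :
    P • x ∈ Lspace b (m + n) := by
  intro i
  rw [map_smul, Finsupp.smul_apply, smul_eq_mul]
  exact natDegree_mul_le.trans (add_le_add hP (hx i))

omit [Fintype I] in
theorem basis_mem_Lspace (i : I) : b i ∈ Lspace b n := by
  classical
  intro j
  rw [Module.Basis.repr_self, Finsupp.single_apply]
  split_ifs <;> simp

variable (b) in
theorem exists_mem_Lspace (x : O) : ∃ n, x ∈ Lspace b n :=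
  ⟨∑ i, (b.repr x i).natDegree, fun i =>
    Finset.single_le_sum (f := fun i => (b.repr x i).natDegree) (fun _ _ => Nat.zero_le _)
      (Finset.mem_univ i)⟩

variable (b) in
/-- `D` bounds the degrees of the structure constants of the basis `b`, and of the coordinates
of `1`. -/
def MulBound (D : ℕ) : Prop := (1 : O) ∈ Lspace b D ∧ ∀ i j, b i * b j ∈ Lspace b D

omit [Fintype I] in
theorem MulBound.mono (h : MulBound b n) (hnm : n ≤ m) : MulBound b m :=
  ⟨Lspace_mono hnm h.1, fun i j => Lspace_mono hnm (h.2 i j)⟩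

variable (b) in
theorem exists_mulBound : ∃ D, MulBound b D := by
  obtain ⟨d1, h1⟩ := exists_mem_Lspace b 1
  choose f hf using fun i j => exists_mem_Lspace b (b i * b j)
  refine ⟨d1 + ∑ i, ∑ j, f i j, Lspace_mono (by omega) h1, fun i j => Lspace_mono ?_ (hf i j)⟩
  have e1 := Finset.single_le_sum (f := fun j => f i j) (fun _ _ => Nat.zero_le _)
    (Finset.mem_univ j)
  have e2 := Finset.single_le_sum (f := fun i => ∑ j, f i j) (fun _ _ => Nat.zero_le _)
    (Finset.mem_univ i)
  omega

theorem mul_mem_Lspace (hD : MulBound b D) (hx : x ∈ Lspace b n) (hy : y ∈ Lspace b m) :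
    x * y ∈ Lspace b (n + m + D) := by
  rw [← b.sum_repr x, ← b.sum_repr y, Finset.sum_mul_sum]
  refine sum_mem_Lspace _ _ fun i _ => sum_mem_Lspace _ _ fun j _ => ?_
  rw [smul_mul_smul_comm]
  exact smul_mem_Lspace (natDegree_mul_le.trans (add_le_add (hx i) (hy j))) (hD.2 i j)

/-- Products of `j + 1` factors; the exponent is shifted because `1` need not be in
`Lspace b 0`. -/
theorem pow_succ_mem_Lspace (hD : MulBound b D) (hx : x ∈ Lspace b n) (j : ℕ) :
    x ^ (j + 1) ∈ Lspace b ((j + 1) * n + j * D) := by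
  induction j with
  | zero => simpa using hx
  | succ j ih =>
    rw [pow_succ]
    refine Lspace_mono (le_of_eq ?_) (mul_mem_Lspace hD ih hx)
    ring

theorem pow_mul_mem_Lspace (hD : MulBound b D) (hx : x ∈ Lspace b n) (hy : y ∈ Lspace b m) {N : ℕ}
    (hN : N ≠ 0) : x ^ N * y ∈ Lspace b (N * (n + D) + m) := by
  obtain ⟨j, rfl⟩ := Nat.exists_eq_succ_of_ne_zero hN
  refine Lspace_mono (le_of_eq ?_) (mul_mem_Lspace hD (pow_succ_mem_Lspace hD hx j) hy)
  simp only [Nat.succ_eq_add_one]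
  ring

theorem natDegree_norm_le (hD : MulBound b D) (hx : x ∈ Lspace b n) :
    (Algebra.norm k[X] x).natDegree ≤ Fintype.card I * (n + D) := by
  classical
  rw [Algebra.norm_eq_matrix_det b, Matrix.det_apply]
  refine natDegree_sum_le_of_forall_le _ _ fun σ _ => ?_
  refine (natDegree_smul_le _ _).trans ?_
  refine (natDegree_prod_le _ _).trans ?_
  rw [← smul_eq_mul, ← Finset.card_univ]
  refine Finset.sum_le_card_nsmul _ _ _ fun i _ => ?_
  rw [Algebra.leftMulMatrix_eq_repr_mul]
  exact Lspace_mono (by omega) (mul_mem_Lspace hD hx (basis_mem_Lspace (n := 0) i)) _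

end Degrees


/-! ### Independence of `q ^ ν`-th powers in `k⟦X⟧` -/

section Indep

variable {k J : Type*} [Field k] [Fintype J] {q : ℕ}

/-- A finite linearly independent family of power series stays independent modulo a large power
of `X`. -/
theorem exists_trunc_indep (u : J → PowerSeries k) (hu : LinearIndependent k u) :
    ∃ n, ∀ c : J → k, (PowerSeries.X : PowerSeries k) ^ n ∣ ∑ j, c j • u j → c = 0 := by
  let W : ℕ →o (Submodule k (J → k))ᵒᵈ :=
    { toFun := fun n => OrderDual.toDual
        { carrier := {c | (PowerSeries.X : PowerSeries k) ^ n ∣ ∑ j, c j • u j}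
          add_mem' := by
            intro c c' hc hc'
            simp only [Set.mem_ofPred_eq, Pi.add_apply, add_smul, Finset.sum_add_distrib] at *
            exact dvd_add hc hc'
          zero_mem' := by simp
          smul_mem' := by
            intro r c hc
            simp only [Set.mem_ofPred_eq, Pi.smul_apply, smul_eq_mul, mul_smul] at *
            rw [← Finset.smul_sum]
            exact dvd_smul_of_dvd _ hc }
      monotone' := fun n m hnm c hc => (pow_dvd_pow _ hnm).trans hc }
  obtain ⟨n, hn⟩ := IsArtinian.monotone_stabilizes W
  refine ⟨n, fun c hc => ?_⟩
  have h0 : ∑ j, c j • u j = 0 := by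
    refine eq_zero_of_X_pow_dvd fun m => ?_
    rcases le_total n m with h | h
    · have h1 : c ∈ OrderDual.ofDual (W n) := hc
      rw [hn m h] at h1
      exact h1
    · exact (pow_dvd_pow _ h).trans hc
  funext j
  exact Fintype.linearIndependent_iff.1 hu c h0 j

/-- Power series which are independent modulo `X ^ n` are independent over the
`q ^ ν`-th powers, as soon as `q ^ ν ≥ n`. -/
theorem eq_zero_of_sum_pow (hq : IsQ q k) {u : J → PowerSeries k} {n ν : ℕ}
    (hu : ∀ c : J → k, (PowerSeries.X : PowerSeries k) ^ n ∣ ∑ j, c j • u j → c = 0)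
    (hn : n ≤ q ^ ν) {G : J → PowerSeries k} (h : ∑ j, u j * G j ^ q ^ ν = 0) (j : J) :
    G j = 0 := by
  have hqP : IsQ q (PowerSeries k) := hq.of_algebra
  refine eq_zero_of_X_pow_dvd fun r => ?_
  revert j
  induction r with
  | zero => simp
  | succ r ih =>
    choose G' hG' using ih
    have h1 : ∑ j, u j * G' j ^ q ^ ν = 0 := by
      have e : ∑ j, u j * G j ^ q ^ ν =
          (PowerSeries.X : PowerSeries k) ^ (r * q ^ ν) * ∑ j, u j * G' j ^ q ^ ν := by
        rw [Finset.mul_sum]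
        refine Finset.sum_congr rfl fun j _ => ?_
        rw [hG' j, mul_pow, ← pow_mul]
        ring
      rw [h] at e
      exact (mul_eq_zero.1 e.symm).resolve_left (pow_ne_zero _ PowerSeries.X_ne_zero)
    -- only the constant terms survive modulo `X ^ q ^ ν`
    have h2 : ∀ j, ∃ H : PowerSeries k,
        G' j = PowerSeries.C (PowerSeries.constantCoeff (G' j)) + PowerSeries.X * H := by
      intro j
      have : (PowerSeries.X : PowerSeries k) ∣
          G' j - PowerSeries.C (PowerSeries.constantCoeff (G' j)) := by
        rw [PowerSeries.X_dvd_iff]; simp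
      obtain ⟨H, hH⟩ := this
      exact ⟨H, by rw [← hH]; ring⟩
    choose H hH using h2
    have h3 := hu (fun j => PowerSeries.constantCoeff (G' j) ^ q ^ ν) (by
      have e : ∑ j, (PowerSeries.constantCoeff (G' j) ^ q ^ ν) • u j =
          -((PowerSeries.X : PowerSeries k) ^ q ^ ν * ∑ j, u j * H j ^ q ^ ν) := by
        rw [eq_neg_iff_add_eq_zero, ← h1, Finset.mul_sum, ← Finset.sum_add_distrib]
        refine Finset.sum_congr rfl fun j _ => ?_
        conv_rhs => rw [hH j, hqP.add_pow_pow, mul_pow, ← map_pow]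
        rw [PowerSeries.smul_eq_C_mul]
        ring
      rw [e, dvd_neg]
      exact (pow_dvd_pow _ hn).trans (dvd_mul_right _ _))
    intro j
    have h4 : PowerSeries.constantCoeff (G' j) = 0 :=
      eq_zero_of_pow_eq_zero (congrFun h3 j)
    rw [hG' j, hH j, h4, map_zero, zero_add, ← mul_assoc, ← pow_succ]
    exact dvd_mul_right _ _

end Indep

/-! ### The counting bound -/

section Count

variable {k O I : Type*} [Field k] [CommRing O] [Algebra k[X] O] [Fintype I] {q D : ℕ}
variable {b : Module.Basis I k[X] O}

/-- Linear algebra: more elements of `Lspace b m` than its dimension are dependent. -/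
theorem exists_relation {W : Type*} [Fintype W] {w : W → O} {m : ℕ} (hw : ∀ j, w j ∈ Lspace b m)
    (hcard : Fintype.card I * (m + 1) < Fintype.card W) :
    ∃ c : W → k, c ≠ 0 ∧ ∑ j, (C (c j) : k[X]) • w j = 0 := by
  let v : W → (I × Fin (m + 1) → k) := fun j p => (b.repr (w j) p.1).coeff p.2
  have hv : ¬ LinearIndependent k v := by
    intro h
    have := h.fintype_card_le_finrank
    rw [Module.finrank_fintype_fun_eq_card, Fintype.card_prod, Fintype.card_fin] at this
    omega
  obtain ⟨c, hc, j, hj⟩ := Fintype.not_linearIndependent_iff.1 hv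
  refine ⟨c, fun e => hj (by rw [e]; rfl), ?_⟩
  apply b.repr.injective
  ext i t
  rw [map_zero, map_sum, Finsupp.finsetSum_apply, finsetSum_coeff]
  simp only [map_smul, Finsupp.smul_apply, smul_eq_mul, coeff_C_mul, Finsupp.coe_zero,
    Pi.zero_apply, coeff_zero]
  rcases lt_or_ge m t with h | h
  · refine Finset.sum_eq_zero fun j _ => ?_
    rw [coeff_eq_zero_of_natDegree_lt ((hw j i).trans_lt h), mul_zero]
  · have := congrFun hc (i, ⟨t, by omega⟩)
    simpa [v] using this

variable (b) in
/-- The basis `s ^ t * b i`, `t ≤ a`, of `Lspace b a` over `k`. -/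
noncomputable def mono (a : ℕ) (p : I × Fin (a + 1)) : O := (X ^ (p.2 : ℕ) : k[X]) • b p.1

omit [Fintype I] in
theorem mono_mem (a : ℕ) (p : I × Fin (a + 1)) : mono b a p ∈ Lspace b a := by
  refine smul_mem_Lspace (n := 0) ?_ (basis_mem_Lspace _)
  rw [natDegree_X_pow]
  omega

theorem mono_indep (a : ℕ) {c : I × Fin (a + 1) → k}
    (h : ∑ p, (C (c p) : k[X]) • mono b a p = 0) : c = 0 := by
  classical
  funext ⟨i, t⟩
  have h1 : ((b.repr (∑ p, (C (c p) : k[X]) • mono b a p)) i).coeff t = 0 := by rw [h]; simp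
  rw [map_sum, Finsupp.finsetSum_apply, finsetSum_coeff, Finset.sum_eq_single (i, t)] at h1
  · simpa [mono] using h1
  · rintro ⟨j, t'⟩ - hne
    simp only [mono, map_smul, Module.Basis.repr_self, Finsupp.smul_apply, smul_eq_mul,
      coeff_C_mul, Finsupp.single_apply]
    split_ifs with hj
    · have ht : (t : ℕ) ≠ t' := fun e => hne (by rw [hj, Fin.ext e])
      simp [coeff_X_pow, ht]
    · simp
  · simp

theorem le_rootMultiplicity_of_dvd [DecidableEq k] {R : k[X]} (hR : R ≠ 0) {s : k} {r : ℕ}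
    (h : (PowerSeries.X : PowerSeries k) ^ r ∣ ((taylor s R : k[X]) : PowerSeries k)) :
    r ≤ R.roots.count s := by
  rw [count_roots, rootMultiplicity_eq_rootMultiplicity]
  have hne : R.comp (X + C s) ≠ 0 := by
    intro e
    rw [← taylor_apply, taylor_eq_zero] at e
    exact hR e
  rw [le_rootMultiplicity_iff hne, map_zero, sub_zero, ← taylor_apply, X_pow_dvd_iff]
  intro m hm
  rw [PowerSeries.X_pow_dvd_iff] at h
  simpa using h m hm

/-- Stepanov's method in the form due to Bombieri. The points of the curve with coordinate ring `O`
are the homomorphisms `constantCoeff ∘ ι s γ`; `Z` is a set of points on which the `Q`-Frobenius,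
`Q = q ^ (μ + ν)`, is induced by `ρ`. The auxiliary function is
`∑ u_p * G_p ^ (q ^ ν)`, where the `u_p` are the elements of degree at most `a` of a `k`-basis. On
`Z` its `q ^ μ`-th power agrees with `∑ u_p ^ (q ^ μ) * ρ(G_p)`; by linear algebra the `G_p`, of
degree at most `e`, are chosen so that this vanishes identically. The auxiliary function is then
zero on `Z`, but it is not the zero function as the `u_p` are independent over `q ^ ν`-th powers. -/
theorem bombieri_bound [IsAlgClosed k] (hq : IsQ q k) (hD : MulBound b D) {Γ : Type*} [Fintype Γ]
    (γ0 : Γ) (ι : k → Γ → O →+* PowerSeries k)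
    (hι : ∀ s γ (P : k[X]), ι s γ (algebraMap k[X] O P) = ((taylor s P : k[X]) : PowerSeries k))
    (hinj : ∀ s γ, Function.Injective (ι s γ))
    (hnorm : ∀ s h, ∏ γ, ι s γ h = ((taylor s (Algebra.norm k[X] h) : k[X]) : PowerSeries k))
    (a : ℕ) : ∃ N0, ∀ ν μ e : ℕ, N0 ≤ q ^ ν →
      Fintype.card I * (q ^ μ * (a + D) + (e + D) + 1) <
        Fintype.card I * (a + 1) * (Fintype.card I * (e + 1)) →
      ∀ ρ : O →+* O,
        (∀ c : k, ρ (algebraMap k[X] O (C c)) = algebraMap k[X] O (C (c ^ q ^ (μ + ν)))) →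
        ρ (algebraMap k[X] O X) = algebraMap k[X] O X → (∀ i, ρ (b i) ∈ Lspace b D) →
        ∀ Z : Finset (k × Γ), (∀ z ∈ Z, ∀ h, PowerSeries.constantCoeff (ι z.1 z.2 h) ^
            q ^ (μ + ν) = PowerSeries.constantCoeff (ι z.1 z.2 (ρ h))) →
        Z.card ≤ Fintype.card I * (a + q ^ ν * (e + D) + D) := by
  classical
  have hιC : ∀ s γ (c : k) x, ι s γ ((C c : k[X]) • x) = c • ι s γ x := by
    intro s γ c x
    rw [Algebra.smul_def, map_mul, hι, taylor_C, Polynomial.coe_C, PowerSeries.smul_eq_C_mul]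
  have hind : LinearIndependent k (fun p => ι 0 γ0 (mono b a p)) := by
    rw [Fintype.linearIndependent_iff]
    intro c hc
    have h1 : ∑ p, (C (c p) : k[X]) • mono b a p = 0 := by
      apply hinj 0 γ0
      rw [map_sum, map_zero, ← hc]
      exact Finset.sum_congr rfl fun p _ => hιC _ _ _ _
    exact fun p => congrFun (mono_indep a h1) p
  obtain ⟨N0, hN0⟩ := exists_trunc_indep _ hind
  refine ⟨N0, fun ν μ e hν hcard ρ hρC hρX hρb Z hZ => ?_⟩
  have hρm : ∀ p, ρ (mono b e p) ∈ Lspace b (e + D) := by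
    intro p
    have : ρ (mono b e p) = (X ^ (p.2 : ℕ) : k[X]) • ρ (b p.1) := by
      rw [mono, Algebra.smul_def, map_mul, map_pow, map_pow, hρX, Algebra.smul_def, map_pow]
    rw [this]
    refine smul_mem_Lspace ?_ (hρb _)
    rw [natDegree_X_pow]
    omega
  have hqμ : q ^ μ ≠ 0 := pow_ne_zero _ hq.ne_zero
  have hqν : q ^ ν ≠ 0 := pow_ne_zero _ hq.ne_zero
  have hqQ : q ^ (μ + ν) ≠ 0 := pow_ne_zero _ hq.ne_zero
  obtain ⟨c', hc'0, hc'⟩ := exists_relation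
    (w := fun p : (I × Fin (a + 1)) × (I × Fin (e + 1)) =>
      mono b a p.1 ^ q ^ μ * ρ (mono b e p.2))
    (fun p => pow_mul_mem_Lspace hD (mono_mem a p.1) (hρm p.2) hqμ)
    (by simpa only [Fintype.card_prod, Fintype.card_fin] using hcard)
  choose c hc using fun p => IsAlgClosed.exists_pow_nat_eq (c' p) (Nat.pos_of_ne_zero hqQ)
  obtain ⟨G, hGdef⟩ : ∃ G : I × Fin (a + 1) → O,
      ∀ p, G p = ∑ p', (C (c (p, p')) : k[X]) • mono b e p' := ⟨_, fun _ => rfl⟩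
  have hG : ∑ p, mono b a p ^ q ^ μ * ρ (G p) = 0 := by
    refine Eq.trans ?_ ((Fintype.sum_prod_type _).symm.trans hc')
    refine Finset.sum_congr rfl fun p _ => ?_
    rw [hGdef, map_sum, Finset.mul_sum]
    refine Finset.sum_congr rfl fun p' _ => ?_
    rw [Algebra.smul_def, map_mul, hρC, hc, Algebra.smul_def]
    ring
  have hGL : ∀ p, G p ∈ Lspace b e := by
    intro p
    rw [hGdef]
    refine sum_mem_Lspace _ _ fun p' _ => ?_
    have := smul_mem_Lspace (m := 0) (natDegree_C (c (p, p'))).le (mono_mem (b := b) e p')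
    rwa [zero_add] at this
  obtain ⟨h1, h1def⟩ : ∃ h1 : O, h1 = ∑ p, mono b a p * G p ^ q ^ ν := ⟨_, rfl⟩
  have h1L : h1 ∈ Lspace b (a + q ^ ν * (e + D)) := by
    rw [h1def]
    refine sum_mem_Lspace _ _ fun p _ => ?_
    have := pow_mul_mem_Lspace hD (hGL p) (mono_mem a p) hqν
    rwa [mul_comm (G p ^ q ^ ν), add_comm (q ^ ν * (e + D))] at this
  have h10 : h1 ≠ 0 := by
    intro h0
    apply hc'0
    have e1 : ∑ p, ι 0 γ0 (mono b a p) * ι 0 γ0 (G p) ^ q ^ ν = 0 := by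
      rw [← map_zero (ι 0 γ0), ← h0, h1def, map_sum]
      exact Finset.sum_congr rfl fun p _ => by rw [map_mul, map_pow]
    funext ⟨p, p'⟩
    have e2 : G p = 0 := hinj 0 γ0 (by
      rw [map_zero]; exact eq_zero_of_sum_pow hq hN0 hν e1 p)
    rw [hGdef] at e2
    have e3 := congrFun (mono_indep e e2) p'
    simp only [Pi.zero_apply] at e3
    rw [← hc, e3, zero_pow hqQ, Pi.zero_apply]
  have hvan : ∀ z ∈ Z, (PowerSeries.X : PowerSeries k) ∣ ι z.1 z.2 h1 := by
    intro z hz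
    rw [PowerSeries.X_dvd_iff]
    refine eq_zero_of_pow_eq_zero (n := q ^ μ) ?_
    have e1 := congrArg (fun x => PowerSeries.constantCoeff (ι z.1 z.2 x)) hG
    simp only [map_sum, map_mul, map_pow, map_zero] at e1
    rw [h1def]
    simp only [map_sum, map_mul, map_pow]
    rw [hq.sum_pow_pow, ← e1]
    refine Finset.sum_congr rfl fun p _ => ?_
    rw [mul_pow, ← pow_mul, ← hZ z hz, ← pow_add, add_comm ν]
  set R := Algebra.norm k[X] h1 with hR
  have hR0 : R ≠ 0 := by
    intro e0
    have e1 := hnorm 0 h1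
    rw [← hR, e0, map_zero, Polynomial.coe_zero, Finset.prod_eq_zero_iff] at e1
    obtain ⟨γ, -, hγ⟩ := e1
    exact h10 (hinj 0 γ (by rw [hγ, map_zero]))
  calc Z.card = ∑ s ∈ Z.image Prod.fst, (Z.filter fun z => z.1 = s).card :=
        Finset.card_eq_sum_card_image _ _
    _ ≤ ∑ s ∈ Z.image Prod.fst, R.roots.count s := by
        refine Finset.sum_le_sum fun s _ => le_rootMultiplicity_of_dvd hR0 ?_
        rw [← hnorm]
        have e1 : (Z.filter fun z => z.1 = s).card =
            ((Z.filter fun z => z.1 = s).image Prod.snd).card := by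
          rw [Finset.card_image_of_injOn]
          rintro ⟨x, y⟩ hx ⟨x', y'⟩ hx' hxy
          simp only [Finset.coe_filter, Set.mem_ofPred_eq] at hx hx' hxy
          rw [hx.2, hx'.2, hxy]
        rw [e1, ← Finset.prod_const]
        refine dvd_trans ?_ (Finset.prod_dvd_prod_of_subset _ _ _ (Finset.subset_univ
          ((Z.filter fun z => z.1 = s).image Prod.snd)))
        refine Finset.prod_dvd_prod_of_dvd _ _ fun γ hγ => ?_
        obtain ⟨z, hz, rfl⟩ := Finset.mem_image.1 hγ
        obtain ⟨hzZ, hzs⟩ := Finset.mem_filter.1 hz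
        subst hzs
        exact hvan _ hzZ
    _ ≤ ∑ s ∈ Z.image Prod.fst ∪ R.roots.toFinset, R.roots.count s :=
        Finset.sum_le_sum_of_subset Finset.subset_union_left
    _ = R.roots.card := Multiset.sum_count_eq_card fun s hs => by simp at hs ⊢; tauto
    _ ≤ R.natDegree := card_roots' R
    _ ≤ _ := natDegree_norm_le hD h1L

end Count


/-! ### The roots near a finite value of `s` -/

section Local

variable {k : Type*} [Field k] {q d : ℕ} {α : ℕ → k}
variable {κ : Type*} [Field κ] [Algebra (PowerSeries k) κ] [IsFractionRing (PowerSeries k) κ]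
  [Algebra k κ] [IsScalarTower k (PowerSeries k) κ]

theorem exists_root_lift (h : Setup q d α) {s c : k} (hc : c ∈ V q d α s) :
    ∃ τ : PowerSeries k, PowerSeries.constantCoeff τ = c ∧
      algebraMap (PowerSeries k) κ τ ∈
        V q d α (algebraMap (PowerSeries k) κ (PowerSeries.C s + PowerSeries.X)) := by
  have h3 := h.three_le
  have h0 := h.zero
  let A : ℕ → PowerSeries k := fun i =>
    if i = 1 then PowerSeries.C (α 0)⁻¹ * (PowerSeries.C s + PowerSeries.X)
    else -PowerSeries.C ((α 0)⁻¹ * α i)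
  have e : Finset.Icc 1 d = insert 1 (Finset.Icc 2 d) := by
    ext j
    simp only [Finset.mem_Icc, Finset.mem_insert]
    omega
  have hA : ∀ i ∈ Finset.Icc 2 d, A i = -PowerSeries.C ((α 0)⁻¹ * α i) := by
    intro i hi
    have := (Finset.mem_Icc.1 hi).1
    exact if_neg (by omega)
  have hA1 : A 1 = PowerSeries.C (α 0)⁻¹ * (PowerSeries.C s + PowerSeries.X) := if_pos rfl
  obtain ⟨τ, hτ1, hτ2⟩ := hensel h.isQ d A c (by
    rw [mem_V, lev_eq h] at hc
    rw [e, Finset.sum_insert (by simp), hA1]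
    have e1 : ∑ i ∈ Finset.Icc 2 d, PowerSeries.constantCoeff (A i) * c ^ q ^ i =
        -((α 0)⁻¹ * ∑ i ∈ Finset.Icc 2 d, α i * c ^ q ^ i) := by
      rw [Finset.mul_sum, ← Finset.sum_neg_distrib]
      refine Finset.sum_congr rfl fun i hi => ?_
      rw [hA i hi, map_neg, PowerSeries.constantCoeff_C]
      ring
    rw [e1]
    simp only [map_mul, map_add, PowerSeries.constantCoeff_C, PowerSeries.constantCoeff_X, add_zero,
      pow_one, Algebra.algebraMap_self, RingHom.id_apply] at hc ⊢
    field_simp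
    linear_combination hc)
  refine ⟨τ, hτ1, ?_⟩
  rw [mem_V, lev_eq h]
  have e1 : PowerSeries.C (α 0) * τ + ∑ j ∈ Finset.Icc 2 d, PowerSeries.C (α j) * τ ^ q ^ j =
      (PowerSeries.C s + PowerSeries.X) * τ ^ q := by
    rw [e, Finset.sum_insert (by simp), hA1] at hτ2
    have e2 : ∑ i ∈ Finset.Icc 2 d, A i * τ ^ q ^ i =
        -(PowerSeries.C (α 0)⁻¹ * ∑ i ∈ Finset.Icc 2 d, PowerSeries.C (α i) * τ ^ q ^ i) := by
      rw [Finset.mul_sum, ← Finset.sum_neg_distrib]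
      refine Finset.sum_congr rfl fun i hi => ?_
      rw [hA i hi, map_mul]
      ring
    rw [e2, pow_one] at hτ2
    have e3 : (PowerSeries.C (α 0) * PowerSeries.C (α 0)⁻¹ : PowerSeries k) = 1 := by
      rw [← map_mul, mul_inv_cancel₀ h0, map_one]
    linear_combination PowerSeries.C (α 0) * hτ2 + ((PowerSeries.C s + PowerSeries.X) * τ ^ q -
      ∑ i ∈ Finset.Icc 2 d, PowerSeries.C (α i) * τ ^ q ^ i) * e3
  have e2 := congrArg (algebraMap (PowerSeries k) κ) e1
  rw [map_add, map_sum, map_mul, map_mul, map_pow] at e2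
  rw [← e2, algebraMap_C]
  congr 1
  refine Finset.sum_congr rfl fun j _ => ?_
  rw [map_mul, map_pow, algebraMap_C]

/-- Near a finite value of `s` all roots are power series, determined by their constant terms. -/
theorem local_roots [IsAlgClosed k] (h : Setup q d α) (s : k) :
    (fam q d α (algebraMap (PowerSeries k) κ (PowerSeries.C s + PowerSeries.X))).Splits ∧
      ∀ x ∈ V q d α (algebraMap (PowerSeries k) κ (PowerSeries.C s + PowerSeries.X)),
        ∃ τ : PowerSeries k, algebraMap (PowerSeries k) κ τ = x ∧
          (PowerSeries.constantCoeff τ = 0 → x = 0) := by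
  classical
  set t := algebraMap (PowerSeries k) κ (PowerSeries.C s + PowerSeries.X) with ht
  have hinj := IsFractionRing.injective (PowerSeries k) κ
  choose! T hT1 hT2 using fun c (hc : c ∈ V q d α s) => exists_root_lift (κ := κ) h hc
  have hInj : Set.InjOn (fun c => algebraMap (PowerSeries k) κ (T c)) (V q d α s) := by
    intro c hc c' hc' e
    rw [← hT1 c hc, ← hT1 c' hc', hinj e]
  have hcard : (((fun c => algebraMap (PowerSeries k) κ (T c)) '' V q d α s)).ncard = q ^ d := by
    rw [hInj.ncard_image, V_ncard h (IsAlgClosed.splits _)]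
  have hsub : (fun c => algebraMap (PowerSeries k) κ (T c)) '' V q d α s ⊆ V q d α t := by
    rintro _ ⟨c, hc, rfl⟩
    exact hT2 c hc
  have hsplit : (fam q d α t).Splits :=
    fam_splits_of_ncard h (hcard ▸ Set.ncard_le_ncard hsub (V_finite h t))
  have hsurj : ∀ x ∈ V q d α t, ∃ c ∈ V q d α s, algebraMap (PowerSeries k) κ (T c) = x := by
    intro x hx
    have := Set.eq_of_subset_of_ncard_le hsub (by rw [hcard, V_ncard h hsplit]) (V_finite h t)
    rw [← this] at hx
    exact hx
  refine ⟨hsplit, fun x hx => ?_⟩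
  obtain ⟨c, hc, rfl⟩ := hsurj x hx
  refine ⟨T c, rfl, fun e => ?_⟩
  obtain ⟨c0, hc0, e0⟩ := hsurj 0 (zero_mem_V h t)
  have e1 : T c0 = 0 := hinj (by rw [e0, map_zero])
  rw [hT1 c hc] at e
  have e2 := hT1 c0 hc0
  rw [e1, map_zero] at e2
  rw [e, e2, e0]

end Local

/-! ### Homomorphisms that act on the coefficients through a Frobenius -/

section Semilinear

variable {k : Type*} [Field k] {q d Q : ℕ} {α : ℕ → k} {L L' : Type*} [Field L] [Field L']
  [Algebra k L] [Algebra k L']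

theorem lev_map_semilinear (hα : ∀ j, α j ^ Q = α j) (φ : L →+* L')
    (hφ : ∀ c : k, φ (algebraMap k L c) = algebraMap k L' (c ^ Q)) (x : L) :
    φ (lev q d α x) = lev q d α (φ x) := by
  simp only [lev, map_sum, map_mul, map_pow φ, hφ, hα]

theorem map_mem_V_semilinear (hα : ∀ j, α j ^ Q = α j) (φ : L →+* L')
    (hφ : ∀ c : k, φ (algebraMap k L c) = algebraMap k L' (c ^ Q)) {s x : L}
    (hx : x ∈ V q d α s) : φ x ∈ V q d α (φ s) := by
  rw [mem_V] at *
  rw [← lev_map_semilinear hα φ hφ, hx, map_mul, map_pow]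

theorem fam_map_semilinear (hα : ∀ j, α j ^ Q = α j) (φ : L →+* L')
    (hφ : ∀ c : k, φ (algebraMap k L c) = algebraMap k L' (c ^ Q)) (s : L) :
    (fam q d α s).map φ = fam q d α (φ s) := by
  simp only [fam, linPoly, Polynomial.map_sub, Polynomial.map_sum, Polynomial.map_mul,
    Polynomial.map_pow, Polynomial.map_C, Polynomial.map_X, hφ, hα]

end Semilinear


/-! ### The ring generated by the roots -/

section CoordRing

variable {k : Type*} [Field k] {q d : ℕ} {α : ℕ → k}

/-- The subring of `K` generated over `k[s]` by the roots of `f - s X ^ q`. -/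
noncomputable abbrev coordRing (q d : ℕ) (α : ℕ → k) (K : Type*) [Field K] [Algebra k K]
    [Algebra k[X] K] : Subalgebra k[X] K :=
  Algebra.adjoin k[X] (V q d α (algebraMap k[X] K X))

section

variable {K : Type*} [Field K] [Algebra k K] [Algebra k[X] K] [IsScalarTower k k[X] K]

theorem algebraMap_C' (c : k) : algebraMap k[X] K (C c) = algebraMap k K c := by
  rw [IsScalarTower.algebraMap_apply k k[X] K, Polynomial.algebraMap_eq]

theorem root_isIntegral (h : Setup q d α) {x : K} (hx : x ∈ V q d α (algebraMap k[X] K X)) :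
    IsIntegral k[X] x := by
  obtain ⟨h1, h2⟩ := linPoly_natDegree_monic h
  have hm : ((linPoly q d α).map (C : k →+* k[X])).Monic := h2.map C
  refine ⟨(linPoly q d α).map C - C X * X ^ q, ?_, ?_⟩
  · refine hm.sub_of_left ?_
    refine (degree_C_mul_X_pow_le _ _).trans_lt ?_
    rw [degree_eq_natDegree hm.ne_zero, natDegree_map_eq_of_injective C_injective, h1]
    exact_mod_cast lt_pow h
  · rw [eval₂_sub, eval₂_mul, eval₂_C, eval₂_X_pow, eval₂_map, sub_eq_zero, ← mem_V.1 hx, lev,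
      linPoly, eval₂_finsetSum]
    refine Finset.sum_congr rfl fun j _ => ?_
    rw [eval₂_mul, eval₂_C, eval₂_X_pow, RingHom.comp_apply, algebraMap_C']

theorem coordRing_finite (h : Setup q d α) : Module.Finite k[X] (coordRing q d α K) :=
  Module.Finite.iff_fg.2 (fg_adjoin_of_finite (V_finite h _) fun _ hx => root_isIntegral h hx)

theorem coordRing_free (h : Setup q d α) (hinj : Function.Injective (algebraMap k[X] K)) :
    Module.Free k[X] (coordRing q d α K) := by
  have := coordRing_finite (K := K) h
  have : FaithfulSMul k[X] K := (faithfulSMul_iff_algebraMap_injective _ _).2 hinj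
  have : Module.IsTorsionFree k[X] K := inferInstance
  exact Module.free_of_finite_type_torsion_free'

/-- A homomorphism that fixes `s`, acts on `k` by the `Q`-Frobenius (possibly `Q = 1`) and fixes
the coefficients of `f` preserves `coordRing`. -/
theorem map_coordRing {Q : ℕ} (hα : ∀ j, α j ^ Q = α j) (φ : K →+* K)
    (hφ : ∀ c : k, φ (algebraMap k K c) = algebraMap k K (c ^ Q))
    (hφX : φ (algebraMap k[X] K X) = algebraMap k[X] K X) {x : K} (hx : x ∈ coordRing q d α K) :
    φ x ∈ coordRing q d α K := by
  induction hx using Algebra.adjoin_induction with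
  | mem x hx =>
    refine Algebra.subset_adjoin ?_
    have := map_mem_V_semilinear hα φ hφ hx
    rwa [hφX] at this
  | algebraMap P =>
    induction P using Polynomial.induction_on' with
    | add P P' hP hP' => rw [map_add, map_add]; exact add_mem hP hP'
    | monomial n c =>
      rw [← C_mul_X_pow_eq_monomial, map_mul, map_mul, map_pow, map_pow, hφX, algebraMap_C', hφ,
        ← algebraMap_C', ← map_pow, ← map_mul]
      exact Subalgebra.algebraMap_mem _ _
  | add x y _ _ hx hy => rw [map_add]; exact add_mem hx hy
  | mul x y _ _ hx hy => rw [map_mul]; exact mul_mem hx hy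

variable {I : Type*} [Fintype I]

/-- The degrees of the coordinates of `φ x` are bounded independently of the semilinear
homomorphism `φ`. -/
theorem exists_degree_bound (h : Setup q d α) (b : Module.Basis I k[X] (coordRing q d α K)) {x : K}
    (hx : x ∈ coordRing q d α K) : ∃ n, ∀ Q : ℕ, (∀ j, α j ^ Q = α j) → ∀ φ : K →+* K,
      (∀ c : k, φ (algebraMap k K c) = algebraMap k K (c ^ Q)) →
      φ (algebraMap k[X] K X) = algebraMap k[X] K X →
      ∀ y : coordRing q d α K, (y : K) = φ x → y ∈ Lspace b n := by
  classical
  obtain ⟨D, hD⟩ := exists_mulBound b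
  induction hx using Algebra.adjoin_induction with
  | mem x hx =>
    have h1 : ∀ z : K, ∃ n, ∀ y : coordRing q d α K, (y : K) = z → y ∈ Lspace b n := by
      intro z
      by_cases hz : z ∈ coordRing q d α K
      · obtain ⟨n, hn⟩ := exists_mem_Lspace b ⟨z, hz⟩
        exact ⟨n, fun y hy => by rwa [show y = ⟨z, hz⟩ from Subtype.ext hy]⟩
      · exact ⟨0, fun y hy => absurd (hy ▸ y.2) hz⟩
    choose N hN using h1
    refine ⟨∑ z ∈ (V_finite h (algebraMap k[X] K X)).toFinset, N z, ?_⟩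
    intro Q hα φ hφ hφX y hy
    have hmem := map_mem_V_semilinear hα φ hφ hx
    rw [hφX] at hmem
    exact Lspace_mono (Finset.single_le_sum (f := N) (fun _ _ => Nat.zero_le _)
      ((Set.Finite.mem_toFinset _).2 hmem)) (hN _ y hy)
  | algebraMap P =>
    induction P using Polynomial.induction_on' with
    | add P P' hP hP' =>
      obtain ⟨n, hn⟩ := hP
      obtain ⟨n', hn'⟩ := hP'
      refine ⟨max n n', fun Q hα φ hφ hφX y hy => ?_⟩
      have e : y = ⟨_, map_coordRing hα φ hφ hφX (Subalgebra.algebraMap_mem _ P)⟩ +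
          ⟨_, map_coordRing hα φ hφ hφX (Subalgebra.algebraMap_mem _ P')⟩ :=
        Subtype.ext (by rw [hy, map_add, map_add]; rfl)
      rw [e]
      exact add_mem_Lspace (Lspace_mono (le_max_left _ _) (hn Q hα φ hφ hφX _ rfl))
        (Lspace_mono (le_max_right _ _) (hn' Q hα φ hφ hφX _ rfl))
    | monomial n c =>
      refine ⟨n + D, fun Q hα φ hφ hφX y hy => ?_⟩
      have e : y = (C (c ^ Q) * X ^ n : k[X]) • (1 : coordRing q d α K) := by
        refine Subtype.ext ?_
        rw [hy, ← C_mul_X_pow_eq_monomial, map_mul, map_mul, map_pow, map_pow, hφX, algebraMap_C',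
          hφ, Subalgebra.coe_smul, Algebra.smul_def, map_mul, algebraMap_C', map_pow (algebraMap k[X] K),
          OneMemClass.coe_one, mul_one]
      rw [e]
      exact smul_mem_Lspace (natDegree_C_mul_X_pow_le _ _) hD.1
  | add x x' hx hx' h1 h1' =>
    obtain ⟨n, hn⟩ := h1
    obtain ⟨n', hn'⟩ := h1'
    refine ⟨max n n', fun Q hα φ hφ hφX y hy => ?_⟩
    have e : y = ⟨_, map_coordRing hα φ hφ hφX hx⟩ + ⟨_, map_coordRing hα φ hφ hφX hx'⟩ :=
      Subtype.ext (by rw [hy, map_add]; rfl)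
    rw [e]
    exact add_mem_Lspace (Lspace_mono (le_max_left _ _) (hn Q hα φ hφ hφX _ rfl))
      (Lspace_mono (le_max_right _ _) (hn' Q hα φ hφ hφX _ rfl))
  | mul x x' hx hx' h1 h1' =>
    obtain ⟨n, hn⟩ := h1
    obtain ⟨n', hn'⟩ := h1'
    refine ⟨n + n' + D, fun Q hα φ hφ hφX y hy => ?_⟩
    have e : y = ⟨_, map_coordRing hα φ hφ hφX hx⟩ * ⟨_, map_coordRing hα φ hφ hφX hx'⟩ :=
      Subtype.ext (by rw [hy, map_mul]; rfl)
    rw [e]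
    exact mul_mem_Lspace hD (hn Q hα φ hφ hφX _ rfl) (hn' Q hα φ hφ hφX _ rfl)

/-- A single degree bound for the structure constants of `b` and for the images of the basis under
all semilinear homomorphisms. -/
theorem exists_uniform_bound (h : Setup q d α) (b : Module.Basis I k[X] (coordRing q d α K)) :
    ∃ D, MulBound b D ∧ ∀ Q : ℕ, (∀ j, α j ^ Q = α j) → ∀ φ : K →+* K,
      (∀ c : k, φ (algebraMap k K c) = algebraMap k K (c ^ Q)) →
      φ (algebraMap k[X] K X) = algebraMap k[X] K X →
      ∀ (i : I) (y : coordRing q d α K), (y : K) = φ (b i : K) → y ∈ Lspace b D := by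
  obtain ⟨D, hD⟩ := exists_mulBound b
  choose n hn using fun i => exists_degree_bound h b (b i).2
  refine ⟨D + ∑ i, n i, hD.mono (by omega), fun Q hα φ hφ hφX i y hy => ?_⟩
  refine Lspace_mono ?_ (hn i Q hα φ hφ hφX y hy)
  have := Finset.single_le_sum (f := n) (fun _ _ => Nat.zero_le _) (Finset.mem_univ i)
  omega

end

section Fraction

variable {K0 K : Type*} [Field K0] [Field K]
  [Algebra k K0] [Algebra k[X] K0] [IsFractionRing k[X] K0] [IsScalarTower k k[X] K0]
  [Algebra K0 K] [Algebra k K] [IsScalarTower k K0 K] [Algebra k[X] K] [IsScalarTower k[X] K0 K]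
  [IsScalarTower k k[X] K]

variable (k K0 K) in
include K0 in
theorem algebraMap_injective' : Function.Injective (algebraMap k[X] K) := by
  rw [IsScalarTower.algebraMap_eq k[X] K0 K]
  exact (algebraMap K0 K).injective.comp (IsFractionRing.injective k[X] K0)

variable [IsSplittingField K0 K (fam q d α (algebraMap k[X] K0 X))]
include K0

/-- Every element of `K` is a quotient of an element of `coordRing` by a polynomial in `s`. -/
theorem exists_denominator (h : Setup q d α) (z : K) : ∃ P : k[X], P ≠ 0 ∧
    algebraMap k[X] K P * z ∈ coordRing q d α K := by
  classical
  have hz : z ∈ Algebra.adjoin K0 ((fam q d α (algebraMap k[X] K0 X)).rootSet K) := by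
    rw [IsSplittingField.adjoin_rootSet]; trivial
  induction hz using Algebra.adjoin_induction with
  | mem x hx =>
    refine ⟨1, one_ne_zero, ?_⟩
    rw [map_one, one_mul]
    refine Algebra.subset_adjoin ?_
    rw [mem_rootSet_of_ne (fam_ne_zero h _), aeval_def, ← eval_map, fam_map (algebraMap K0 K)
      (fun c => (IsScalarTower.algebraMap_apply k K0 K c).symm),
      ← IsScalarTower.algebraMap_apply k[X] K0 K, eval_fam, sub_eq_zero] at hx
    exact hx
  | algebraMap c =>
    obtain ⟨P, R, hR, rfl⟩ := IsFractionRing.div_surjective (A := k[X]) c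
    refine ⟨R, nonZeroDivisors.ne_zero hR, ?_⟩
    have hR0 : algebraMap k[X] K0 R ≠ 0 := by
      simpa using nonZeroDivisors.ne_zero hR
    have e : algebraMap k[X] K R * algebraMap K0 K (algebraMap k[X] K0 P / algebraMap k[X] K0 R) =
        algebraMap k[X] K P := by
      rw [IsScalarTower.algebraMap_apply k[X] K0 K, ← map_mul, mul_div_cancel₀ _ hR0,
        ← IsScalarTower.algebraMap_apply]
    rw [e]
    exact Subalgebra.algebraMap_mem _ _
  | add x y _ _ hx hy =>
    obtain ⟨P, hP, hPx⟩ := hx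
    obtain ⟨R, hR, hRy⟩ := hy
    refine ⟨P * R, mul_ne_zero hP hR, ?_⟩
    have e : algebraMap k[X] K (P * R) * (x + y) = algebraMap k[X] K R * (algebraMap k[X] K P * x) +
        algebraMap k[X] K P * (algebraMap k[X] K R * y) := by rw [map_mul]; ring
    rw [e]
    exact add_mem (mul_mem (Subalgebra.algebraMap_mem _ _) hPx)
      (mul_mem (Subalgebra.algebraMap_mem _ _) hRy)
  | mul x y _ _ hx hy =>
    obtain ⟨P, hP, hPx⟩ := hx
    obtain ⟨R, hR, hRy⟩ := hy
    refine ⟨P * R, mul_ne_zero hP hR, ?_⟩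
    have e : algebraMap k[X] K (P * R) * (x * y) =
        (algebraMap k[X] K P * x) * (algebraMap k[X] K R * y) := by rw [map_mul]; ring
    rw [e]
    exact mul_mem hPx hRy

theorem coordRing_isLocalization (h : Setup q d α) :
    IsLocalization (Algebra.algebraMapSubmonoid (coordRing q d α K) (nonZeroDivisors k[X])) K := by
  have hinj := algebraMap_injective' k K0 K
  have hne : ∀ P : k[X], P ≠ 0 → algebraMap k[X] K P ≠ 0 := fun P hP e =>
    hP (hinj (by rw [e, map_zero]))
  refine ⟨?_, ?_, ?_⟩
  · rintro ⟨_, P, hP, rfl⟩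
    rw [isUnit_iff_ne_zero]
    exact hne P (nonZeroDivisors.ne_zero hP)
  · intro z
    obtain ⟨P, hP, hPz⟩ := exists_denominator (K0 := K0) h z
    refine ⟨(⟨_, hPz⟩, ⟨algebraMap k[X] _ P, P, mem_nonZeroDivisors_of_ne_zero hP, rfl⟩), ?_⟩
    exact mul_comm _ _
  · intro x y e
    exact ⟨1, by rw [Subtype.ext (e : (x : K) = y)]⟩

/-- The norm of `K / k(s)` restricts to the norm of the free `k[s]`-algebra `coordRing`, and the
ranks agree. -/
theorem coordRing_norm (h : Setup q d α) (x : coordRing q d α K) :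
    algebraMap K0 K (Algebra.norm K0 (x : K)) = algebraMap k[X] K (Algebra.norm k[X] x) := by
  have := coordRing_finite (K := K) h
  have := coordRing_free (K := K) h (algebraMap_injective' k K0 K)
  have := coordRing_isLocalization (K0 := K0) (K := K) h
  have e := Algebra.norm_localization k[X] (nonZeroDivisors k[X]) (Rₘ := K0) (Sₘ := K) x
  rw [IsScalarTower.algebraMap_apply k[X] K0 K, ← e]
  rfl

theorem card_basis {I : Type*} [Fintype I] (h : Setup q d α)
    (b : Module.Basis I k[X] (coordRing q d α K)) : Fintype.card I = Module.finrank K0 K := by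
  have := coordRing_isLocalization (K0 := K0) (K := K) h
  exact (Module.finrank_eq_card_basis
    (b.localizationLocalization K0 (nonZeroDivisors k[X]) K)).symm

end Fraction

end CoordRing


/-! ### Points of the curve over `k` -/

section Points

theorem exists_hom_lift {O A κ : Type*} [CommRing O] [CommRing A] [CommRing κ] [Algebra A κ]
    (hinj : Function.Injective (algebraMap A κ)) (φ : O →+* κ)
    (hφ : ∀ x, ∃ a, algebraMap A κ a = φ x) : ∃ ψ : O →+* A, ∀ x, algebraMap A κ (ψ x) = φ x := by
  choose f hf using hφ
  exact ⟨{ toFun := f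
           map_one' := hinj (by rw [hf, map_one, map_one])
           map_mul' := fun x y => hinj (by rw [map_mul, hf, hf, hf, map_mul])
           map_zero' := hinj (by rw [hf, map_zero, map_zero])
           map_add' := fun x y => hinj (by rw [map_add, hf, hf, hf, map_add]) }, hf⟩

theorem exists_frob {R : Type*} [CommRing R] {q : ℕ} (hq : IsQ q R) (M : ℕ) :
    ∃ F : R →+* R, ∀ x, F x = x ^ q ^ M :=
  ⟨{ toFun := fun x => x ^ q ^ M
     map_one' := one_pow _
     map_mul' := fun x y => mul_pow x y _
     map_zero' := zero_pow (pow_ne_zero _ hq.ne_zero)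
     map_add' := fun x y => hq.add_pow_pow M x y }, fun _ => rfl⟩

/-- The homomorphism of `k((X))` raising coefficients to the power `q ^ M` and fixing `X`. -/
theorem exists_coeff_frob {k κ : Type*} [Field k] [Field κ] [Algebra (PowerSeries k) κ]
    [IsFractionRing (PowerSeries k) κ] {q : ℕ} (hq : IsQ q k) (M : ℕ) :
    ∃ (F : k →+* k) (Fr : κ →+* κ), (∀ x, F x = x ^ q ^ M) ∧
      ∀ a, Fr (algebraMap (PowerSeries k) κ a) = algebraMap (PowerSeries k) κ
        (PowerSeries.map F a) := by
  obtain ⟨F, hF⟩ := exists_frob hq M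
  have hinj : Function.Injective ((algebraMap (PowerSeries k) κ).comp (PowerSeries.map F)) := by
    refine (IsFractionRing.injective (PowerSeries k) κ).comp ?_
    rw [injective_iff_map_eq_zero]
    intro a ha
    ext n
    have := congrArg (PowerSeries.coeff n) ha
    rw [PowerSeries.coeff_map, map_zero] at this
    rw [map_zero]
    exact F.injective (by rw [this, map_zero])
  exact ⟨F, IsFractionRing.lift hinj, hF, fun a => IsFractionRing.lift_algebraMap hinj a⟩

variable {k : Type*} [Field k] [IsAlgClosed k] {q d : ℕ} {α : ℕ → k}
variable {K0 K : Type*} [Field K0] [Field K]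
  [Algebra k K0] [Algebra k[X] K0] [IsFractionRing k[X] K0] [IsScalarTower k k[X] K0]
  [Algebra K0 K] [Algebra k K] [IsScalarTower k K0 K] [Algebra k[X] K] [IsScalarTower k[X] K0 K]
  [IsScalarTower k k[X] K]
variable {κ : Type*} [Field κ] [Algebra (PowerSeries k) κ] [IsFractionRing (PowerSeries k) κ]
  [Algebra k κ] [IsScalarTower k (PowerSeries k) κ]

/-- Homomorphisms out of `K` that agree on `k` and on `s` agree on `k(s)`. -/
theorem comp_algebraMap_ext {L : Type*} [Field L] {φ φ' : K →+* L}
    (h1 : ∀ c : k, φ (algebraMap k K c) = φ' (algebraMap k K c))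
    (h2 : φ (algebraMap k[X] K X) = φ' (algebraMap k[X] K X)) (c : K0) :
    φ (algebraMap K0 K c) = φ' (algebraMap K0 K c) := by
  have e : φ.comp (algebraMap K0 K) = φ'.comp (algebraMap K0 K) := by
    refine hom_ratfunc_ext (k := k) (fun a => ?_) ?_
    · rw [RingHom.comp_apply, RingHom.comp_apply, ← IsScalarTower.algebraMap_apply k K0 K, h1]
    · rw [RingHom.comp_apply, RingHom.comp_apply, ← IsScalarTower.algebraMap_apply k[X] K0 K, h2]
  exact RingHom.congr_fun e c

theorem exists_local_hom [IsSplittingField K0 K (fam q d α (algebraMap k[X] K0 X))]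
    (h : Setup q d α) (s : k) : ∃ φ : K →+* κ,
      (∀ c : k, φ (algebraMap k K c) = algebraMap k κ c) ∧
      φ (algebraMap k[X] K X) = algebraMap (PowerSeries k) κ (PowerSeries.C s + PowerSeries.X) := by
  have hinj := IsFractionRing.injective (PowerSeries k) κ
  obtain ⟨φ0, h1, h2⟩ := exists_hom_ratfunc (K0 := K0) (algebraMap k κ)
    (algebraMap (PowerSeries k) κ (PowerSeries.C s + PowerSeries.X))
    (eval₂_ne_zero_of_not_mem fun c e => by
      rw [IsScalarTower.algebraMap_apply k (PowerSeries k) κ] at e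
      have := congrArg (PowerSeries.coeff 1) (hinj e)
      simp at this)
  obtain ⟨φ, hφ⟩ := exists_hom_split (fam q d α (algebraMap k[X] K0 X)) (K := K) φ0 (by
    rw [fam_map φ0 h1, h2]
    exact (local_roots h s).1)
  refine ⟨φ, fun c => ?_, ?_⟩
  · rw [IsScalarTower.algebraMap_apply k K0 K, hφ, h1]
  · rw [IsScalarTower.algebraMap_apply k[X] K0 K, hφ, h2]

omit [IsAlgClosed k] [IsFractionRing (PowerSeries k) κ] in
theorem local_hom_algebraMap {s : k} {φ : K →+* κ}
    (h1 : ∀ c : k, φ (algebraMap k K c) = algebraMap k κ c)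
    (h2 : φ (algebraMap k[X] K X) =
      algebraMap (PowerSeries k) κ (PowerSeries.C s + PowerSeries.X)) (P : k[X]) :
    φ (algebraMap k[X] K P) =
      algebraMap (PowerSeries k) κ ((taylor s P : k[X]) : PowerSeries k) := by
  have e : φ.comp (algebraMap k[X] K) = (algebraMap (PowerSeries k) κ).comp
      ((coeToPowerSeries.ringHom (R := k)).comp (taylorAlgHom s : k[X] →+* k[X])) := by
    refine Polynomial.ringHom_ext (fun c => ?_) ?_
    · simp only [RingHom.comp_apply, algebraMap_C', h1]
      rw [IsScalarTower.algebraMap_apply k (PowerSeries k) κ]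
      congr 1
      simp
    · simp [h2, add_comm]
  exact RingHom.congr_fun e P

theorem local_hom_mem_range (h : Setup q d α) {s : k} {φ : K →+* κ}
    (h1 : ∀ c : k, φ (algebraMap k K c) = algebraMap k κ c)
    (h2 : φ (algebraMap k[X] K X) =
      algebraMap (PowerSeries k) κ (PowerSeries.C s + PowerSeries.X)) {x : K}
    (hx : x ∈ coordRing q d α K) : ∃ τ, algebraMap (PowerSeries k) κ τ = φ x := by
  induction hx using Algebra.adjoin_induction with
  | mem x hx =>
    have := map_mem_V φ h1 hx
    rw [h2] at this
    obtain ⟨τ, hτ, -⟩ := (local_roots h s).2 _ this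
    exact ⟨τ, hτ⟩
  | algebraMap P => exact ⟨_, (local_hom_algebraMap h1 h2 P).symm⟩
  | add x y _ _ hx hy =>
    obtain ⟨a, ha⟩ := hx
    obtain ⟨b, hb⟩ := hy
    exact ⟨a + b, by rw [map_add, map_add, ha, hb]⟩
  | mul x y _ _ hx hy =>
    obtain ⟨a, ha⟩ := hx
    obtain ⟨b, hb⟩ := hy
    exact ⟨a * b, by rw [map_mul, map_mul, ha, hb]⟩

/-- For every `s : k` the Galois group parametrises the local expansions of `coordRing` at the
points above `s`. If `s ^ Q = s`, the `Q`-Frobenius of such a point is induced by a lift of the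
coefficient Frobenius `σ` composed with an element of the Galois group. -/
theorem exists_points [FiniteDimensional K0 K] [IsGalois K0 K]
    [IsSplittingField K0 K (fam q d α (algebraMap k[X] K0 X))] (h : Setup q d α) :
    ∃ ι : k → Gal(K/K0) → coordRing q d α K →+* PowerSeries k,
      (∀ s γ (P : k[X]), ι s γ (algebraMap k[X] _ P) = ((taylor s P : k[X]) : PowerSeries k)) ∧
      (∀ s γ, Function.Injective (ι s γ)) ∧
      (∀ s x, ∏ γ, ι s γ x = ((taylor s (Algebra.norm k[X] x) : k[X]) : PowerSeries k)) ∧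
      (∀ s γ (v : coordRing q d α K), (v : K) ∈ V q d α (algebraMap k[X] K X) →
        PowerSeries.constantCoeff (ι s γ v) = 0 → v = 0) ∧
      (∀ M, ∀ σ : K →+* K, (∀ c : k, σ (algebraMap k K c) = algebraMap k K (c ^ q ^ M)) →
        σ (algebraMap k[X] K X) = algebraMap k[X] K X → ∀ s, s ^ q ^ M = s → ∀ γ,
        ∃ g : Gal(K/K0), ∀ x x' : coordRing q d α K, (x' : K) = σ (g x) →
          PowerSeries.constantCoeff (ι s γ x) ^ q ^ M =
            PowerSeries.constantCoeff (ι s γ x')) := by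
  have hinj := IsFractionRing.injective (PowerSeries k) (FractionRing (PowerSeries k))
  choose φ h1 h2 using fun s => exists_local_hom (K0 := K0) (K := K)
    (κ := FractionRing (PowerSeries k)) h s
  have hγ1 : ∀ s (γ : Gal(K/K0)) (c : k), ((φ s).comp (γ : K →+* K)) (algebraMap k K c) =
      algebraMap k _ c := by
    intro s γ c
    rw [← h1 s, IsScalarTower.algebraMap_apply k K0 K]
    exact congrArg (φ s) (γ.commutes _)
  have hγ2 : ∀ s (γ : Gal(K/K0)), ((φ s).comp (γ : K →+* K)) (algebraMap k[X] K X) =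
      algebraMap (PowerSeries k) _ (PowerSeries.C s + PowerSeries.X) := by
    intro s γ
    rw [← h2 s, IsScalarTower.algebraMap_apply k[X] K0 K]
    exact congrArg (φ s) (γ.commutes _)
  choose ι hι using fun s (γ : Gal(K/K0)) => exists_hom_lift hinj
    (((φ s).comp (γ : K →+* K)).comp (coordRing q d α K).subtype)
    (fun (x : coordRing q d α K) => local_hom_mem_range h (hγ1 s γ) (hγ2 s γ) x.2)
  have hι' : ∀ s γ (x : coordRing q d α K),
      algebraMap (PowerSeries k) (FractionRing (PowerSeries k)) (ι s γ x) = φ s (γ (x : K)) := hι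
  refine ⟨ι, fun s γ P => hinj ?_, fun s γ x y e => ?_, fun s x => hinj ?_,
    fun s γ v hv hv0 => ?_, ?_⟩
  · rw [hι']
    exact local_hom_algebraMap (hγ1 s γ) (hγ2 s γ) P
  · have := congrArg (algebraMap (PowerSeries k) (FractionRing (PowerSeries k))) e
    rw [hι', hι'] at this
    exact Subtype.ext (γ.injective ((φ s).injective this))
  · rw [map_prod, ← local_hom_algebraMap (h1 s) (h2 s), ← coordRing_norm (K0 := K0) h,
      Algebra.norm_eq_prod_automorphisms, map_prod]
    exact Finset.prod_congr rfl fun γ _ => hι' s γ x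
  · have hv' := map_mem_V _ (hγ1 s γ) hv
    rw [hγ2] at hv'
    obtain ⟨τ, hτ, hτ0⟩ := (local_roots h s).2 _ hv'
    have e : ι s γ v = τ := hinj (by rw [hτ]; exact hι' s γ v)
    have := hτ0 (by rw [← e, hv0])
    exact Subtype.ext (((φ s).comp (γ : K →+* K)).injective (by rw [this]; exact (map_zero _).symm))
  · intro M σ hσ1 hσ2 s hs γ
    obtain ⟨F, Fr, hF, hFr⟩ := exists_coeff_frob (κ := FractionRing (PowerSeries k)) h.isQ M
    -- both homomorphisms act on `k` by the `q ^ M`-Frobenius and send `s` to the same series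
    obtain ⟨g, hg⟩ := exists_gal_of_hom (((φ s).comp (γ : K →+* K)).comp σ)
      (Fr.comp ((φ s).comp (γ : K →+* K))) (comp_algebraMap_ext (k := k) (K0 := K0) (fun c => by
        rw [RingHom.comp_apply, hσ1, hγ1, RingHom.comp_apply Fr, hγ1, ← algebraMap_C,
          ← algebraMap_C c, hFr, PowerSeries.map_C, hF]) (by
        rw [RingHom.comp_apply, hσ2, hγ2, RingHom.comp_apply Fr, hγ2, hFr,
          map_add (PowerSeries.map F), PowerSeries.map_C, hF, hs, PowerSeries.map_X]))
    refine ⟨g, fun x x' e => ?_⟩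
    have e1 : PowerSeries.map F (ι s γ x) = ι s γ x' := hinj (by
      rw [← hFr, hι', hι', e]
      exact hg x)
    rw [← e1, ← PowerSeries.coeff_zero_eq_constantCoeff_apply,
      ← PowerSeries.coeff_zero_eq_constantCoeff_apply, PowerSeries.coeff_map, hF]

end Points


/-! ### Rational points and the collision -/

section Collision

/-- Parameters for which the auxiliary function of `bombieri_bound` exists, while the resulting
bound summed over all but one of `g = t + 1` classes is smaller than `q ^ M`. -/
theorem exists_params {q t : ℕ} (hq : 2 ≤ q) (ht : 1 ≤ t) (D N0 : ℕ) :
    ∃ ν M0, N0 ≤ q ^ ν ∧ ∀ M, M0 ≤ M → ∃ μ e, μ + ν = M ∧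
      (t + 1) * (q ^ μ * (t * D + 1 + D) + (e + D) + 1) <
        (t + 1) * (t * D + 1 + 1) * ((t + 1) * (e + 1)) ∧
      t * (t * D + 1 + q ^ ν * (e + D) + D) < q ^ M := by
  set a := t * D + 1 with ha
  set ν := N0 + t * (a + D) with hν
  set B := t * D * (t * (a + 1) + a + 1) with hB
  have h1 : ν < q ^ ν := Nat.lt_pow_self (by omega)
  refine ⟨ν, ν + B, by omega, fun M hM => ?_⟩
  obtain ⟨μ, rfl⟩ : ∃ μ, M = μ + ν := ⟨M - ν, by omega⟩
  have h2 : μ < q ^ μ := Nat.lt_pow_self (by omega)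
  have hBP : B < q ^ μ := by omega
  set P := q ^ μ with hP
  set N := q ^ ν with hN
  have h3 : t * D < P := lt_of_le_of_lt (Nat.le_mul_of_pos_right _ (by omega)) hBP
  have h4 : D ≤ (P - 1) / t := by
    rw [Nat.le_div_iff_mul_le (by omega), mul_comm]
    omega
  obtain ⟨e, he⟩ : ∃ e, (P - 1) / t = e + D := ⟨(P - 1) / t - D, by omega⟩
  have h5 : t * (e + D) + 1 ≤ P := by
    have := Nat.mul_div_le (P - 1) t
    rw [he] at this
    omega
  have h6 : P ≤ t * (e + D + 1) := by
    have := Nat.lt_mul_div_succ (P - 1) (show 0 < t by omega)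
    rw [he] at this
    omega
  refine ⟨μ, e, rfl, ?_, ?_⟩
  · rw [mul_assoc (t + 1)]
    refine Nat.mul_lt_mul_of_pos_left ?_ (by omega)
    refine Nat.lt_of_mul_lt_mul_left (a := t) ?_
    have h7 : (t * (a + 1) + a) * P ≤ (t * (a + 1) + a) * (t * (e + D + 1)) :=
      Nat.mul_le_mul_left _ h6
    have h8 : t * D * P + (t + 1) * P = t * P + a * P := by rw [ha]; ring
    have h9 : P ≤ (t + 1) * P := Nat.le_mul_of_pos_left _ (by omega)
    nlinarith
  · rw [pow_add, ← hP, ← hN]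
    have h7 : N * (t * (e + D) + 1) ≤ N * P := Nat.mul_le_mul_left _ h5
    nlinarith

variable {k : Type*} [Field k] [IsAlgClosed k] {q d : ℕ} {α : ℕ → k}
variable {K0 K : Type*} [Field K0] [Field K]
  [Algebra k K0] [Algebra k[X] K0] [IsFractionRing k[X] K0] [IsScalarTower k k[X] K0]
  [Algebra K0 K] [Algebra k K] [IsScalarTower k K0 K] [Algebra k[X] K] [IsScalarTower k[X] K0 K]
  [IsScalarTower k k[X] K]

/-- The coefficient Frobenius of `k(s)` lifts to the splitting field of `f - s X ^ q` as soon as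
it fixes the coefficients of `f`. -/
theorem exists_semilinear [IsSplittingField K0 K (fam q d α (algebraMap k[X] K0 X))]
    (h : Setup q d α) {M : ℕ} (hα : ∀ j, α j ^ q ^ M = α j) : ∃ σ : K →+* K,
      (∀ c : k, σ (algebraMap k K c) = algebraMap k K (c ^ q ^ M)) ∧
      σ (algebraMap k[X] K X) = algebraMap k[X] K X := by
  have hmapK : ∀ c : k, algebraMap K0 K (algebraMap k K0 c) = algebraMap k K c := fun c =>
    (IsScalarTower.algebraMap_apply k K0 K c).symm
  have hS : algebraMap K0 K (algebraMap k[X] K0 X) = algebraMap k[X] K X :=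
    (IsScalarTower.algebraMap_apply k[X] K0 K X).symm
  obtain ⟨F, hF⟩ := exists_frob h.isQ M
  obtain ⟨φ0, h1, h2⟩ := exists_hom_ratfunc (K0 := K0) ((algebraMap k K).comp F)
    (algebraMap k[X] K X) (fun P hP => by
      rw [← eval₂_map, IsScalarTower.algebraMap_eq k K0 K, ← hS, ← hom_eval₂,
        map_eq_zero] at hP
      exact (Polynomial.map_eq_zero F).1 (eval₂_gen _ hP))
  have h1' : ∀ c : k, φ0 (algebraMap k K0 c) = algebraMap k K (c ^ q ^ M) := fun c => by
    rw [h1, RingHom.comp_apply, hF]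
  obtain ⟨φ, hφ⟩ := exists_hom_split (fam q d α (algebraMap k[X] K0 X)) (K := K) φ0 (by
    rw [fam_map_semilinear hα φ0 h1', h2, ← hS, ← fam_map (algebraMap K0 K) hmapK]
    exact IsSplittingField.splits K _)
  exact ⟨φ, fun c => by rw [← hmapK, hφ, h1'], by rw [← hS, hφ, h2, hS]⟩

/-- If a point above `s` is such that its Frobenius fixes two independent roots `x`, `y` of
`f - S X ^ q`, then the values of `x` and `y` there are rational and violate scatteredness. -/
theorem collision_of_point (h : Setup q d α) {Q : ℕ} {s : k}
    (ψ : coordRing q d α K →+* k) (hψ : ∀ P : k[X], ψ (algebraMap k[X] _ P) = P.eval s)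
    (hψ0 : ∀ v : coordRing q d α K, (v : K) ∈ V q d α (algebraMap k[X] K X) → ψ v = 0 → v = 0)
    {x y : coordRing q d α K} (hx : (x : K) ∈ V q d α (algebraMap k[X] K X))
    (hy : (y : K) ∈ V q d α (algebraMap k[X] K X)) (hi : Ind q (x : K) (y : K))
    (hxQ : ψ x ^ Q = ψ x) (hyQ : ψ y ^ Q = ψ y) :
    ∃ x y : k, x ^ Q = x ∧ y ^ Q = y ∧ Ind q x y ∧ lev q d α x * y ^ q = lev q d α y * x ^ q := by
  have hlev : ∀ x : coordRing q d α K, (x : K) ∈ V q d α (algebraMap k[X] K X) →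
      lev q d α (ψ x) = s * ψ x ^ q := by
    intro x hx
    have e : ∑ j ∈ Finset.range (d + 1), algebraMap k[X] (coordRing q d α K) (C (α j)) * x ^ q ^ j
        = algebraMap k[X] (coordRing q d α K) X * x ^ q := by
      refine Subtype.ext ?_
      have := mem_V.1 hx
      rw [lev] at this
      simp only [← algebraMap_C'] at this
      push_cast
      exact this
    have := congrArg ψ e
    simpa only [map_sum, map_mul, map_pow, hψ, eval_C, eval_X, lev, Algebra.algebraMap_self,
      RingHom.id_apply] using this
  refine ⟨ψ x, ψ y, hxQ, hyQ, fun e => ?_, ?_⟩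
  · have hx0 : ψ x ≠ 0 := fun e0 => hi.left_ne_zero h.isQ (by rw [hψ0 x hx e0]; rfl)
    obtain ⟨c, hc, hy'⟩ := exists_Fq_of_pow h.isQ hx0 e
    have e1 : y - algebraMap k[X] _ (C c) * x = 0 := by
      refine hψ0 _ ?_ ?_
      · have := sub_mem_V h hy (smul_mem_V (L := K) hc hx)
        rw [← algebraMap_C'] at this
        exact this
      · rw [map_sub, map_mul, hψ, eval_C, hy', Algebra.algebraMap_self, RingHom.id_apply, sub_self]
    have e2 : (y : K) = algebraMap k K c * x := by
      rw [← algebraMap_C']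
      exact congrArg Subtype.val (sub_eq_zero.1 e1)
    apply hi
    rw [e2, mul_pow, ← map_pow, hc]
    ring
  · rw [hlev x hx, hlev y hy]
    ring

/-- The main estimate: over every large finite field containing the coefficients of `f`, two
`𝔽_q`-independent elements have the same value of `f(x) / x ^ q`. -/
theorem exists_collision_aux [FiniteDimensional K0 K] [IsGalois K0 K]
    [IsSplittingField K0 K (fam q d α (algebraMap k[X] K0 X))] (h : Setup q d α) :
    ∃ M0, ∀ M, M0 ≤ M → (∀ j, α j ^ q ^ M = α j) → ∃ x y : k, x ^ q ^ M = x ∧ y ^ q ^ M = y ∧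
      Ind q x y ∧ lev q d α x * y ^ q = lev q d α y * x ^ q := by
  classical
  have hmapK : ∀ c : k, algebraMap K0 K (algebraMap k K0 c) = algebraMap k K c := fun c =>
    (IsScalarTower.algebraMap_apply k K0 K c).symm
  have hS : algebraMap K0 K (algebraMap k[X] K0 X) = algebraMap k[X] K X :=
    (IsScalarTower.algebraMap_apply k[X] K0 K X).symm
  have hfin := coordRing_finite (K := K) h
  have hfree := coordRing_free (K := K) h (algebraMap_injective' k K0 K)
  obtain ⟨b⟩ : Nonempty (Module.Basis (Module.Free.ChooseBasisIndex k[X] (coordRing q d α K)) k[X]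
    (coordRing q d α K)) := ⟨Module.Free.chooseBasis _ _⟩
  set I := Module.Free.ChooseBasisIndex k[X] (coordRing q d α K)
  obtain ⟨D, hD, hDρ⟩ := exists_uniform_bound h b
  obtain ⟨ι, hι1, hι2, hι3, hι4, hι5⟩ := exists_points (K0 := K0) (K := K) h
  have hg : Fintype.card I = Fintype.card Gal(K/K0) := by
    rw [card_basis (K0 := K0) h b, ← IsGalois.card_aut_eq_finrank, Nat.card_eq_fintype_card]
  have hgpos : 0 < Fintype.card Gal(K/K0) := Fintype.card_pos
  obtain ⟨t, ht⟩ : ∃ t, Fintype.card Gal(K/K0) = t + 1 := ⟨_, (Nat.succ_pred_eq_of_pos hgpos).symm⟩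
  obtain ⟨N0, hN0⟩ := bombieri_bound h.isQ hD (1 : Gal(K/K0)) ι hι1 hι2 hι3 (t * D + 1)
  rw [hg, ht] at hN0
  -- two independent roots
  have hsplit : (fam q d α (algebraMap k[X] K X)).Splits := by
    rw [← hS, ← fam_map (algebraMap K0 K) hmapK]
    exact IsSplittingField.splits K _
  obtain ⟨x, hxV, hx⟩ := exists_not_span h hsplit 0 0
  obtain ⟨y, hyV, hy⟩ := exists_not_span h hsplit x 0
  have hx0 : x ≠ 0 := by
    have := hx 0 0 (zero_pow h.isQ.ne_zero) (zero_pow h.isQ.ne_zero)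
    simpa using this
  have hxy : Ind q x y := by
    intro e
    obtain ⟨c, hc, e'⟩ := exists_Fq_of_pow h.isQ hx0 e
    exact hy c 0 hc (zero_pow h.isQ.ne_zero) (by simpa using e')
  -- the parameter statement is vacuous for a trivial group, where `t = 0`
  obtain ⟨M0, hM0⟩ : ∃ M0, ∀ M, M0 ≤ M → t = 0 ∨ ∃ ν μ e, N0 ≤ q ^ ν ∧ μ + ν = M ∧
      (t + 1) * (q ^ μ * (t * D + 1 + D) + (e + D) + 1) <
        (t + 1) * (t * D + 1 + 1) * ((t + 1) * (e + 1)) ∧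
      t * (t * D + 1 + q ^ ν * (e + D) + D) < q ^ M := by
    rcases Nat.eq_zero_or_pos t with h0 | h0
    · exact ⟨0, fun _ _ => Or.inl h0⟩
    · obtain ⟨ν, M0, h1, h2⟩ := exists_params h.isQ.two_le h0 D N0
      exact ⟨M0, fun M hM => Or.inr (by
        obtain ⟨μ, e, h3⟩ := h2 M hM
        exact ⟨ν, μ, e, h1, h3⟩)⟩
  refine ⟨M0 + 1, fun M hM hα => ?_⟩
  obtain ⟨σ, hσ1, hσ2⟩ := exists_semilinear (K0 := K0) (K := K) h hα
  have hσg1 : ∀ (g : Gal(K/K0)) (c : k),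
      (σ.comp (g : K →+* K)) (algebraMap k K c) = algebraMap k K (c ^ q ^ M) := by
    intro g c
    rw [← hσ1, ← hmapK c]
    exact congrArg σ (g.commutes _)
  have hσg2 : ∀ g : Gal(K/K0),
      (σ.comp (g : K →+* K)) (algebraMap k[X] K X) = algebraMap k[X] K X := by
    intro g
    rw [← hS]
    refine (congrArg σ (g.commutes _)).trans ?_
    rw [hS, hσ2]
  choose ρ hρ using fun g : Gal(K/K0) => exists_hom_lift (O := coordRing q d α K)
    (A := coordRing q d α K) (κ := K) Subtype.val_injective
    ((σ.comp (g : K →+* K)).comp (coordRing q d α K).subtype)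
    (fun x => ⟨⟨_, map_coordRing hα _ (hσg1 g) (hσg2 g) x.2⟩, rfl⟩)
  have hρ' : ∀ g (x : coordRing q d α K), ((ρ g x : coordRing q d α K) : K) = σ (g (x : K)) := hρ
  set U := Fq k (q ^ M) ×ˢ (Finset.univ : Finset Gal(K/K0)) with hU
  set Z : Gal(K/K0) → Finset (k × Gal(K/K0)) := fun g => U.filter fun z => ∀ h,
    PowerSeries.constantCoeff (ι z.1 z.2 h) ^ q ^ M =
      PowerSeries.constantCoeff (ι z.1 z.2 (ρ g h)) with hZ
  have hM1 : M ≠ 0 := by omega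
  have hUcard : U.card = q ^ M * (t + 1) := by
    rw [hU, Finset.card_product, Finset.card_univ, ht, card_Fq (h.isQ.pow hM1)]
  have hcover : U ⊆ Finset.univ.biUnion Z := by
    intro z hz
    obtain ⟨g, hg⟩ := hι5 M σ hσ1 hσ2 z.1 ((mem_Fq (h.isQ.pow hM1)).1 (Finset.mem_product.1 hz).1) z.2
    exact Finset.mem_biUnion.2 ⟨g, Finset.mem_univ _, Finset.mem_filter.2
      ⟨hz, fun x => hg x _ (hρ' g x)⟩⟩
  -- a Galois element such that `σ ∘ g` fixes two independent roots
  have hσV : ∀ {v : K}, v ∈ V q d α (algebraMap k[X] K X) →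
      σ v ∈ V q d α (algebraMap k[X] K X) := fun hv => by
    have := map_mem_V_semilinear hα σ hσ1 hv
    rwa [hσ2] at this
  obtain ⟨g0, hg0x, hg0y⟩ := two_trans (K0 := K0) (K := K) h (x := σ x) (y := σ y) (x' := x)
    (y' := y) (by rw [hS]; exact hσV hxV) (by rw [hS]; exact hσV hyV) (by rw [hS]; exact hxV)
    (by rw [hS]; exact hyV) (hxy.map σ) hxy
  by_cases hne : (Z g0).Nonempty
  · obtain ⟨z, hz⟩ := hne
    obtain ⟨-, hz⟩ := Finset.mem_filter.1 hz
    have hmem : ∀ {v : K}, v ∈ V q d α (algebraMap k[X] K X) → v ∈ coordRing q d α K :=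
      fun hv => Algebra.subset_adjoin hv
    have hfix : ∀ {v : K} (hv : v ∈ V q d α (algebraMap k[X] K X)), g0 (σ v) = v →
        PowerSeries.constantCoeff (ι z.1 z.2 ⟨σ v, hmem (hσV hv)⟩) ^ q ^ M =
          PowerSeries.constantCoeff (ι z.1 z.2 ⟨σ v, hmem (hσV hv)⟩) := by
      intro v hv e
      rw [hz]
      congr 2
      refine Subtype.ext ?_
      rw [hρ', e]
    refine collision_of_point (K := K) h (s := z.1)
      ((PowerSeries.constantCoeff (R := k)).comp (ι z.1 z.2)) (fun P => ?_) (hι4 z.1 z.2)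
      (hσV hxV) (hσV hyV) (hxy.map σ) (hfix hxV hg0x) (hfix hyV hg0y)
    rw [RingHom.comp_apply, hι1, ← PowerSeries.coeff_zero_eq_constantCoeff_apply,
      Polynomial.coeff_coe, taylor_coeff_zero]
  · exfalso
    rw [Finset.not_nonempty_iff_eq_empty] at hne
    have hsum : q ^ M * (t + 1) ≤ ∑ g ∈ Finset.univ.erase g0, (Z g).card := by
      rw [← hUcard]
      refine (Finset.card_le_card hcover).trans (Finset.card_biUnion_le.trans ?_)
      rw [← Finset.add_sum_erase _ _ (Finset.mem_univ g0), hne, Finset.card_empty, zero_add]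
    have hQ : 0 < q ^ M := pow_pos h.isQ.pos _
    have hcard : (Finset.univ.erase g0).card = t := by
      rw [Finset.card_erase_of_mem (Finset.mem_univ _), Finset.card_univ, ht]
      rfl
    rcases hM0 M (by omega) with h0 | ⟨ν, μ, e, h1, rfl, h3, h4⟩
    · rw [h0, Finset.card_eq_zero] at hcard
      rw [hcard, Finset.sum_empty] at hsum
      nlinarith
    · have hb : ∀ g ∈ Finset.univ.erase g0, (Z g).card ≤
          (t + 1) * (t * D + 1 + q ^ ν * (e + D) + D) := by
        intro g _
        refine hN0 ν μ e h1 h3 (ρ g) (fun c => Subtype.ext ?_) (Subtype.ext ?_) (fun i => ?_) (Z g)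
          fun z hz => (Finset.mem_filter.1 hz).2
        · rw [hρ']
          have := hσg1 g c
          rw [← algebraMap_C', ← algebraMap_C'] at this
          exact this
        · rw [hρ']
          exact hσg2 g
        · exact hDρ _ hα _ (hσg1 g) (hσg2 g) i _ (hρ' g _)
      have h5 := hsum.trans (Finset.sum_le_card_nsmul _ _ _ hb)
      rw [hcard, smul_eq_mul] at h5
      nlinarith

end Collision

/-- Over every large finite field containing the coefficients of `f`, two `𝔽_q`-independent
elements have the same value of `f(x) / x ^ q`. -/
theorem exists_collision {k : Type*} [Field k] [IsAlgClosed k] {q d : ℕ} {α : ℕ → k}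
    (h : Setup q d α) : ∃ M0, ∀ M, M0 ≤ M → (∀ j, α j ^ q ^ M = α j) → ∃ x y : k,
      x ^ q ^ M = x ∧ y ^ q ^ M = y ∧ Ind q x y ∧
        lev q d α x * y ^ q = lev q d α y * x ^ q := by
  let P := fam q d α (algebraMap k[X] (RatFunc k) X)
  have : IsGalois (RatFunc k) P.SplittingField :=
    IsGalois.of_separable_splitting_field (p := P) (fam_separable h _)
  have : IsScalarTower k k[X] P.SplittingField := IsScalarTower.of_algebraMap_eq fun c => by
    rw [IsScalarTower.algebraMap_apply k (RatFunc k) P.SplittingField,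
      IsScalarTower.algebraMap_apply k[X] (RatFunc k) P.SplittingField,
      ← IsScalarTower.algebraMap_apply k k[X] (RatFunc k)]
  exact exists_collision_aux (K0 := RatFunc k) (K := P.SplittingField) h


/-! ### Binomials of norm one -/

section Binomial

variable {k : Type*} [Field k] [IsAlgClosed k] {q : ℕ}

theorem trace_telescope (hq : IsQ q k) (z : k) (M : ℕ) :
    (∑ i ∈ Finset.range M, z ^ q ^ i) ^ q = (∑ i ∈ Finset.range M, z ^ q ^ i) + (z ^ q ^ M - z) := by
  rw [hq.sum_pow]
  have h1 : ∀ i, (z ^ q ^ i) ^ q = z ^ q ^ (i + 1) := fun i => by rw [← pow_mul, pow_succ]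
  simp only [h1]
  have h2 := Finset.sum_range_succ (fun i => z ^ q ^ i) M
  have h3 := Finset.sum_range_succ' (fun i => z ^ q ^ i) M
  rw [pow_zero, pow_one] at h3
  linear_combination h2 - h3

/-- The quadratic form `v ↦ Tr(β v ^ (q + 1))` on the field with `q ^ M` elements is isotropic for
`M ≥ 3`. Otherwise the polynomial of degree `q ^ (M - 1) + q ^ (M - 2)` representing it would have
its `(q - 1)`-st power equal to `1` at all `q ^ M - 1` nonzero elements, hence identically. -/
theorem exists_isotropic (hq : IsQ q k) {M : ℕ} (hM : 3 ≤ M) {β : k} (hβ : β ^ q ^ M = β) :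
    ∃ v : k, v ≠ 0 ∧ v ^ q ^ M = v ∧ ∑ i ∈ Finset.range M, (β * v ^ (q + 1)) ^ q ^ i = 0 := by
  classical
  obtain ⟨m, rfl⟩ : ∃ m, M = m + 2 := ⟨M - 2, by omega⟩
  have hq2 := hq.two_le
  have hQ : IsQ (q ^ (m + 2)) k := hq.pow (by omega)
  by_contra! hcon
  set R : k[X] := ∑ i ∈ Finset.range (m + 1), C (β ^ q ^ i) * X ^ ((q + 1) * q ^ i) +
    C (β ^ q ^ (m + 1)) * X ^ (1 + q ^ (m + 1)) with hR
  have hRdeg : R.natDegree ≤ q ^ (m + 1) + q ^ m := by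
    refine natDegree_add_le_of_degree_le (natDegree_sum_le_of_forall_le _ _ fun i hi => ?_) ?_
    · refine (natDegree_C_mul_X_pow_le _ _).trans ?_
      have := Nat.pow_le_pow_right hq.pos (show i ≤ m by simpa [Nat.lt_succ_iff] using hi)
      calc (q + 1) * q ^ i ≤ (q + 1) * q ^ m := Nat.mul_le_mul_left _ this
        _ = _ := by ring
    · refine (natDegree_C_mul_X_pow_le _ _).trans ?_
      have := Nat.pow_pos (n := m) hq.pos
      omega
  have hReval : ∀ v : k, v ^ q ^ (m + 2) = v →
      R.eval v = ∑ i ∈ Finset.range (m + 2), (β * v ^ (q + 1)) ^ q ^ i := by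
    intro v hv
    rw [Finset.sum_range_succ, hR, eval_add, eval_finsetSum]
    congr 1
    · refine Finset.sum_congr rfl fun i _ => ?_
      rw [eval_mul, eval_C, eval_pow, eval_X, mul_pow, ← pow_mul]
    · rw [eval_mul, eval_C, eval_pow, eval_X, mul_pow, ← pow_mul, add_mul, one_mul, ← pow_succ',
        pow_add v, pow_add v, hv, pow_one]
  have hR1 : ∀ v ∈ (Fq k (q ^ (m + 2))).erase 0, (R ^ (q - 1) - 1).eval v = 0 := by
    intro v hv
    obtain ⟨hv0, hv⟩ := Finset.mem_erase.1 hv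
    rw [mem_Fq hQ] at hv
    have h0 := hcon v hv0 hv
    have h1 := trace_telescope hq (β * v ^ (q + 1)) (m + 2)
    rw [mul_pow β, hβ, ← pow_mul v, mul_comm (q + 1), pow_mul v, hv, sub_self, add_zero,
      ← hReval v hv] at h1
    rw [← hReval v hv] at h0
    rw [eval_sub, eval_pow, eval_one, sub_eq_zero]
    refine mul_left_cancel₀ h0 ?_
    rw [← pow_succ', Nat.sub_add_cancel (by omega), h1, mul_one]
  have hP0 : R ^ (q - 1) - 1 = 0 := by
    refine eq_zero_of_natDegree_lt_card_of_eval_eq_zero' _ _ hR1 ?_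
    rw [Finset.card_erase_of_mem (zero_mem_Fq hQ), card_Fq hQ]
    have h1 : (R ^ (q - 1) - 1).natDegree ≤ (q - 1) * (q ^ (m + 1) + q ^ m) := by
      refine (natDegree_sub_le _ _).trans (max_le ?_ ?_)
      · exact natDegree_pow_le.trans (Nat.mul_le_mul_left _ hRdeg)
      · rw [natDegree_one]
        exact Nat.zero_le _
    refine lt_of_le_of_lt h1 ?_
    obtain ⟨c, rfl⟩ : ∃ c, q = c + 1 := ⟨q - 1, by omega⟩
    have h2 : 1 < (c + 1) ^ m := Nat.one_lt_pow (by omega) (by omega)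
    have h3 : (c + 1 - 1) * ((c + 1) ^ (m + 1) + (c + 1) ^ m) + (c + 1) ^ m =
      (c + 1) ^ (m + 2) := by
      rw [Nat.add_sub_cancel]
      ring
    omega
  have h1 := congrArg (eval 0) hP0
  have h2 : R.eval 0 = 0 := by
    rw [hReval 0 (zero_pow hQ.ne_zero)]
    refine Finset.sum_eq_zero fun i _ => ?_
    rw [zero_pow (by omega), mul_zero, zero_pow (pow_ne_zero _ hq.ne_zero)]
  rw [eval_sub, eval_pow, h2, zero_pow (by omega), eval_one, eval_zero] at h1
  simp at h1

/-- If `b` has norm one, `b X + X ^ q ^ 2` is not scattered over extensions of degree at least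
three: writing `b = β ^ (q - 1)` and `t ^ q - t = β v ^ (q + 1)`, the pair `1 / v`, `t / v`
violates scatteredness. -/
theorem exists_collision_two (hq : IsQ q k) {n M : ℕ} (hn : n ∣ M) (hM : 3 ≤ M) {b : k}
    (hb0 : b ≠ 0) (hb : b ^ ((q ^ n - 1) / (q - 1)) = 1) : ∃ x y : k, x ^ q ^ M = x ∧
      y ^ q ^ M = y ∧ Ind q x y ∧ (b * x + x ^ q ^ 2) * y ^ q = (b * y + y ^ q ^ 2) * x ^ q := by
  have hq2 := hq.two_le
  obtain ⟨β, hβ⟩ := IsAlgClosed.exists_pow_nat_eq b (show 0 < q - 1 by omega)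
  have hβ0 : β ≠ 0 := by
    rintro rfl
    rw [zero_pow (by omega)] at hβ
    exact hb0 hβ.symm
  have hβn : β ^ q ^ n = β := by
    rw [← hβ, ← pow_mul, Nat.mul_div_cancel' (by simpa using Nat.sub_dvd_pow_sub_pow q 1 n)] at hb
    have h1 := Nat.pow_pos (n := n) hq.pos
    rw [← Nat.sub_add_cancel h1, pow_succ, Nat.succ_eq_add_one, zero_add, hb, one_mul]
  have hβM : β ^ q ^ M = β := by
    obtain ⟨m, rfl⟩ := hn
    rw [pow_mul]
    exact pow_pow_of_pow_eq hβn m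
  obtain ⟨v, hv0, hv, hT⟩ := exists_isotropic hq hM hβM
  set z := β * v ^ (q + 1) with hz
  have hz0 : z ≠ 0 := mul_ne_zero hβ0 (pow_ne_zero _ hv0)
  obtain ⟨t, ht⟩ : ∃ t : k, t ^ q = t + z := by
    have hdeg : (X ^ q - (X + C z) : k[X]).degree ≠ 0 := by
      rw [degree_sub_eq_left_of_degree_lt, degree_X_pow]
      · exact_mod_cast hq.ne_zero
      · rw [degree_X_pow, degree_X_add_C]
        exact_mod_cast hq2
    obtain ⟨t, ht⟩ := IsAlgClosed.exists_root _ hdeg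
    exact ⟨t, by simpa [IsRoot, sub_eq_zero] using ht⟩
  have htM : ∀ m, t ^ q ^ m = t + ∑ i ∈ Finset.range m, z ^ q ^ i := by
    intro m
    induction m with
    | zero => simp
    | succ m ih =>
      rw [pow_succ, pow_mul, ih, hq.add_pow, ht, trace_telescope hq, Finset.sum_range_succ]
      ring
  have htM' : t ^ q ^ M = t := by rw [htM, hT, add_zero]
  refine ⟨v⁻¹, t * v⁻¹, by rw [inv_pow, hv], by rw [mul_pow, inv_pow, hv, htM'], fun e => ?_, ?_⟩
  · rw [mul_pow, ht] at e
    have h1 : v⁻¹ ^ q * v⁻¹ ≠ 0 := mul_ne_zero (pow_ne_zero _ (inv_ne_zero hv0)) (inv_ne_zero hv0)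
    have h2 : z * (v⁻¹ ^ q * v⁻¹) = 0 := by linear_combination e
    exact (mul_ne_zero hz0 h1) h2
  · have h1 : b * z = β ^ q * v ^ (q + 1) := by
      rw [← hβ, hz, ← mul_assoc, ← pow_succ, Nat.sub_add_cancel (by omega)]
    have h2 : z ^ q = β ^ q * (v ^ (q + 1)) ^ q := by rw [hz, mul_pow]
    have h3 : t ^ q ^ 2 = t + z + z ^ q := by
      rw [htM]; simp [Finset.sum_range_succ, add_assoc]
    have h4 : (v ^ (q + 1)) ^ q * v⁻¹ ^ q ^ 2 = v ^ (q + 1) * v⁻¹ := by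
      rw [inv_pow, ← pow_mul, show (q + 1) * q = q ^ 2 + q by ring, pow_add, mul_assoc,
        mul_comm (v ^ q), ← mul_assoc, mul_inv_cancel₀ (pow_ne_zero _ hv0), one_mul, pow_succ,
        mul_assoc, mul_inv_cancel₀ hv0, mul_one]
    rw [mul_pow, mul_pow, ht, h3, h2]
    linear_combination v⁻¹ ^ q * v⁻¹ * h1 - v⁻¹ ^ q * β ^ q * h4

end Binomial


/-! ### Reduction of the theorem to the two collision statements -/

section Reduction

variable {F : Type*} [Field F]

/-- The nonzero terms of `f` in normal form: `f = X`, or `f` has `q`-degree `d ≥ 2`. -/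
theorem normal_form {q K : ℕ} (hq : 2 ≤ q) {a : ℕ → F} (ha0 : a 0 ≠ 0) {f : F[X]}
    (hf : f = C (a 0) * X + ∑ j ∈ Finset.Icc 2 K, C (a j) * X ^ q ^ j) (hmonic : f.Monic) :
    f = X ∨ ∃ d α, 2 ≤ d ∧ α 0 ≠ 0 ∧ α 1 = 0 ∧ α d = (1 : F) ∧ f = linPoly q d α := by
  classical
  set α : ℕ → F := fun j => if j = 0 ∨ (2 ≤ j ∧ j ≤ K) then a j else 0 with hα
  have hα0 : α 0 = a 0 := by simp [hα]
  have hα1 : α 1 = 0 := by simp [hα]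
  set d := Nat.findGreatest (fun j => α j ≠ 0) (K + 1) with hd
  have hαd : α d ≠ 0 := Nat.findGreatest_spec (P := fun j => α j ≠ 0) (Nat.zero_le (K + 1))
    (by rwa [hα0])
  have hdK : d ≤ K + 1 := Nat.findGreatest_le _
  have hgt : ∀ j, d < j → j ≤ K + 1 → α j = 0 := fun j h1 h2 => by
    simpa using Nat.findGreatest_is_greatest h1 h2
  have hfα : f = linPoly q d α := by
    have e1 : linPoly q (K + 1) α = linPoly q d α := by
      refine (Finset.sum_subset (Finset.range_mono (by omega)) fun j h1 h2 => ?_).symm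
      rw [Finset.mem_range] at h1 h2
      rw [hgt j (by omega) (by omega), map_zero, zero_mul]
    rw [← e1, hf, linPoly, Finset.sum_range_succ', Finset.sum_range_succ', add_comm]
    congr 1
    · rw [hα1, map_zero, zero_mul, add_zero, Finset.range_eq_Ico, Finset.sum_Ico_add'
        (fun j => C (α j) * X ^ q ^ j) 0 K 2]
      refine (Finset.sum_congr rfl fun j hj => ?_).trans (Finset.sum_subset ?_ fun j h1 h2 => ?_)
      · have : α j = a j := if_pos (Or.inr (Finset.mem_Icc.1 hj))
        rw [this]
      · intro j hj
        rw [Finset.mem_Icc] at hj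
        rw [Finset.mem_Ico]
        omega
      · have : α j = 0 := if_neg (by rw [Finset.mem_Ico] at h1; rw [Finset.mem_Icc] at h2; omega)
        rw [this, map_zero, zero_mul]
    · rw [hα0, pow_zero, pow_one]
  rcases Nat.lt_or_ge d 2 with h2 | h2
  · left
    have hd0 : d = 0 := by
      by_contra h0
      exact hαd (by rw [show d = 1 by omega, hα1])
    rw [hd0] at hfα
    rw [hfα, linPoly, zero_add, Finset.sum_range_one, pow_zero, pow_one] at hmonic ⊢
    have := hmonic.leadingCoeff
    rw [leadingCoeff_mul_X, leadingCoeff_C] at this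
    rw [this, map_one, one_mul]
  · right
    refine ⟨d, α, h2, by rwa [hα0], hα1, ?_, hfα⟩
    have hc : f.coeff (q ^ d) = α d := by
      rw [hfα, linPoly, finsetSum_coeff, Finset.sum_eq_single d]
      · simp
      · intro j _ hj
        rw [coeff_C_mul_X_pow, if_neg fun e => hj (Nat.pow_right_injective hq e).symm]
      · simp
    have hle : f.natDegree ≤ q ^ d := by
      rw [hfα]
      refine natDegree_sum_le_of_forall_le _ _ fun j hj => (natDegree_C_mul_X_pow_le _ _).trans ?_
      exact Nat.pow_le_pow_right (by omega) (Nat.lt_succ_iff.1 (Finset.mem_range.1 hj))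
    have hdeg : f.natDegree = q ^ d := le_antisymm hle (le_natDegree_of_ne_zero (by rwa [hc]))
    rw [← hc, ← hdeg]
    exact hmonic

end Reduction

/-- The subfield of `k` of the elements fixed by the `Q`-power map. -/
noncomputable def fixedPow {F k : Type*} [Field F] [Field k] [Algebra F k] (Q : ℕ) (hQ : IsQ Q k)
    (h : ∀ c : F, c ^ Q = c) : IntermediateField F k where
  carrier := {x | x ^ Q = x}
  mul_mem' := fun {x y} (hx : x ^ Q = x) (hy : y ^ Q = y) => by
    change (x * y) ^ Q = x * y
    rw [mul_pow, hx, hy]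
  add_mem' := fun {x y} (hx : x ^ Q = x) (hy : y ^ Q = y) => by
    change (x + y) ^ Q = x + y
    rw [hQ.add_pow, hx, hy]
  algebraMap_mem' := fun c => by
    change algebraMap F k c ^ Q = _
    rw [← map_pow, h]
  inv_mem' := fun x (hx : x ^ Q = x) => by
    change x⁻¹ ^ Q = x⁻¹
    rw [inv_pow, hx]

/-- Scatteredness over the field with `Q` elements, read inside an algebraically closed field. -/
theorem scattered_transfer {F k : Type} [Field F] [Field k] [IsAlgClosed k] [Algebra F k] {q Q : ℕ}
    (hQ : IsQ Q k) (h : ∀ c : F, c ^ Q = c) {f : F[X]}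
    (hf : ∀ (E : Type) [Field E] [Algebra F E] [Fintype E], Fintype.card E = Q →
      ∀ x y : E, x ≠ 0 → y ≠ 0 → aeval x f * y ^ q = aeval y f * x ^ q → (y / x) ^ q = y / x)
    {x y : k} (hx : x ^ Q = x) (hy : y ^ Q = y) (hx0 : x ≠ 0) (hy0 : y ≠ 0)
    (e : aeval x f * y ^ q = aeval y f * x ^ q) : y ^ q * x = y * x ^ q := by
  classical
  let E := fixedPow (F := F) Q hQ h
  have hE : ∀ z : k, z ∈ E ↔ z ∈ Fq k Q := fun z => (mem_Fq hQ).symm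
  let _ : Fintype E := Fintype.subtype (Fq k Q) fun z => (hE z).symm
  have hcard : Fintype.card E = Q := by
    rw [← card_Fq hQ]
    exact Fintype.card_of_subtype (Fq k Q) fun z => (hE z).symm
  have h1 := hf E hcard ⟨x, hx⟩ ⟨y, hy⟩ (fun e0 => hx0 (congrArg Subtype.val e0))
    (fun e0 => hy0 (congrArg Subtype.val e0)) (Subtype.ext (by
      have h2 : ∀ z : E, ((aeval z f : E) : k) = aeval (z : k) f := fun z =>
        (aeval_algebraMap_apply k z f).symm
      push_cast
      rw [h2, h2]
      exact e))
  have h2 : (y / x) ^ q = y / x := congrArg Subtype.val h1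
  rw [div_pow, div_eq_div_iff (pow_ne_zero _ hx0) hx0] at h2
  exact h2

end ExcScat

open ExcScat

/-- the only exceptional scattered monic q-polynomials of index 1 (with
nonzero coefficient of X and zero coefficient of X^q) are X and bX + X^{q^2} with
Norm(b) = b^{(q^n−1)/(q−1)} ≠ 1; for q = 2, f must be X. "Exceptional" means: for
infinitely many m, f is scattered of index 1 over 𝔽_{q^{mn}}. Membership of z in 𝔽_q
is expressed as z^q = z. -/
theorem stmt_10 (p r q n k : ℕ) (hp : p.Prime) (hr : 0 < r) (hq : q = p ^ r)
    (hn : 0 < n)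
    (F : Type) [Field F] [Fintype F] (hF : Fintype.card F = q ^ n)
    (a : ℕ → F) (ha0 : a 0 ≠ 0)
    (f : Polynomial F)
    (hfdef : f = Polynomial.C (a 0) * Polynomial.X +
        ∑ j ∈ Finset.Icc 2 k, Polynomial.C (a j) * Polynomial.X ^ q ^ j)
    (hmonic : f.Monic)
    (hexc : {m : ℕ | 0 < m ∧ ∀ (E : Type) [Field E] [Algebra F E] [Fintype E],
        Fintype.card E = q ^ (m * n) →
        ∀ x y : E, x ≠ 0 → y ≠ 0 →
          Polynomial.aeval x f * y ^ q = Polynomial.aeval y f * x ^ q →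
          (y / x) ^ q = y / x}.Infinite) :
    (f = Polynomial.X ∨
      ∃ b : F, f = Polynomial.C b * Polynomial.X + Polynomial.X ^ q ^ 2 ∧
        b ^ ((q ^ n - 1) / (q - 1)) ≠ 1) ∧
    (q = 2 → f = Polynomial.X) := by
  have hchar : CharP F p := (CharP.charP_iff_prime_eq_zero hp).2 (by
    have h1 := FiniteField.cast_card_eq_zero F
    rw [hF, hq, ← pow_mul, Nat.cast_pow] at h1
    exact eq_zero_of_pow_eq_zero h1)
  have hqF : IsQ q F := ⟨p, r, hp, hchar, hr, hq⟩
  have hqk : IsQ q (AlgebraicClosure F) := hqF.of_algebra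
  have hfix : ∀ m, ∀ c : F, c ^ q ^ (m * n) = c := fun m c => by
    rw [mul_comm m, pow_mul q]
    refine pow_pow_of_pow_eq ?_ m
    rw [← hF]
    exact FiniteField.pow_card c
  -- no collision exists over the extensions in the given infinite set
  have hscat : ∀ M0, ∃ M, M0 ≤ M ∧ n ∣ M ∧ (∀ c : F, c ^ q ^ M = c) ∧
      ∀ x y : AlgebraicClosure F, x ^ q ^ M = x → y ^ q ^ M = y → Ind q x y →
        aeval x f * y ^ q ≠ aeval y f * x ^ q := by
    intro M0
    obtain ⟨m, ⟨hm, hmf⟩, hM0⟩ := hexc.exists_gt M0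
    refine ⟨m * n, hM0.le.trans (Nat.le_mul_of_pos_right _ hn), dvd_mul_left _ _, hfix m,
      fun x y hx hy hi e => hi ?_⟩
    exact scattered_transfer (hqk.pow (Nat.mul_pos hm hn).ne') (hfix m) hmf hx hy
      (hi.left_ne_zero hqk) (hi.right_ne_zero hqk) e
  rcases normal_form hqF.two_le ha0 hfdef hmonic with h | ⟨d, α, hd, h0, h1, htop, hf⟩
  · exact ⟨Or.inl h, fun _ => h⟩
  have hlev : ∀ x : AlgebraicClosure F, aeval x f =
      lev q d (fun j => algebraMap F (AlgebraicClosure F) (α j)) x := fun x => by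
    simp [hf, linPoly, lev, map_sum]
  obtain rfl | hd3 : d = 2 ∨ 3 ≤ d := by omega
  · have hN : α 0 ^ ((q ^ n - 1) / (q - 1)) ≠ 1 := by
      intro hN
      obtain ⟨M, hM3, hnM, -, hM⟩ := hscat 3
      obtain ⟨x, y, hx, hy, hi, e⟩ := exists_collision_two hqk hnM hM3
        (b := algebraMap F (AlgebraicClosure F) (α 0))
        (by rwa [Ne, map_eq_zero]) (by rw [← map_pow, hN, map_one])
      refine hM x y hx hy hi ?_
      have hev : ∀ x : AlgebraicClosure F, aeval x f =
          algebraMap F (AlgebraicClosure F) (α 0) * x + x ^ q ^ 2 := fun x => by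
        simp [hlev, lev, Finset.sum_range_succ, h1, htop]
      rw [hev, hev, e]
    refine ⟨Or.inr ⟨α 0, ?_, hN⟩, fun hq2 => ?_⟩
    · rw [hf, linPoly]
      simp [Finset.sum_range_succ, h1, htop]
    · -- for `q = 2` every nonzero element has norm one
      refine absurd ?_ hN
      rw [hq2, show 2 - 1 = 1 from rfl, Nat.div_one, ← hq2, ← hF]
      exact FiniteField.pow_card_sub_one_eq_one _ h0
  · exfalso
    obtain ⟨M0, hM0⟩ := exists_collision (q := q) (d := d)
      (α := fun j => algebraMap F (AlgebraicClosure F) (α j))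
      ⟨hqk, by rwa [Ne, map_eq_zero], by rw [h1, map_zero], by rw [htop, map_one], hd3⟩
    obtain ⟨M, hM, -, hc, hM'⟩ := hscat M0
    obtain ⟨x, y, hx, hy, hi, e⟩ := hM0 M hM fun j => by rw [← map_pow, hc]
    exact hM' x y hx hy hi (by rw [hlev, hlev, e])
end

section
/- Let q be a prime power and n ≥ 3 an integer. Then every element of 𝔽_{q^n} can be written as u·v^q − v·u^q for some u, v ∈ 𝔽_{q^n}; that is, {u·v^q − v·u^q : u, v ∈ 𝔽_{q^n}} = 𝔽_{q^n}. -/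
/-!
Write `K` for the subfield of order `q` and `Tr : F → K` for the trace. For `u ≠ 0` and `v = u * w`,
`u * v ^ q - v * u ^ q = u ^ (q + 1) * (w ^ q - w)`. By the additive form of Hilbert 90
(`exists_pow_card_sub_eq`), the elements `w ^ q - w` are exactly those of trace zero, so `z` has the
required form as soon as `Tr (z * u⁻¹ ^ (q + 1)) = 0` for some `u ≠ 0`. Now
`x ↦ Tr (z * x ^ (q + 1))` is a quadratic form over `K` in `n ≥ 3` variables, hence has a nontrivial
zero by Chevalley–Warning (`exists_ne_zero_trace_eq_zero`).
-/

open Module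

/-- Additive Hilbert 90 for finite fields, by a dimension count: the kernel of `w ↦ w ^ q - w` is
the base field, and the trace is surjective. -/
theorem exists_pow_card_sub_eq {K F : Type*} [Field K] [Fintype K] [Field F] [Finite F]
    [Algebra K F] (t : F) (ht : Algebra.trace K F t = 0) :
    ∃ w : F, w ^ Fintype.card K - w = t := by
  let D : F →ₗ[K] F := (FiniteField.frobeniusAlgHom K F).toLinearMap - LinearMap.id
  have hD : ∀ w, D w = w ^ Fintype.card K - w := fun w => rfl
  have hle : LinearMap.range D ≤ LinearMap.ker (Algebra.trace K F) := by
    rintro _ ⟨w, rfl⟩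
    have h := Algebra.trace_eq_of_algEquiv (FiniteField.frobeniusAlgEquivOfAlgebraic K F) w
    rw [FiniteField.coe_frobeniusAlgEquivOfAlgebraic] at h
    rw [LinearMap.mem_ker, hD, map_sub, sub_eq_zero]
    exact h
  have hker : finrank K (LinearMap.ker D) ≤ 1 := by
    have hsub : LinearMap.ker D ≤ Submodule.span K {(1 : F)} := by
      intro w hw
      rw [LinearMap.mem_ker, hD] at hw
      have hroot : w ∈ ((Polynomial.X ^ Fintype.card K - Polynomial.X : Polynomial K).map
          (algebraMap K F)).roots := by
        rw [Polynomial.mem_roots (Polynomial.map_ne_zero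
          (FiniteField.X_pow_card_sub_X_ne_zero K Fintype.one_lt_card))]
        simpa using hw
      have hsplit := (FiniteField.isSplittingField_sub K K).splits
      rw [Algebra.algebraMap_self, Polynomial.map_id] at hsplit
      rw [hsplit.roots_map] at hroot
      obtain ⟨a, -, ha⟩ := Multiset.mem_map.1 hroot
      rw [Submodule.mem_span_singleton]
      exact ⟨a, by rw [Algebra.smul_def, mul_one, ha]⟩
    exact (Submodule.finrank_mono hsub).trans (finrank_span_singleton (one_ne_zero)).le
  have h1 := D.finrank_range_add_finrank_ker
  have h2 := (Algebra.trace K F).finrank_range_add_finrank_ker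
  rw [LinearMap.range_eq_top.2 (Algebra.trace_surjective K F), finrank_top, finrank_self] at h2
  have heq := Submodule.eq_of_le_of_finrank_le hle (by omega)
  have : t ∈ LinearMap.range D := heq ▸ ht
  exact this

/-- The quadratic form `x ↦ Tr (c * x ^ (q + 1))` in at least three variables is isotropic. -/
theorem exists_ne_zero_trace_eq_zero {K F : Type*} [Field K] [Fintype K] [Field F] [Finite F]
    [Algebra K F] (hn : 3 ≤ finrank K F) (c : F) :
    ∃ x : F, x ≠ 0 ∧ Algebra.trace K F (c * x ^ (Fintype.card K + 1)) = 0 := by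
  classical
  let b := finBasis K F
  let f : MvPolynomial (Fin (finrank K F)) K := ∑ i, ∑ j,
    MvPolynomial.C (Algebra.trace K F (c * (b i * b j ^ Fintype.card K))) *
      (MvPolynomial.X i * MvPolynomial.X j)
  have hdeg : f.totalDegree < Fintype.card (Fin (finrank K F)) := by
    rw [Fintype.card_fin]
    refine lt_of_le_of_lt ?_ hn
    refine MvPolynomial.totalDegree_finsetSum_le fun i _ =>
      MvPolynomial.totalDegree_finsetSum_le fun j _ => ?_
    refine (MvPolynomial.totalDegree_mul _ _).trans ?_
    rw [MvPolynomial.totalDegree_C, zero_add]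
    refine (MvPolynomial.totalDegree_mul _ _).trans ?_
    simp
  have heval : ∀ a, MvPolynomial.eval a f =
      Algebra.trace K F (c * (∑ i, a i • b i) ^ (Fintype.card K + 1)) := by
    intro a
    have hfrob : (∑ i, a i • b i) ^ Fintype.card K = ∑ i, a i • b i ^ Fintype.card K := by
      have h := map_sum (FiniteField.frobeniusAlgHom K F) (fun i => a i • b i) Finset.univ
      simp only [map_smul] at h
      exact h
    rw [pow_succ', hfrob, Finset.sum_mul_sum, Finset.mul_sum, map_sum, map_sum]
    refine Finset.sum_congr rfl fun i _ => ?_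
    rw [Finset.mul_sum, map_sum, map_sum]
    refine Finset.sum_congr rfl fun j _ => ?_
    rw [smul_mul_smul_comm, mul_smul_comm, map_smul]
    simp [mul_comm]
  obtain ⟨p, hp⟩ := CharP.exists K
  have hpp : p.Prime := (CharP.char_is_prime_or_zero K p).resolve_right
    (CharP.char_ne_zero_of_finite K p)
  have hdvd := char_dvd_card_solutions p hdeg
  -- `0` is a zero of `f`, and the number of zeros is a multiple of `p ≥ 2`.
  let z : {x // MvPolynomial.eval x f = 0} := ⟨0, by rw [heval]; simp⟩
  have hcard : 1 < Fintype.card {x // MvPolynomial.eval x f = 0} :=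
    hpp.one_lt.trans_le (Nat.le_of_dvd (Fintype.card_pos_iff.2 ⟨z⟩) hdvd)
  obtain ⟨⟨a, ha⟩, hne⟩ := Fintype.exists_ne_of_one_lt_card hcard z
  refine ⟨∑ i, a i • b i, fun h0 => hne ?_, by rw [← heval, ha]⟩
  exact Subtype.ext (funext (Fintype.linearIndependent_iff.1 b.linearIndependent a h0))

/-- for n ≥ 3, {u·v^q − v·u^q : u, v ∈ 𝔽_{q^n}} = 𝔽_{q^n}. -/
theorem stmt_13 (p r q n : ℕ) (hp : p.Prime) (hr : 0 < r) (hq : q = p ^ r)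
    (hn : 3 ≤ n)
    (F : Type) [Field F] [Fintype F] (hF : Fintype.card F = q ^ n) :
    {z : F | ∃ u v : F, z = u * v ^ q - v * u ^ q} = Set.univ := by
  have : Fact p.Prime := ⟨hp⟩
  have hFp : Fintype.card F = p ^ (r * n) := by rw [hF, hq, pow_mul]
  have : CharP F p := charP_of_card_eq_prime_pow hFp
  let : Algebra (ZMod p) F := ZMod.algebra F p
  let K := GaloisField p r
  let _ : Fintype K := Fintype.ofFinite K
  have hK : Fintype.card K = q := by
    rw [← Nat.card_eq_fintype_card, GaloisField.card p r hr.ne', hq]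
  have hdvd : finrank (ZMod p) K ∣ finrank (ZMod p) F := by
    have h := Module.card_eq_pow_finrank (K := ZMod p) (V := F)
    rw [hFp, ZMod.card] at h
    rw [GaloisField.finrank p hr.ne', ← Nat.pow_right_injective hp.two_le h]
    exact dvd_mul_right r n
  obtain ⟨φ⟩ := FiniteField.nonempty_algHom_of_finrank_dvd hdvd
  let : Algebra K F := φ.toRingHom.toAlgebra
  have hfin : finrank K F = n := by
    have h := Module.card_eq_pow_finrank (K := K) (V := F)
    rw [hF, hK] at h
    exact (Nat.pow_right_injective (hq ▸ hp.two_le.trans (Nat.le_self_pow hr.ne' p)) h).symm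
  refine Set.eq_univ_of_forall fun z => ?_
  obtain ⟨x, hx, htr⟩ := exists_ne_zero_trace_eq_zero (K := K) (hfin.symm ▸ hn) z
  obtain ⟨w, hw⟩ := exists_pow_card_sub_eq _ htr
  rw [hK] at hw
  refine ⟨x⁻¹, x⁻¹ * w, ?_⟩
  have : z = x⁻¹ ^ (q + 1) * (w ^ q - w) := by
    rw [hw, inv_pow]
    field_simp
  rw [this]
  ring
end

section
/- Let q be a prime power, n ≥ 4 an integer, and α ∈ 𝔽_{q^n} with α ≠ 0. Then there exist x, y ∈ 𝔽_{q^n} with x ≠ 0 such that y − y^q = α·x^{q+1}. -/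
/-!
Let `K` be the subfield of `F` of order `q`, so that `F` has dimension `n` over `K`. The map
`y ↦ y - y ^ q` is `K`-linear and its kernel, the root set of `X ^ q - X`, is a line. Its image
is therefore a hyperplane, the kernel of some `K`-linear functional `f` (a multiple of the trace;
only its existence is needed). Now `x ↦ f (α * x ^ (q + 1))` is a quadratic form over `K` in the
`n` coordinates of `x`, because `x ↦ x ^ q` is `K`-linear. As `n > 2`, the Chevalley–Warning
theorem makes its number of zeros divisible by the characteristic, so it has a nontrivial zero `x`,
and then `α * x ^ (q + 1)` has the form `y - y ^ q`.
-/

/-- The image of `y ↦ y - y ^ q` contains a hyperplane: the fixed space of `y ↦ y ^ q` has at most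
`q` elements, being the root set of `X ^ q - X`. -/
lemma exists_functional_artinSchreier (K F : Type) [Field K] [Fintype K] [Field F] [Fintype F]
    [Algebra K F] :
    ∃ f : F →ₗ[K] K, ∀ z, f z = 0 → ∃ y : F, y - y ^ Fintype.card K = z := by
  classical
  let L : F →ₗ[K] F := LinearMap.id - (FiniteField.frobeniusAlgHom K F).toLinearMap
  have hL (y : F) : L y = y - y ^ Fintype.card K := rfl
  have h_card : Fintype.card (LinearMap.ker L) ≤ Fintype.card K := by
    have hne := FiniteField.X_pow_card_sub_X_ne_zero F (Fintype.one_lt_card (α := K))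
    have hdeg := FiniteField.X_pow_card_sub_X_natDegree_eq F (Fintype.one_lt_card (α := K))
    rw [Fintype.card_of_subtype
      (Polynomial.X ^ Fintype.card K - Polynomial.X : Polynomial F).roots.toFinset]
    · exact (Multiset.toFinset_card_le _).trans ((Polynomial.card_roots' _).trans hdeg.le)
    · intro y
      simp [hne, hL, sub_eq_zero, eq_comm]
  have h_ker : Module.finrank K (LinearMap.ker L) ≤ 1 := by
    rw [Module.card_eq_pow_finrank (K := K) (V := LinearMap.ker L)] at h_card
    exact (Nat.pow_le_pow_iff_right (Fintype.one_lt_card (α := K))).1 (by simpa using h_card)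
  -- `L 1 = 0`, so `L` is not injective, hence not surjective.
  have h_top : LinearMap.range L < ⊤ := by
    rw [lt_top_iff_ne_top, Ne, LinearMap.range_eq_top, ← LinearMap.injective_iff_surjective]
    intro hinj
    exact one_ne_zero (hinj (by simp [hL] : L 1 = L 0))
  obtain ⟨f, hf0, hf⟩ := Submodule.exists_le_ker_of_lt_top _ h_top
  have h_eq : LinearMap.range L = LinearMap.ker f := by
    apply Submodule.eq_of_le_of_finrank_le hf
    have h1 := L.finrank_range_add_finrank_ker
    have h2 := f.finrank_range_add_finrank_ker
    have h3 : LinearMap.range f = ⊤ := LinearMap.range_eq_top.2 (LinearMap.surjective hf0)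
    rw [h3, finrank_top, Module.finrank_self] at h2
    omega
  refine ⟨f, fun z hz => ?_⟩
  have hz' : z ∈ LinearMap.range L := h_eq ▸ hz
  obtain ⟨y, hy⟩ := hz'
  exact ⟨y, hy⟩

/-- By Chevalley–Warning, a form `x ↦ f (α * x ^ (q + 1))`, which is quadratic in the coordinates
of `x`, has a nontrivial zero as soon as there are at least three coordinates. -/
lemma exists_ne_zero_functional_eq_zero (K F : Type) [Field K] [Fintype K] [Field F] [Fintype F]
    [Algebra K F] (hn : 2 < Module.finrank K F) (f : F →ₗ[K] K) (α : F) :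
    ∃ x : F, x ≠ 0 ∧ f (α * x ^ (Fintype.card K + 1)) = 0 := by
  classical
  obtain ⟨p, hpK⟩ := CharP.exists K
  have hp : p.Prime := CharP.char_is_prime K p
  let b := Module.finBasis K F
  let P : MvPolynomial (Fin (Module.finrank K F)) K :=
    ∑ i, ∑ j, MvPolynomial.C (f (α * (b i ^ Fintype.card K * b j))) *
      (MvPolynomial.X i * MvPolynomial.X j)
  have h_deg : P.totalDegree < Fintype.card (Fin (Module.finrank K F)) := by
    rw [Fintype.card_fin]
    refine lt_of_le_of_lt ?_ hn
    refine MvPolynomial.totalDegree_finsetSum_le fun i _ =>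
      MvPolynomial.totalDegree_finsetSum_le fun j _ => ?_
    refine (MvPolynomial.totalDegree_mul _ _).trans ?_
    have := MvPolynomial.totalDegree_mul (R := K) (MvPolynomial.X i) (MvPolynomial.X j)
    simp only [MvPolynomial.totalDegree_C, MvPolynomial.totalDegree_X] at this ⊢
    omega
  have h_eval (c : Fin (Module.finrank K F) → K) :
      MvPolynomial.eval c P = f (α * (∑ i, c i • b i) ^ (Fintype.card K + 1)) := by
    have h_frob : (∑ i, c i • b i) ^ Fintype.card K = ∑ i, c i • b i ^ Fintype.card K := by
      have := map_sum (FiniteField.frobeniusAlgHom K F) (fun i => c i • b i) Finset.univ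
      simpa only [map_smul, FiniteField.coe_frobeniusAlgHom] using this
    rw [pow_succ, h_frob, Finset.sum_mul_sum, Finset.mul_sum, map_sum]
    simp only [P, map_sum, Finset.mul_sum, map_mul, MvPolynomial.eval_C, MvPolynomial.eval_X,
      smul_mul_assoc, mul_smul_comm, map_smul, smul_eq_mul]
    exact Finset.sum_congr rfl fun i _ => Finset.sum_congr rfl fun j _ => by ring
  have h_dvd := char_dvd_card_solutions p h_deg
  have h_zero : MvPolynomial.eval 0 P = 0 := by rw [h_eval]; simp
  have h_pos : 0 < Fintype.card {c // MvPolynomial.eval c P = 0} :=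
    Fintype.card_pos_iff.2 ⟨⟨0, h_zero⟩⟩
  have h_one := hp.one_lt.trans_le (Nat.le_of_dvd h_pos h_dvd)
  obtain ⟨⟨c, hc⟩, hc0⟩ := Fintype.exists_ne_of_one_lt_card h_one ⟨0, h_zero⟩
  refine ⟨∑ i, c i • b i, fun h => hc0 ?_, by rw [← h_eval, hc]⟩
  have := Fintype.linearIndependent_iff.1 b.linearIndependent c h
  exact Subtype.ext (funext this)

/-- for n ≥ 4 and α ≠ 0 in 𝔽_{q^n}, the curve Y − Y^q = αX^{q+1} has an
affine point with nonzero first coordinate. -/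
theorem stmt_14 (p r q n : ℕ) (hp : p.Prime) (hr : 0 < r) (hq : q = p ^ r)
    (hn : 4 ≤ n)
    (F : Type) [Field F] [Fintype F] (hF : Fintype.card F = q ^ n)
    (α : F) (hα : α ≠ 0) :
    ∃ x y : F, x ≠ 0 ∧ y - y ^ q = α * x ^ (q + 1) := by
  have : Fact p.Prime := ⟨hp⟩
  have h_char : CharP F p := by
    refine charP_of_card_eq_prime_pow (f := r * n) ?_
    rw [hF, hq, pow_mul]
  let : Algebra (ZMod p) F := ZMod.algebra F p
  have h_finrank : Module.finrank (ZMod p) F = r * n := by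
    have h := Module.card_eq_pow_finrank (K := ZMod p) (V := F)
    rw [hF, hq, ← pow_mul, ZMod.card] at h
    exact (Nat.pow_right_injective hp.two_le h).symm
  obtain ⟨φ⟩ : Nonempty (GaloisField p r →ₐ[ZMod p] F) := by
    apply FiniteField.nonempty_algHom_of_finrank_dvd
    rw [GaloisField.finrank p hr.ne', h_finrank]
    exact dvd_mul_right r n
  let : Fintype (GaloisField p r) := Fintype.ofFinite _
  let : Algebra (GaloisField p r) F := φ.toRingHom.toAlgebra
  have h_card : Fintype.card (GaloisField p r) = q := by
    rw [Fintype.card_eq_nat_card, GaloisField.card p r hr.ne', hq]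
  have h_dim : Module.finrank (GaloisField p r) F = n := by
    have h := Module.card_eq_pow_finrank (K := GaloisField p r) (V := F)
    have h_q : 2 ≤ q := h_card ▸ Fintype.one_lt_card
    rw [hF, h_card] at h
    exact (Nat.pow_right_injective h_q h).symm
  obtain ⟨f, hf⟩ := exists_functional_artinSchreier (GaloisField p r) F
  obtain ⟨x, hx, hfx⟩ := exists_ne_zero_functional_eq_zero (GaloisField p r) F (by omega) f α
  obtain ⟨y, hy⟩ := hf _ hfx
  rw [h_card] at hy
  exact ⟨x, y, hx, hy⟩
end
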